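/- Let P be a simple 3-polytope all of whose facets are pentagons and hexagons except at most one exceptional facet F which is a quadrangle or a heptagon. Then: (1) if P has no quadrangular facet, P has no 4-belts; (2) if P has a quadrangular facet F, then P has exactly one 4-belt, namely the 4-belt surrounding F. -/

import Mathlib

open Set

noncomputable section

/-- The ambient space `ℝ³`. -/
abbrev E3 := EuclideanSpace ℝ (Fin 3)

/-- The cyclic successor in `Fin k`. -/
def nxt {k : ℕ} (i : Fin k) : Fin k := ⟨(i.1 + 1) % k, Nat.mod_lt _ i.pos⟩

/-- The cyclic predecessor in `Fin k`. -/
def prv {k : ℕ} (i : Fin k) : Fin k := ⟨(i.1 + (k - 1)) % k, Nat.mod_lt _ i.pos⟩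

/-- A convex polytope in `ℝ³`: the convex hull of a finite set of points. -/
def IsPolytope (P : Set E3) : Prop := ∃ V : Finset E3, P = convexHull ℝ (V : Set E3)

/-- The dimension of a subset of `ℝ³` (the dimension of its affine hull). -/
def setDim (A : Set E3) : ℕ := Module.finrank ℝ ↥(vectorSpan ℝ A)

/-- A face of a polytope: a nonempty closed convex extreme subset. -/
def IsFaceOf (F P : Set E3) : Prop :=
  F.Nonempty ∧ IsClosed F ∧ Convex ℝ F ∧ IsExtreme ℝ P F

/-- A facet: a `2`-dimensional face. -/
def IsFacetOf (F P : Set E3) : Prop := IsFaceOf F P ∧ setDim F = 2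

/-- An edge: a `1`-dimensional face. -/
def IsEdgeOf (F P : Set E3) : Prop := IsFaceOf F P ∧ setDim F = 1

/-- A vertex: a point whose singleton is a face. -/
def IsVertexOf (v : E3) (P : Set E3) : Prop := IsFaceOf {v} P

/-- The set of facets of `P`. -/
def facets (P : Set E3) : Set (Set E3) := {F | IsFacetOf F P}

/-- A simple 3-polytope: a 3-dimensional convex polytope each of whose vertices
is contained in exactly 3 facets. -/
def IsSimplePolytope3 (P : Set E3) : Prop :=
  IsPolytope P ∧ setDim P = 3 ∧
    ∀ v : E3, IsVertexOf v P → {F | IsFacetOf F P ∧ v ∈ F}.ncard = 3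

/-- The number of edges of a facet `F` of `P`. -/
def facetEdges (P F : Set E3) : ℕ := {e | IsEdgeOf e P ∧ e ⊆ F}.ncard

/-- `pVec P k` is the number of `k`-gonal facets of `P`. -/
def pVec (P : Set E3) (k : ℕ) : ℕ := {F | IsFacetOf F P ∧ facetEdges P F = k}.ncard

/-- A (mathematical) fullerene: a simple 3-polytope with all facets pentagons
and hexagons. -/
def IsFullerene (P : Set E3) : Prop :=
  IsSimplePolytope3 P ∧ ∀ F, IsFacetOf F P → facetEdges P F = 5 ∨ facetEdges P F = 6

/-- A `k`-loop in `P` (`k ≥ 2`): a cyclic sequence of facets in which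
(cyclically) consecutive facets intersect in an edge; a `1`-loop is a single facet. -/
def IsLoop (P : Set E3) {k : ℕ} (L : Fin k → Set E3) : Prop :=
  0 < k ∧ (∀ i, IsFacetOf (L i) P) ∧ (2 ≤ k → ∀ i, IsEdgeOf (L i ∩ L (nxt i)) P)

/-- A simple loop: a loop with pairwise different facets. -/
def IsSimpleLoop (P : Set E3) {k : ℕ} (L : Fin k → Set E3) : Prop :=
  IsLoop P L ∧ Function.Injective L

/-- A `k`-belt (`k ≥ 3`): a `k`-loop such that for `k = 3` the three facets have empty
total intersection, and for `k ≥ 4` two facets intersect iff they are cyclically successive. -/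
def IsBelt (P : Set E3) {k : ℕ} (L : Fin k → Set E3) : Prop :=
  3 ≤ k ∧ IsLoop P L ∧
    (k = 3 → ∀ i, L i ∩ L (nxt i) ∩ L (nxt (nxt i)) = ∅) ∧
    (4 ≤ k → ∀ p q, p ≠ q → ((L p ∩ L q).Nonempty ↔ q = nxt p ∨ p = nxt q))

/-- A flag 3-polytope: a simple 3-polytope different from the tetrahedron
(i.e. not having exactly 4 facets) without 3-belts. -/
def IsFlag3Polytope (P : Set E3) : Prop :=
  IsSimplePolytope3 P ∧ (facets P).ncard ≠ 4 ∧ ∀ B : Fin 3 → Set E3, ¬ IsBelt P B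

/-- `γ` is the simple edge-cycle of `P` traced by the cyclically ordered distinct
vertices `v 0, …, v (n-1)` (`n ≥ 3`), consecutive ones joined by edges of `P`. -/
def IsSimpleEdgeCycleVia (P γ : Set E3) {n : ℕ} (v : Fin n → E3) : Prop :=
  3 ≤ n ∧ Function.Injective v ∧ (∀ i, IsVertexOf (v i) P) ∧
    (∀ i, IsEdgeOf (segment ℝ (v i) (v (nxt i))) P) ∧
    γ = ⋃ i, segment ℝ (v i) (v (nxt i))

/-- A simple edge-cycle in the graph of `P`. -/
def IsSimpleEdgeCycle (P γ : Set E3) : Prop :=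
  ∃ (n : ℕ) (v : Fin n → E3), IsSimpleEdgeCycleVia P γ v

/-- `C` is a connected component of the set `A`. -/
def IsCompOf (C A : Set E3) : Prop := ∃ x ∈ A, C = connectedComponentIn A x

/-- The loop `L` is obtained by walking round the simple edge-cycle `γ` inside the
connected component `C` of `∂P ∖ γ`: the facets of `L` lie on the side `C`, and the
edges of `γ`, in cyclic order, lie in the facets of `L` in cyclic order (the loop
index advancing exactly when the facet changes, and making exactly one turn). -/
def WalksRound (P γ C : Set E3) {k : ℕ} (L : Fin k → Set E3) : Prop :=
  IsLoop P L ∧ (∀ i, intrinsicInterior ℝ (L i) ⊆ C) ∧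
    ∃ (n : ℕ) (v : Fin n → E3) (φ : Fin n → Fin k),
      IsSimpleEdgeCycleVia P γ v ∧
      (∀ i, segment ℝ (v i) (v (nxt i)) ⊆ L (φ i)) ∧
      (∀ i, φ (nxt i) = φ i ∨ φ (nxt i) = nxt (φ i)) ∧
      Function.Surjective φ ∧
      (2 ≤ k → (Finset.univ.filter (fun i : Fin n => φ (nxt i) ≠ φ i)).card = k)

/-- Two loops border each other: they are obtained by walking round the same simple
edge-cycle `γ` in the two different connected components of `∂P ∖ γ`. -/
def Borders (P : Set E3) {k₁ k₂ : ℕ} (L₁ : Fin k₁ → Set E3) (L₂ : Fin k₂ → Set E3) : Prop :=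
  ∃ γ C₁ C₂ : Set E3, IsCompOf C₁ (frontier P \ γ) ∧ IsCompOf C₂ (frontier P \ γ) ∧
    C₁ ≠ C₂ ∧ WalksRound P γ C₁ L₁ ∧ WalksRound P γ C₂ L₂

/-- A loop surrounds the facet `F` if it borders the `1`-loop `(F)`. -/
def Surrounds (P : Set E3) {k : ℕ} (L : Fin k → Set E3) (F : Set E3) : Prop :=
  IsFacetOf F P ∧ Borders P L (fun _ : Fin 1 => F)

/-- The number of edges of `P` lying in the facet `F` and in the set `γ`. -/
def edgesInCommon (P F γ : Set E3) : ℕ := {e | IsEdgeOf e P ∧ e ⊆ F ∧ e ⊆ γ}.ncard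
/-- A simple 3-polytope all of whose facets are pentagons and hexagons except for
at most one exceptional facet, which is a quadrangle or a heptagon. -/
def IsAlmostFullerene (P : Set E3) : Prop :=
  IsSimplePolytope3 P ∧
    (∀ F, IsFacetOf F P → facetEdges P F ∈ ({4, 5, 6, 7} : Set ℕ)) ∧
    {F | IsFacetOf F P ∧ (facetEdges P F = 4 ∨ facetEdges P F = 7)}.ncard ≤ 1

/-- The (combinatorial) dodecahedron: a simple 3-polytope with all facets pentagons. -/
def IsDodecahedron (P : Set E3) : Prop :=
  IsSimplePolytope3 P ∧ ∀ F, IsFacetOf F P → facetEdges P F = 5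

/-- `e` and `e'` are opposite edges of the hexagonal facet `H`: they are disjoint and no
edge of `H` meets both of them. -/
def OppositeEdges (P H e e' : Set E3) : Prop :=
  IsEdgeOf e P ∧ IsEdgeOf e' P ∧ e ⊆ H ∧ e' ⊆ H ∧ e ∩ e' = ∅ ∧
    ∀ e'', IsEdgeOf e'' P → e'' ⊆ H → (e'' ∩ e).Nonempty → e'' ≠ e → e'' ∩ e' = ∅

/-- A cap: a pentagonal facet `F₀` together with a surrounding 5-belt of pentagons. -/
def IsCapOf (P F₀ : Set E3) (L : Fin 5 → Set E3) : Prop :=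
  IsFacetOf F₀ P ∧ facetEdges P F₀ = 5 ∧ (∀ i, facetEdges P (L i) = 5) ∧
    IsBelt P L ∧ Surrounds P L F₀

/-- The number of 5-belts of `P` (counted as sets of facets). -/
def fiveBeltCount (P : Set E3) : ℕ :=
  {S : Set (Set E3) | ∃ B : Fin 5 → Set E3, IsBelt P B ∧ S = Set.range B}.ncard

/-- The structure of the `k`-th fullerene of Family I: two caps separated by `k`
hexagonal 5-belts, each bordering the next (for `k = 0` the caps border each other,
giving the dodecahedron). -/
def FamilyI (P : Set E3) (k : ℕ) : Prop :=
  ∃ (F₀ F₀' : Set E3) (L L' : Fin 5 → Set E3) (B : ℕ → Fin 5 → Set E3),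
    IsCapOf P F₀ L ∧ IsCapOf P F₀' L' ∧
    (∀ i < k, IsBelt P (B i) ∧ ∀ j, facetEdges P (B i j) = 6) ∧
    (∀ i, i + 1 < k → Borders P (B i) (B (i + 1))) ∧
    (0 < k → Borders P L (B 0) ∧ Borders P (B (k - 1)) L') ∧
    (k = 0 → Borders P L L') ∧
    facets P = {F₀, F₀'} ∪ Set.range L ∪ Set.range L' ∪ ⋃ i ∈ Set.Iio k, Set.range (B i)

/-- `P` is obtained from `Q` by an `(s,k;t₀,t₁)`-truncation with new edge `Enew`:
`P` is cut off from `Q` by a halfspace `{f ≤ c}` whose boundary plane crosses exactly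
two edges `E₀ ≠ E₁` of a `k`-gonal facet `F` of `Q`, cutting off exactly `s` vertices,
all belonging to `F`; `G₀` and `G₁` are the facets meeting `F` along `E₀` and `E₁`, and
they are `t₀`- and `t₁`-gons; `Enew` is the new edge dividing `F`. -/
def IsTruncation (s k t₀ t₁ : ℕ) (Q P Enew : Set E3) : Prop :=
  IsSimplePolytope3 Q ∧ IsSimplePolytope3 P ∧
    ∃ (F E₀ E₁ G₀ G₁ : Set E3) (f : E3 →ₗ[ℝ] ℝ) (c : ℝ),
      IsFacetOf F Q ∧ facetEdges Q F = k ∧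
      IsEdgeOf E₀ Q ∧ IsEdgeOf E₁ Q ∧ E₀ ≠ E₁ ∧ E₀ ⊆ F ∧ E₁ ⊆ F ∧
      IsFacetOf G₀ Q ∧ IsFacetOf G₁ Q ∧ G₀ ≠ F ∧ G₁ ≠ F ∧ E₀ ⊆ G₀ ∧ E₁ ⊆ G₁ ∧
      facetEdges Q G₀ = t₀ ∧ facetEdges Q G₁ = t₁ ∧
      P = Q ∩ {x | f x ≤ c} ∧
      (∀ e, IsEdgeOf e Q → (∃ x ∈ e, c < f x) → (∃ x ∈ e, f x < c) → e = E₀ ∨ e = E₁) ∧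
      (∃ x ∈ E₀, c < f x) ∧ (∃ x ∈ E₀, f x < c) ∧
      (∃ x ∈ E₁, c < f x) ∧ (∃ x ∈ E₁, f x < c) ∧
      (∀ v, IsVertexOf v Q → f v ≠ c) ∧
      {v | IsVertexOf v Q ∧ c < f v}.ncard = s ∧
      (∀ v, IsVertexOf v Q → c < f v → v ∈ F) ∧
      Enew = F ∩ {x | f x = c}

/-- Combinatorial equivalence of polytopes: an inclusion-preserving bijection
between the sets of faces. -/
def CombEquiv (P Q : Set E3) : Prop :=
  ∃ φ : {A : Set E3 // IsFaceOf A P} ≃ {A : Set E3 // IsFaceOf A Q},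
    ∀ A B : {A : Set E3 // IsFaceOf A P}, A.1 ⊆ B.1 ↔ (φ A).1 ⊆ (φ B).1

/-- Combinatorial equivalence sending the face `Ep` of `P` to the face `Eq` of `Q`. -/
def CombEquivMapping (P Q Ep Eq : Set E3) : Prop :=
  ∃ φ : {A : Set E3 // IsFaceOf A P} ≃ {A : Set E3 // IsFaceOf A Q},
    (∀ A B : {A : Set E3 // IsFaceOf A P}, A.1 ⊆ B.1 ↔ (φ A).1 ⊆ (φ B).1) ∧
    ∀ h : IsFaceOf Ep P, ((φ ⟨Ep, h⟩) : {A : Set E3 // IsFaceOf A Q}).1 = Eq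

/-- The straightening of `P` along the edge `E` is defined: `P` is combinatorially
obtained from some simple 3-polytope `Q` by an `(s,k)`-truncation whose new edge
corresponds to `E`. -/
def StraighteningDefined (P E : Set E3) : Prop :=
  ∃ (s k t₀ t₁ : ℕ) (Q P₁ E₁ : Set E3),
    IsTruncation s k t₀ t₁ Q P₁ E₁ ∧ CombEquivMapping P P₁ E E₁

/-- `P` is obtained from `Q` by one of the truncations
`(1;4,5)`, `(1;5,5)`, `(2,6;4,5)`, `(2,6;5,5)`, `(2,6;5,6)`, `(2,7;5,5)`, `(2,7;5,6)`. -/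
def FullereneStep (Q P : Set E3) : Prop :=
  ∃ (s k t₀ t₁ : ℕ) (Enew : Set E3), IsTruncation s k t₀ t₁ Q P Enew ∧
    ((s = 1 ∧ (({t₀, t₁} : Finset ℕ) = {4, 5} ∨ ({t₀, t₁} : Finset ℕ) = {5, 5})) ∨
     (s = 2 ∧ k = 6 ∧ (({t₀, t₁} : Finset ℕ) = {4, 5} ∨ ({t₀, t₁} : Finset ℕ) = {5, 5} ∨
        ({t₀, t₁} : Finset ℕ) = {5, 6})) ∨
     (s = 2 ∧ k = 7 ∧ (({t₀, t₁} : Finset ℕ) = {5, 5} ∨ ({t₀, t₁} : Finset ℕ) = {5, 6})))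

/-!
Only the incidences between vertices and facets matter, together with the heights of the vertices
under a generic linear functional, for which a local extremum on a face is a global one. Climbing
along increasing edges shows that every mod 2 cycle of adjacent facets is the set of edges leaving
some set of vertices. In particular a ring, a cyclic sequence of `k` distinct facets each meeting
the next, separates the vertices into two nonempty sides `S` and `Sᶜ`.

Weigh a side by the number of incidences of its vertices with the facets of the ring, plus one if
the exceptional facet lies in that side. For a ring of `k` facets the weights of the two sides add
up to at most `6 * k + 1`, so one of them is at most `3 * k`. Such a light side is peeled off. If
some facet of the ring has only two vertices in it, the ring is slid across the neighbouring facet,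
which does not increase the weight because that facet has at most six vertices, or is the
exceptional facet and forfeits the bonus. If all of them have three, the next layer of facets is a
ring again. The process ends with a vertex, an edge or a single facet. A 4-belt leaves only the last
possibility: it runs round a facet with four vertices, which must be the exceptional quadrangle.

Conversely, for rings of three facets the light side is a vertex, so three pairwise adjacent facets
have a common vertex. Hence opposite neighbours of a quadrangle are disjoint, and its four
neighbours form a belt.
-/

/-- The combinatorics of a simple 3-polytope with vertex set `V`: facets are recorded as sets of
vertices, and `height` stands for a generic linear functional, of which only the
simplex-method property (a local extremum on a face is a global one) is retained. -/
structure FacetComplex (V : Type*) [DecidableEq V] where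
  facets : Finset (Finset V)
  height : V → ℝ
  height_injective : Function.Injective height
  card_facets_at : ∀ v, (facets.filter (v ∈ ·)).card = 3
  exists_inter_eq_pair : ∀ A ∈ facets, ∀ B ∈ facets, A ≠ B → ∀ v ∈ A, v ∈ B →
    ∃ w, w ≠ v ∧ A ∩ B = {v, w}
  eq_of_mem_three : ∀ A ∈ facets, ∀ B ∈ facets, ∀ C ∈ facets, A ≠ B → A ≠ C → B ≠ C →
    ∀ x ∈ A ∩ B ∩ C, ∀ y ∈ A ∩ B ∩ C, x = y
  exists_lower : ∀ A ∈ facets, ∀ v ∈ A, (∃ w ∈ A, height w < height v) →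
    ∃ B ∈ facets, B ≠ A ∧ v ∈ B ∧ ∃ w ∈ A ∩ B, height w < height v
  exists_higher : ∀ v, (∃ w, height v < height w) →
    ∃ A ∈ facets, ∃ B ∈ facets, A ≠ B ∧ v ∈ A ∩ B ∧ ∃ w ∈ A ∩ B, height v < height w

namespace FacetComplex

variable {V : Type*} [DecidableEq V] {M : FacetComplex V} {A B C D : Finset V} {v w x y z : V}

/-- The facets `A` and `B` meet in the edge with endpoints `x` and `y`. -/
structure IsEdge (M : FacetComplex V) (A B : Finset V) (x y : V) : Prop where
  left_mem : A ∈ M.facets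
  right_mem : B ∈ M.facets
  facets_ne : A ≠ B
  ends_ne : x ≠ y
  inter_eq : A ∩ B = {x, y}

/-- `A`, `B` and `C` are the three facets through the vertex `v`. -/
structure IsCorner (M : FacetComplex V) (A B C : Finset V) (v : V) : Prop where
  mem_facets₁ : A ∈ M.facets
  mem_facets₂ : B ∈ M.facets
  mem_facets₃ : C ∈ M.facets
  ne₁₂ : A ≠ B
  ne₁₃ : A ≠ C
  ne₂₃ : B ≠ C
  mem₁ : v ∈ A
  mem₂ : v ∈ B
  mem₃ : v ∈ C

/-- Two vertices are adjacent if they are the endpoints of an edge. -/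
def Adj (M : FacetComplex V) (x y : V) : Prop := ∃ A B, M.IsEdge A B x y

namespace IsEdge

theorem mem_iff (h : M.IsEdge A B x y) : z ∈ A ∧ z ∈ B ↔ z = x ∨ z = y := by
  rw [← Finset.mem_inter, h.inter_eq, Finset.mem_insert, Finset.mem_singleton]

theorem eq_or_eq (h : M.IsEdge A B x y) (hA : z ∈ A) (hB : z ∈ B) : z = x ∨ z = y :=
  h.mem_iff.1 ⟨hA, hB⟩

theorem fst_mem_left (h : M.IsEdge A B x y) : x ∈ A := (h.mem_iff.2 (.inl rfl)).1

theorem fst_mem_right (h : M.IsEdge A B x y) : x ∈ B := (h.mem_iff.2 (.inl rfl)).2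

theorem snd_mem_left (h : M.IsEdge A B x y) : y ∈ A := (h.mem_iff.2 (.inr rfl)).1

theorem snd_mem_right (h : M.IsEdge A B x y) : y ∈ B := (h.mem_iff.2 (.inr rfl)).2

theorem symm (h : M.IsEdge A B x y) : M.IsEdge A B y x :=
  ⟨h.left_mem, h.right_mem, h.facets_ne, h.ends_ne.symm, by rw [h.inter_eq, Finset.pair_comm]⟩

theorem swap (h : M.IsEdge A B x y) : M.IsEdge B A x y :=
  ⟨h.right_mem, h.left_mem, h.facets_ne.symm, h.ends_ne, by rw [Finset.inter_comm, h.inter_eq]⟩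

theorem adj (h : M.IsEdge A B x y) : M.Adj x y := ⟨A, B, h⟩

end IsEdge

theorem Adj.symm (h : M.Adj x y) : M.Adj y x :=
  let ⟨A, B, h⟩ := h
  ⟨A, B, h.symm⟩

theorem exists_isEdge (hA : A ∈ M.facets) (hB : B ∈ M.facets) (hAB : A ≠ B) (hvA : v ∈ A)
    (hvB : v ∈ B) : ∃ w, M.IsEdge A B v w :=
  let ⟨w, hw, h⟩ := M.exists_inter_eq_pair A hA B hB hAB v hvA hvB
  ⟨w, hA, hB, hAB, hw.symm, h⟩

theorem isEdge_of_mem (hA : A ∈ M.facets) (hB : B ∈ M.facets) (hAB : A ≠ B) (hxy : x ≠ y)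
    (hxA : x ∈ A) (hxB : x ∈ B) (hyA : y ∈ A) (hyB : y ∈ B) : M.IsEdge A B x y := by
  obtain ⟨w, hw⟩ := exists_isEdge hA hB hAB hxA hxB
  obtain rfl := (hw.eq_or_eq hyA hyB).resolve_left hxy.symm
  exact hw

theorem IsEdge.eq_left_or_eq_right (h : M.IsEdge A B x y) (hC : C ∈ M.facets) (hx : x ∈ C)
    (hy : y ∈ C) : C = A ∨ C = B := by
  by_contra! hne
  exact h.ends_ne (M.eq_of_mem_three C hC A h.left_mem B h.right_mem hne.1 hne.2 h.facets_ne
    x (by simp [hx, h.fst_mem_left, h.fst_mem_right])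
    y (by simp [hy, h.snd_mem_left, h.snd_mem_right]))

theorem exists_isCorner (M : FacetComplex V) (v : V) : ∃ A B C, M.IsCorner A B C v := by
  obtain ⟨A, B, C, hAB, hAC, hBC, h⟩ := Finset.card_eq_three.1 (M.card_facets_at v)
  have key (D) : D ∈ M.facets ∧ v ∈ D ↔ D = A ∨ D = B ∨ D = C := by
    simpa using Finset.ext_iff.1 h D
  have hA := (key A).2 (by simp)
  have hB := (key B).2 (by simp)
  have hC := (key C).2 (by simp)
  exact ⟨A, B, C, hA.1, hB.1, hC.1, hAB, hAC, hBC, hA.2, hB.2, hC.2⟩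

namespace IsCorner

theorem eq_or (h : M.IsCorner A B C v) (hD : D ∈ M.facets) (hv : v ∈ D) :
    D = A ∨ D = B ∨ D = C := by
  obtain ⟨X, Y, Z, -, -, -, e⟩ := Finset.card_eq_three.1 (M.card_facets_at v)
  have key (E) (hE : E ∈ M.facets) (hv : v ∈ E) : E = X ∨ E = Y ∨ E = Z := by
    simpa using (Finset.ext_iff.1 e E).1 (by simp [hE, hv])
  grind [key A h.mem_facets₁ h.mem₁, key B h.mem_facets₂ h.mem₂, key C h.mem_facets₃ h.mem₃,
    key D hD hv, h.ne₁₂, h.ne₁₃, h.ne₂₃]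

theorem rotate (h : M.IsCorner A B C v) : M.IsCorner B C A v :=
  ⟨h.mem_facets₂, h.mem_facets₃, h.mem_facets₁, h.ne₂₃, h.ne₁₂.symm, h.ne₁₃.symm,
    h.mem₂, h.mem₃, h.mem₁⟩

theorem swap (h : M.IsCorner A B C v) : M.IsCorner B A C v :=
  ⟨h.mem_facets₂, h.mem_facets₁, h.mem_facets₃, h.ne₁₂.symm, h.ne₂₃, h.ne₁₃,
    h.mem₂, h.mem₁, h.mem₃⟩

theorem eq_vertex (h : M.IsCorner A B C v) (hA : w ∈ A) (hB : w ∈ B) (hC : w ∈ C) : w = v :=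
  M.eq_of_mem_three A h.mem_facets₁ B h.mem_facets₂ C h.mem_facets₃ h.ne₁₂ h.ne₁₃ h.ne₂₃
    w (by simp [hA, hB, hC]) v (by simp [h.mem₁, h.mem₂, h.mem₃])

theorem exists_isEdge (h : M.IsCorner A B C v) : ∃ w, M.IsEdge A B v w :=
  FacetComplex.exists_isEdge h.mem_facets₁ h.mem_facets₂ h.ne₁₂ h.mem₁ h.mem₂

theorem eq_third (h : M.IsCorner A B C v) (hD : D ∈ M.facets) (hv : v ∈ D) (hA : D ≠ A)
    (hB : D ≠ B) : D = C :=
  ((h.eq_or hD hv).resolve_left hA).resolve_left hB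

theorem isEdge_of_adj (h : M.IsCorner A B C v) (hvw : M.Adj v w) (hw : w ∉ A) :
    M.IsEdge B C v w := by
  obtain ⟨X, Y, hXY⟩ := hvw
  have hX := h.eq_or hXY.left_mem hXY.fst_mem_left
  have hY := h.eq_or hXY.right_mem hXY.fst_mem_right
  rcases hX with rfl | rfl | rfl
  · exact absurd hXY.snd_mem_left hw
  all_goals rcases hY with rfl | rfl | rfl
  · exact absurd hXY.snd_mem_right hw
  · exact absurd rfl hXY.facets_ne
  · exact hXY
  · exact absurd hXY.snd_mem_right hw
  · exact hXY.swap
  · exact absurd rfl hXY.facets_ne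

end IsCorner

theorem exists_isCorner_of_mem (hA : A ∈ M.facets) (hv : v ∈ A) :
    ∃ B C, M.IsCorner A B C v := by
  obtain ⟨X, Y, Z, h⟩ := M.exists_isCorner v
  rcases h.eq_or hA hv with rfl | rfl | rfl
  · exact ⟨Y, Z, h⟩
  · exact ⟨Z, X, h.rotate⟩
  · exact ⟨X, Y, h.rotate.rotate⟩

theorem exists_third (hA : A ∈ M.facets) (hB : B ∈ M.facets) (hAB : A ≠ B) (hvA : v ∈ A)
    (hvB : v ∈ B) : ∃ C, M.IsCorner A B C v := by
  obtain ⟨X, Y, h⟩ := exists_isCorner_of_mem hA hvA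
  rcases h.eq_or hB hvB with rfl | rfl | rfl
  · exact absurd rfl hAB
  · exact ⟨Y, h⟩
  · exact ⟨X, h.rotate.rotate.swap⟩

/-! ### Connectedness -/

theorem eq_facet_of_closed (hA : A ∈ M.facets) {T : Finset V} (hTA : T ⊆ A) (hT : T.Nonempty)
    (hcl : ∀ B ∈ M.facets, B ≠ A → ∀ x ∈ T, x ∈ B → ∀ y ∈ A, y ∈ B → y ∈ T) : T = A := by
  have lowest_mem (U : Finset V) (hUA : U ⊆ A) (hU : U.Nonempty)
      (hUcl : ∀ B ∈ M.facets, B ≠ A → ∀ x ∈ U, x ∈ B → ∀ y ∈ A, y ∈ B → y ∈ U) :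
      ∃ x ∈ U, ∀ y ∈ A, M.height x ≤ M.height y := by
    obtain ⟨x, hx, hmin⟩ := U.exists_min_image M.height hU
    refine ⟨x, hx, ?_⟩
    by_contra! hlow
    obtain ⟨B, hB, hBA, hxB, w, hw, hlt⟩ := M.exists_lower A hA x (hUA hx) hlow
    rw [Finset.mem_inter] at hw
    exact (hmin w (hUcl B hB hBA x hx hxB w hw.1 hw.2)).not_gt hlt
  by_contra hne
  obtain ⟨x, hx, hxmin⟩ := lowest_mem T hTA hT hcl
  obtain ⟨y, hy, hymin⟩ := lowest_mem (A \ T) Finset.sdiff_subset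
    (Finset.sdiff_nonempty.2 fun h => hne (hTA.antisymm h)) (by
      intro B hB hBA x hx hxB y hy hyB
      rw [Finset.mem_sdiff] at hx ⊢
      exact ⟨hy, fun hyT => hx.2 (hcl B hB hBA y hyT hyB x hx.1 hxB)⟩)
  rw [Finset.mem_sdiff] at hy
  have hxy : x = y :=
    M.height_injective (le_antisymm (hxmin y hy.1) (hymin x (hTA hx)))
  exact hy.2 (hxy ▸ hx)

theorem eq_univ_of_closed [Fintype V] {T : Finset V} (hT : T.Nonempty)
    (hcl : ∀ x ∈ T, ∀ y, M.Adj x y → y ∈ T) : T = Finset.univ := by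
  have highest_mem (U : Finset V) (hU : U.Nonempty) (hUcl : ∀ x ∈ U, ∀ y, M.Adj x y → y ∈ U) :
      ∃ x ∈ U, ∀ y, M.height y ≤ M.height x := by
    obtain ⟨x, hx, hmax⟩ := U.exists_max_image M.height hU
    refine ⟨x, hx, ?_⟩
    by_contra! hhigh
    obtain ⟨A, hA, B, hB, hAB, hxAB, w, hw, hlt⟩ := M.exists_higher x hhigh
    rw [Finset.mem_inter] at hxAB hw
    have hxw : x ≠ w := fun h => hlt.ne (congrArg _ h)
    have hadj := (isEdge_of_mem hA hB hAB hxw hxAB.1 hxAB.2 hw.1 hw.2).adj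
    exact (hmax w (hUcl x hx w hadj)).not_gt hlt
  by_contra hne
  obtain ⟨x, hx, hxmax⟩ := highest_mem T hT hcl
  obtain ⟨y, hy, hymax⟩ := highest_mem Tᶜ
    (Finset.nonempty_iff_ne_empty.2 fun h => hne (by simpa using h)) (by
      intro x hx y hxy
      rw [Finset.mem_compl] at hx ⊢
      exact fun hyT => hx (hcl y hyT x hxy.symm))
  have hxy : x = y := M.height_injective (le_antisymm (hymax x) (hxmax y))
  exact Finset.mem_compl.1 hy (hxy ▸ hx)

theorem facet_eq_of_isEdge_triangle (hAB : M.IsEdge A B x y) (hAC : M.IsEdge A C y z)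
    (hAD : M.IsEdge A D z x) : A = {x, y, z} := by
  symm
  have hxy := hAB.ends_ne
  have hyz := hAC.ends_ne
  have hzx := hAD.ends_ne
  have hzB : z ∉ B := fun h => by grind [hAB.eq_or_eq hAC.snd_mem_left h]
  have hxC : x ∉ C := fun h => by grind [hAC.eq_or_eq hAB.fst_mem_left h]
  have hyD : y ∉ D := fun h => by grind [hAD.eq_or_eq hAC.fst_mem_left h]
  have corner {B C : Finset V} {v p q : V} (hB : M.IsEdge A B v p) (hC : M.IsEdge A C v q)
      (hpC : p ∉ C) : M.IsCorner A B C v :=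
    ⟨hB.left_mem, hB.right_mem, hC.right_mem, hB.facets_ne, hC.facets_ne,
      fun h => hpC (h ▸ hB.snd_mem_right), hB.fst_mem_left, hB.fst_mem_right, hC.fst_mem_right⟩
  have cx := corner hAB hAD.symm hyD
  have cy := corner hAB.symm hAC hxC
  have cz := corner hAC.symm hAD hyD
  apply eq_facet_of_closed hAB.left_mem
  · grind [hAB.fst_mem_left, hAB.snd_mem_left, hAC.snd_mem_left]
  · simp
  · intro E hE hEA p hp hpE q hqA hqE
    have hqB := fun h => hAB.eq_or_eq (z := q) hqA h
    have hqC := fun h => hAC.eq_or_eq (z := q) hqA h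
    have hqD := fun h => hAD.eq_or_eq (z := q) hqA h
    simp only [Finset.mem_insert, Finset.mem_singleton] at hp ⊢
    rcases hp with rfl | rfl | rfl
    · grind [cx.eq_or hE hpE]
    · grind [cy.eq_or hE hpE]
    · grind [cz.eq_or hE hpE]

end FacetComplex

namespace FacetComplex

variable {V : Type*} [DecidableEq V] {M : FacetComplex V} {A B C X Y : Finset V} {u v w y : V}
  {z : Finset V → Finset V → ZMod 2} {g : V → ZMod 2} {U W : Set V}

/-! ### Dual cycles are cuts -/

/-- `z` is a mod 2 cycle of the dual graph: a set of pairs of adjacent facets containing every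
facet an even number of times. -/
structure IsDualCycle (M : FacetComplex V) (z : Finset V → Finset V → ZMod 2) : Prop where
  symm : ∀ A B, z A B = z B A
  sum_eq_zero : ∀ A ∈ M.facets, ∑ B ∈ M.facets, z A B = 0
  self_eq_zero : ∀ A, z A A = 0
  eq_zero_of_disjoint : ∀ A B, Disjoint A B → z A B = 0

/-- Among the edges with both endpoints in `U`, those whose dual edge belongs to `z` are exactly
those along which `g` changes. -/
def IsPotentialOn (M : FacetComplex V) (z : Finset V → Finset V → ZMod 2) (g : V → ZMod 2)
    (U : Set V) : Prop :=
  ∀ A B x y, M.IsEdge A B x y → x ∈ U → y ∈ U → g x + g y = z A B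

theorem IsPotentialOn.mono (hg : M.IsPotentialOn z g W) (hUW : U ⊆ W) : M.IsPotentialOn z g U :=
  fun A B x y h hx hy => hg A B x y h (hUW hx) (hUW hy)

theorem sum_erase_sum_inter_eq_zero {T : Finset V} (hA : A ∈ M.facets) (hTA : T ⊆ A)
    (g : V → ZMod 2) : ∑ D ∈ M.facets.erase A, ∑ x ∈ T ∩ D, g x = 0 := by
  have indicator (D : Finset V) : ∑ x ∈ T ∩ D, g x = ∑ x ∈ T, if x ∈ D then g x else 0 := by
    rw [← Finset.sum_filter, Finset.filter_mem_eq_inter]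
  simp_rw [indicator]
  rw [Finset.sum_comm]
  refine Finset.sum_eq_zero fun x hx => ?_
  have two_others : ((M.facets.erase A).filter (x ∈ ·)).card = 2 := by
    rw [Finset.filter_erase, Finset.card_erase_of_mem (by simp [hA, hTA hx]),
      M.card_facets_at x]
  rw [← Finset.sum_filter, Finset.sum_const, two_others, two_smul, CharTwo.add_self_eq_zero]

theorem IsEdge.erase_fst_inter (h : M.IsEdge A B v u) : A.erase v ∩ B = {u} := by
  rw [Finset.erase_inter, h.inter_eq, Finset.erase_insert (by simpa using h.ends_ne)]

theorem IsCorner.height_le (h : M.IsCorner A B C v) (hB : M.IsEdge A B v u)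
    (hC : M.IsEdge A C v w) (hu : M.height v < M.height u) (hw : M.height v < M.height w)
    (hy : y ∈ A) : M.height v ≤ M.height y := by
  by_contra! hlt
  obtain ⟨D, hD, hDA, hvD, p, hp, hpv⟩ := M.exists_lower A h.mem_facets₁ v h.mem₁ ⟨y, hy, hlt⟩
  rw [Finset.mem_inter] at hp
  rcases h.eq_or hD hvD with rfl | rfl | rfl
  · exact hDA rfl
  · rcases hB.eq_or_eq hp.1 hp.2 with rfl | rfl <;> linarith
  · rcases hC.eq_or_eq hp.1 hp.2 with rfl | rfl <;> linarith

namespace IsDualCycle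

theorem sum_eq_of_notMem (hz : M.IsDualCycle z)
    (hg : M.IsPotentialOn z g {x | M.height v < M.height x}) (hA : A ∈ M.facets)
    (hB : B ∈ M.facets) (hAB : A ≠ B) (hle : ∀ y ∈ A, M.height v ≤ M.height y) (hvB : v ∉ B) :
    ∑ x ∈ A.erase v ∩ B, g x = z A B := by
  have hinter : A.erase v ∩ B = A ∩ B := by
    rw [Finset.erase_inter, Finset.erase_eq_of_notMem (by simp [hvB])]
  rw [hinter]
  rcases (A ∩ B).eq_empty_or_nonempty with hempty | ⟨x, hx⟩
  · rw [hempty, Finset.sum_empty,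
      hz.eq_zero_of_disjoint A B (Finset.disjoint_iff_inter_eq_empty.2 hempty)]
  · rw [Finset.mem_inter] at hx
    obtain ⟨y, hxy⟩ := exists_isEdge hA hB hAB hx.1 hx.2
    have above {p : V} (hpA : p ∈ A) (hpB : p ∈ B) : M.height v < M.height p :=
      (hle p hpA).lt_of_ne fun h => hvB (M.height_injective h ▸ hpB)
    rw [hxy.inter_eq, Finset.sum_pair hxy.ends_ne]
    exact hg A B x y hxy (above hx.1 hx.2) (above hxy.snd_mem_left hxy.snd_mem_right)

theorem add_eq_add_of_isCorner (hz : M.IsDualCycle z)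
    (hg : M.IsPotentialOn z g {x | M.height v < M.height x}) (h : M.IsCorner A B C v)
    (hB : M.IsEdge A B v u) (hC : M.IsEdge A C v w) (hu : M.height v < M.height u)
    (hw : M.height v < M.height w) : g u + z A B = g w + z A C := by
  have hA := h.mem_facets₁
  let s (D : Finset V) : ZMod 2 := ∑ x ∈ A.erase v ∩ D, g x
  have sum_s : ∑ D ∈ M.facets.erase A, s D = 0 :=
    sum_erase_sum_inter_eq_zero hA (Finset.erase_subset v A) g
  have sum_z : ∑ D ∈ M.facets.erase A, z A D = 0 := by
    rw [Finset.sum_erase _ (hz.self_eq_zero A), hz.sum_eq_zero A hA]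
  have others (D) (hD : D ∈ M.facets.erase A) (hne : D ≠ B ∧ D ≠ C) : s D + z A D = 0 := by
    rw [Finset.mem_erase] at hD
    have hvD : v ∉ D := fun hvD => by grind [h.eq_or hD.2 hvD]
    rw [show s D = z A D from hz.sum_eq_of_notMem hg hA hD.2 hD.1.symm
      (fun y => h.height_le hB hC hu hw) hvD, CharTwo.add_self_eq_zero]
  have total : ∑ D ∈ M.facets.erase A, (s D + z A D) = (s B + z A B) + (s C + z A C) :=
    Finset.sum_eq_add B C h.ne₂₃ others
      (fun hn => (hn (Finset.mem_erase.2 ⟨h.ne₁₂.symm, h.mem_facets₂⟩)).elim)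
      (fun hn => (hn (Finset.mem_erase.2 ⟨h.ne₁₃.symm, h.mem_facets₃⟩)).elim)
  have hsB : s B = g u := by simp only [s, hB.erase_fst_inter, Finset.sum_singleton]
  have hsC : s C = g w := by simp only [s, hC.erase_fst_inter, Finset.sum_singleton]
  rw [Finset.sum_add_distrib, sum_s, sum_z, hsB, hsC, add_zero] at total
  exact CharTwo.add_eq_zero.1 total.symm

theorem add_eq_add_of_isEdge (hz : M.IsDualCycle z)
    (hg : M.IsPotentialOn z g {x | M.height v < M.height x}) (hAB : M.IsEdge A B v u)
    (hXY : M.IsEdge X Y v w) (hu : M.height v < M.height u) (hw : M.height v < M.height w) :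
    g u + z A B = g w + z X Y := by
  have common_facet {A B C : Finset V} (hB : M.IsEdge A B v u) (hC : M.IsEdge A C v w) :
      g u + z A B = g w + z A C := by
    by_cases hBC : B = C
    · subst hBC
      obtain rfl := (hB.eq_or_eq hC.snd_mem_left hC.snd_mem_right).resolve_left hC.ends_ne.symm
      rfl
    · exact hz.add_eq_add_of_isCorner hg ⟨hB.left_mem, hB.right_mem, hC.right_mem, hB.facets_ne,
        hC.facets_ne, hBC, hB.fst_mem_left, hB.fst_mem_right, hC.fst_mem_right⟩ hB hC hu hw
  obtain ⟨C, h⟩ := exists_third hAB.left_mem hAB.right_mem hAB.facets_ne hAB.fst_mem_left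
    hAB.fst_mem_right
  rcases h.eq_or hXY.left_mem hXY.fst_mem_left with rfl | rfl | rfl
  · exact common_facet hAB hXY
  · rw [hz.symm A X]
    exact common_facet hAB.swap hXY
  · rcases h.eq_or hXY.right_mem hXY.fst_mem_right with rfl | rfl | rfl
    · rw [hz.symm X Y]
      exact common_facet hAB hXY.swap
    · rw [hz.symm A Y, hz.symm X Y]
      exact common_facet hAB.swap hXY.swap
    · exact absurd rfl hXY.facets_ne

theorem exists_isPotentialOn_ge (hz : M.IsDualCycle z)
    (hg : M.IsPotentialOn z g {x | M.height v < M.height x}) :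
    ∃ g', M.IsPotentialOn z g' {x | M.height v ≤ M.height x} := by
  obtain ⟨a, ha⟩ : ∃ a, ∀ A B w, M.IsEdge A B v w → M.height v < M.height w →
      a + g w = z A B := by
    by_cases hup : ∃ A B u, M.IsEdge A B v u ∧ M.height v < M.height u
    · obtain ⟨A, B, u, hAB, hu⟩ := hup
      refine ⟨g u + z A B, fun X Y w hXY hw => ?_⟩
      rw [hz.add_eq_add_of_isEdge hg hAB hXY hu hw, add_comm, ← add_assoc,
        CharTwo.add_self_eq_zero, zero_add]
    · exact ⟨0, fun A B w hAB hw => absurd ⟨A, B, w, hAB, hw⟩ hup⟩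
  have above {x : V} (hx : M.height v ≤ M.height x) (hxv : x ≠ v) : M.height v < M.height x :=
    hx.lt_of_ne fun h => hxv (M.height_injective h).symm
  refine ⟨Function.update g v a, fun A B x y hxy hx hy => ?_⟩
  by_cases hxv : x = v
  · subst hxv
    rw [Function.update_self, Function.update_of_ne hxy.ends_ne.symm]
    exact ha A B y hxy (above hy hxy.ends_ne.symm)
  · rw [Function.update_of_ne hxv]
    by_cases hyv : y = v
    · subst hyv
      rw [Function.update_self, add_comm]
      exact ha A B x hxy.symm (above hx hxv)
    · rw [Function.update_of_ne hyv]
      exact hg A B x y hxy (above hx hxv) (above hy hyv)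

theorem exists_isPotentialOn_univ [Finite V] (hz : M.IsDualCycle z) :
    ∃ g, M.IsPotentialOn z g Set.univ := by
  cases nonempty_fintype V
  suffices upper : ∀ U : Finset V, (∀ x ∈ U, ∀ y, M.height x ≤ M.height y → y ∈ U) →
      ∃ g, M.IsPotentialOn z g U by
    obtain ⟨g, hg⟩ := upper Finset.univ fun _ _ _ _ => Finset.mem_univ _
    exact ⟨g, by rwa [Finset.coe_univ] at hg⟩
  intro U
  induction U using Finset.induction_on_min_value M.height with
  | empty => exact fun _ => ⟨0, fun A B x y _ hx => by simp at hx⟩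
  | insert v U hv hmin ih =>
    intro hU
    obtain ⟨g, hg⟩ := ih fun x hx y hxy => by
      refine (Finset.mem_insert.1 (hU x (Finset.mem_insert_of_mem hx) y hxy)).resolve_left ?_
      rintro rfl
      exact hv (M.height_injective (hxy.antisymm (hmin x hx)) ▸ hx)
    obtain ⟨g', hg'⟩ := hz.exists_isPotentialOn_ge (v := v) (hg.mono fun x (hx : _ < _) =>
      (Finset.mem_insert.1 (hU v (Finset.mem_insert_self v U) x hx.le)).resolve_left
        fun h => hx.ne (congrArg M.height h.symm))
    refine ⟨g', hg'.mono fun x hx => ?_⟩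
    rcases Finset.mem_insert.1 hx with rfl | hx
    · exact le_refl (M.height _)
    · exact hmin x hx

end IsDualCycle

end FacetComplex

namespace FacetComplex

section CyclicIndex

variable {k : ℕ} [Fact (2 < k)]

instance instNeZeroOfTwoLt : NeZero k := ⟨by have := Fact.out (p := 2 < k); omega⟩

instance : Fact (2 < 3) := ⟨by norm_num⟩

instance : Fact (2 < 4) := ⟨by norm_num⟩

theorem add_one_ne (i : ZMod k) : i + 1 ≠ i := by
  have : Fact (1 < k) := ⟨by have := Fact.out (p := 2 < k); omega⟩
  simp

theorem add_one_add_one_ne (i : ZMod k) : i + 1 + 1 ≠ i := by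
  have two_ne : ((2 : ℕ) : ZMod k) ≠ 0 := by
    rw [Ne, ZMod.natCast_eq_zero_iff]
    exact Nat.not_dvd_of_pos_of_lt two_pos Fact.out
  rw [add_assoc, Ne, add_eq_left, one_add_one_eq_two]
  exact_mod_cast two_ne

theorem eq_add_cases (hk : k ≤ 4) (i j : ZMod k) :
    j = i ∨ j = i + 1 ∨ j = i + 1 + 1 ∨ i = j + 1 := by
  have key : ∀ d : ZMod k, d = 0 ∨ d = 1 ∨ d = 1 + 1 ∨ d = -1 := by
    have := Fact.out (p := 2 < k)
    interval_cases k <;> decide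
  rcases key (j - i) with h | h | h | h
  · exact .inl (by linear_combination h)
  · exact .inr (.inl (by linear_combination h))
  · exact .inr (.inr (.inl (by linear_combination h)))
  · exact .inr (.inr (.inr (by linear_combination -h)))

end CyclicIndex

variable {V : Type*} [DecidableEq V] {M : FacetComplex V} {k : ℕ}
  {S A B : Finset V} {F : ZMod k → Finset V}

/-! ### Rings of facets -/

/-- A set `S` of vertices bounded by a cyclic sequence of distinct facets: the edges leaving `S`
are `F i ∩ F (i + 1)`, with inner endpoint `u i` and outer endpoint `o i`. -/
structure Ring (M : FacetComplex V) (k : ℕ) (S : Finset V) where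
  F : ZMod k → Finset V
  u : ZMod k → V
  o : ZMod k → V
  injective : Function.Injective F
  isEdge : ∀ i, M.IsEdge (F i) (F (i + 1)) (u i) (o i)
  u_mem : ∀ i, u i ∈ S
  o_notMem : ∀ i, o i ∉ S
  exists_eq : ∀ x ∈ S, ∀ y ∉ S, M.Adj x y → ∃ i, x = u i ∧ y = o i

/-- The ring of the same facets, seen from the other side. -/
def Ring.compl [Fintype V] (R : M.Ring k S) : M.Ring k Sᶜ where
  F := R.F
  u := R.o
  o := R.u
  injective := R.injective
  isEdge i := (R.isEdge i).symm
  u_mem i := Finset.mem_compl.2 (R.o_notMem i)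
  o_notMem i h := Finset.mem_compl.1 h (R.u_mem i)
  exists_eq x hx y hy hxy := by
    obtain ⟨i, hy, hx⟩ := R.exists_eq y (by simpa using hy) x (Finset.mem_compl.1 hx) hxy.symm
    exact ⟨i, hx, hy⟩

variable [Fact (2 < k)]

/-- The mod 2 chain formed by the consecutive pairs of a cyclic sequence of facets. -/
def loopChain (F : ZMod k → Finset V) (A B : Finset V) : ZMod 2 :=
  ∑ i, if s(A, B) = s(F i, F (i + 1)) then 1 else 0

theorem exists_eq_of_loopChain_ne_zero (h : loopChain F A B ≠ 0) :
    ∃ i, s(A, B) = s(F i, F (i + 1)) := by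
  obtain ⟨i, -, hi⟩ := Finset.exists_ne_zero_of_sum_ne_zero h
  exact ⟨i, by_contra fun hne => hi (if_neg hne)⟩

theorem loopChain_apply_succ (hF : Function.Injective F) (i : ZMod k) :
    loopChain F (F i) (F (i + 1)) = 1 := by
  rw [loopChain, Finset.sum_eq_single_of_mem i (Finset.mem_univ i), if_pos rfl]
  intro j _ hji
  refine if_neg fun h => ?_
  rcases Sym2.eq_iff.1 h with ⟨h, -⟩ | ⟨h, h'⟩
  · exact hji (hF h).symm
  · exact add_one_add_one_ne j (by rw [← hF h, hF h'])

theorem loopChain_row_sum (hF : Function.Injective F) (hmem : ∀ i, F i ∈ M.facets)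
    (A : Finset V) : ∑ B ∈ M.facets, loopChain F A B = 0 := by
  have row (i : ZMod k) : (∑ B ∈ M.facets, if s(A, B) = s(F i, F (i + 1)) then 1 else 0 : ZMod 2) =
      (if A = F i then 1 else 0) + if A = F (i + 1) then 1 else 0 := by
    have hne : F (i + 1) ≠ F i := hF.ne (add_one_ne i)
    by_cases h₁ : A = F i
    · subst h₁
      simp [hne.symm, hmem]
    · by_cases h₂ : A = F (i + 1)
      · subst h₂
        simp [hne, hmem]
      · simp [h₁, h₂]
  simp only [loopChain]
  rw [Finset.sum_comm]
  simp only [row, Finset.sum_add_distrib]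
  have shift := Equiv.sum_comp (Equiv.addRight (1 : ZMod k))
    fun i => if A = F i then (1 : ZMod 2) else 0
  exact (congrArg _ shift).trans (CharTwo.add_self_eq_zero _)

theorem isDualCycle_loopChain (hF : Function.Injective F) (hmem : ∀ i, F i ∈ M.facets)
    (hmeet : ∀ i, (F i ∩ F (i + 1)).Nonempty) : M.IsDualCycle (loopChain F) where
  symm A B := by simp only [loopChain, Sym2.eq_swap (a := A)]
  sum_eq_zero A _ := loopChain_row_sum hF hmem A
  self_eq_zero A := by
    by_contra h
    obtain ⟨i, hi⟩ := exists_eq_of_loopChain_ne_zero h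
    have hne := hF.ne (add_one_ne i)
    grind [Sym2.eq_iff]
  eq_zero_of_disjoint A B hAB := by
    by_contra h
    obtain ⟨i, hi⟩ := exists_eq_of_loopChain_ne_zero h
    have hne := hmeet i
    rcases Sym2.eq_iff.1 hi with ⟨rfl, rfl⟩ | ⟨rfl, rfl⟩
    · exact hne.ne_empty (Finset.disjoint_iff_inter_eq_empty.1 hAB)
    · exact hne.ne_empty (Finset.disjoint_iff_inter_eq_empty.1 hAB.symm)

theorem exists_ring [Finite V] (hF : Function.Injective F) (hmem : ∀ i, F i ∈ M.facets)
    (hmeet : ∀ i, (F i ∩ F (i + 1)).Nonempty) : ∃ S, ∃ R : M.Ring k S, R.F = F := by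
  cases nonempty_fintype V
  obtain ⟨g, hg⟩ := (isDualCycle_loopChain hF hmem hmeet).exists_isPotentialOn_univ
  have zero_or_one (a : ZMod 2) : a = 0 ∨ a = 1 := by revert a; decide
  have crossing (i : ZMod k) : ∃ u o, M.IsEdge (F i) (F (i + 1)) u o ∧ g u = 0 ∧ g o ≠ 0 := by
    obtain ⟨x, hx⟩ := hmeet i
    rw [Finset.mem_inter] at hx
    obtain ⟨y, hxy⟩ := exists_isEdge (hmem i) (hmem (i + 1)) (hF.ne (add_one_ne i)).symm hx.1 hx.2
    have hsum := hg _ _ x y hxy (Set.mem_univ x) (Set.mem_univ y)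
    rw [loopChain_apply_succ hF] at hsum
    rcases zero_or_one (g x) with hgx | hgx
    · exact ⟨x, y, hxy, hgx, fun hgy => by simp [hgx, hgy] at hsum⟩
    · exact ⟨y, x, hxy.symm, by simpa [hgx] using hsum, by simp [hgx]⟩
  choose u o huo hu ho using crossing
  refine ⟨Finset.univ.filter (g · = 0), ⟨F, u, o, hF, huo, by simp [hu], by simp [ho], ?_⟩, rfl⟩
  rintro x hx y hy ⟨A, B, hAB⟩
  simp only [Finset.mem_filter, Finset.mem_univ, true_and] at hx hy
  have hsum := hg A B x y hAB (Set.mem_univ x) (Set.mem_univ y)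
  rw [hx, zero_add] at hsum
  obtain ⟨i, hi⟩ := exists_eq_of_loopChain_ne_zero (hsum ▸ hy)
  have hxy : M.IsEdge (F i) (F (i + 1)) x y := by
    rcases Sym2.eq_iff.1 hi with ⟨rfl, rfl⟩ | ⟨rfl, rfl⟩
    exacts [hAB, hAB.swap]
  refine ⟨i, ((huo i).eq_or_eq hxy.fst_mem_left hxy.fst_mem_right).resolve_right ?_,
    ((huo i).eq_or_eq hxy.snd_mem_left hxy.snd_mem_right).resolve_left ?_⟩
  · exact fun h => ho i (h ▸ hx)
  · exact fun h => hy (h ▸ hu i)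

end FacetComplex

namespace FacetComplex

variable {V : Type*} [DecidableEq V] {M : FacetComplex V} {k : ℕ} {S A B G X : Finset V}
  {x y : V}

/-- `X` is a facet with four to seven vertices, and all other facets are pentagons or hexagons. -/
structure IsExceptional (M : FacetComplex V) (X : Finset V) : Prop where
  mem_facets : X ∈ M.facets
  four_le_card : 4 ≤ X.card
  card_le_seven : X.card ≤ 7
  card_eq_of_ne : ∀ A ∈ M.facets, A ≠ X → A.card = 5 ∨ A.card = 6

namespace IsExceptional

theorem four_le (hX : M.IsExceptional X) (hA : A ∈ M.facets) : 4 ≤ A.card := by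
  rcases eq_or_ne A X with rfl | hne
  · exact hX.four_le_card
  · have := hX.card_eq_of_ne A hA hne
    omega

theorem eq_of_card_le_four (hX : M.IsExceptional X) (hA : A ∈ M.facets) (h : A.card ≤ 4) :
    A = X := by
  by_contra hne
  have := hX.card_eq_of_ne A hA hne
  omega

end IsExceptional

namespace Ring

variable (R : M.Ring k S)

theorem mem_facets (i : ZMod k) : R.F i ∈ M.facets := (R.isEdge i).left_mem

theorem eq_u_of_mem {R : M.Ring k S} {i : ZMod k} (hx : x ∈ S) (h : x ∈ R.F i)
    (h' : x ∈ R.F (i + 1)) : x = R.u i :=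
  ((R.isEdge i).eq_or_eq h h').resolve_right fun e => R.o_notMem i (e ▸ hx)

theorem exists_eq_of_isEdge {R : M.Ring k S} (h : M.IsEdge A B x y) (hx : x ∈ S) (hy : y ∉ S) :
    ∃ i, x = R.u i ∧ y = R.o i ∧ (A = R.F i ∧ B = R.F (i + 1) ∨ A = R.F (i + 1) ∧ B = R.F i) := by
  obtain ⟨i, rfl, rfl⟩ := R.exists_eq x hx y hy h.adj
  have hA := (R.isEdge i).eq_left_or_eq_right h.left_mem h.fst_mem_left h.snd_mem_left
  have hB := (R.isEdge i).eq_left_or_eq_right h.right_mem h.fst_mem_right h.snd_mem_right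
  grind [h.facets_ne]

theorem subset_of_forall_ne {R : M.Ring k S} (hA : A ∈ M.facets) (hne : ∀ i, A ≠ R.F i)
    (hx : x ∈ S) (hxA : x ∈ A) : A ⊆ S := by
  rw [← Finset.inter_eq_left]
  refine eq_facet_of_closed hA Finset.inter_subset_left ⟨x, by simp [hx, hxA]⟩ ?_
  intro B hB hBA p hp hpB q hqA hqB
  rw [Finset.mem_inter] at hp ⊢
  refine ⟨hqA, by_contra fun hq => ?_⟩
  have hpq : p ≠ q := fun h => hq (h ▸ hp.2)
  obtain ⟨i, -, -, h | h⟩ := R.exists_eq_of_isEdge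
    (isEdge_of_mem hA hB hBA.symm hpq hp.1 hpB hqA hqB) hp.2 hq
  exacts [hne i h.1, hne (i + 1) h.1]

/-- Consecutive edges crossed by the ring have different inner endpoints, so that `u i` lies on no
facet of the ring besides `F i` and `F (i + 1)`. -/
def Proper : Prop := ∀ i j, R.u i ∈ R.F j → j = i ∨ j = i + 1

theorem exists_u_eq_of_not_proper [Fact (2 < k)] {R : M.Ring k S} (hk : k ≤ 4)
    (hR : ¬ R.Proper) : ∃ i, R.u i = R.u (i + 1) := by
  simp only [Proper, not_forall, not_or] at hR
  obtain ⟨i, j, hij, hji, hji'⟩ := hR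
  rcases eq_add_cases hk i j with h | h | rfl | rfl
  · exact absurd h hji
  · exact absurd h hji'
  · exact ⟨i, R.eq_u_of_mem (R.u_mem i) (R.isEdge i).fst_mem_right hij⟩
  · exact ⟨j, (R.eq_u_of_mem (R.u_mem _) hij (R.isEdge _).fst_mem_left).symm⟩

theorem Proper.injective_u [Fact (2 < k)] {R : M.Ring k S} (hR : R.Proper) :
    Function.Injective R.u := by
  intro i j hij
  have mem : R.u i ∈ R.F j := hij ▸ (R.isEdge j).fst_mem_left
  have mem' : R.u i ∈ R.F (j + 1) := hij ▸ (R.isEdge j).fst_mem_right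
  rcases hR i j mem with h | rfl
  · exact h.symm
  · rcases hR i _ mem' with h | h
    exacts [absurd h (add_one_add_one_ne i), absurd h (add_one_ne _)]

theorem Proper.u_ne [Fact (2 < k)] {R : M.Ring k S} (hR : R.Proper) (i : ZMod k) :
    R.u i ≠ R.u (i + 1) :=
  hR.injective_u.ne (add_one_ne i).symm

theorem Proper.exists_isCorner {R : M.Ring k S} (hR : R.Proper) :
    ∃ G : ZMod k → Finset V, (∀ i j, G i ≠ R.F j) ∧
      ∀ i, M.IsCorner (R.F i) (R.F (i + 1)) (G i) (R.u i) := by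
  have third (i : ZMod k) : ∃ C, M.IsCorner (R.F i) (R.F (i + 1)) C (R.u i) :=
    have h := R.isEdge i
    exists_third h.left_mem h.right_mem h.facets_ne h.fst_mem_left h.fst_mem_right
  choose G hG using third
  refine ⟨G, fun i j h => ?_, hG⟩
  rcases hR i j (h ▸ (hG i).mem₃) with rfl | rfl
  exacts [(hG j).ne₁₃ h.symm, (hG i).ne₂₃ h.symm]

theorem pair_subset_inter (i : ZMod k) : {R.u i, R.u (i + 1)} ⊆ R.F (i + 1) ∩ S := by
  simp [Finset.insert_subset_iff, R.u_mem, (R.isEdge i).fst_mem_right,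
    (R.isEdge (i + 1)).fst_mem_left]

variable [Fact (2 < k)]

theorem card_le (R : M.Ring k S) (hS : S ∈ M.facets) : S.card ≤ k := by
  have hsub : S ⊆ Finset.univ.image R.u := by
    intro x hx
    obtain ⟨B, C, h⟩ := exists_isCorner_of_mem hS hx
    obtain ⟨y, hxy⟩ := h.rotate.exists_isEdge
    have hy : y ∉ S := fun hy =>
      hxy.ends_ne (h.eq_vertex hy hxy.snd_mem_left hxy.snd_mem_right).symm
    obtain ⟨i, hi, -⟩ := R.exists_eq x hx y hy hxy.adj
    exact Finset.mem_image.2 ⟨i, Finset.mem_univ i, hi.symm⟩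
  calc S.card ≤ (Finset.univ.image R.u).card := Finset.card_le_card hsub
    _ ≤ (Finset.univ : Finset (ZMod k)).card := Finset.card_image_le
    _ = k := by rw [Finset.card_univ, ZMod.card]

/-! ### Sliding a ring across a facet -/

variable {R} {i : ZMod k}

theorem Proper.exists_isEdge_ne_right (hR : R.Proper)
    (hG : M.IsCorner (R.F i) (R.F (i + 1)) G (R.u i)) :
    ∃ y, M.IsEdge (R.F i) G (R.u i) y ∧ y ≠ R.u (i + 1) := by
  obtain ⟨y, hy⟩ := hG.rotate.rotate.swap.exists_isEdge
  refine ⟨y, hy, ?_⟩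
  rintro rfl
  rcases hR _ _ hy.snd_mem_left with h | h
  exacts [add_one_ne i h.symm, add_one_add_one_ne i h.symm]

theorem Proper.exists_isEdge_ne_left (hR : R.Proper)
    (hG : M.IsCorner (R.F (i + 1)) (R.F (i + 1 + 1)) G (R.u (i + 1))) :
    ∃ z, M.IsEdge (R.F (i + 1 + 1)) G (R.u (i + 1)) z ∧ z ≠ R.u i := by
  obtain ⟨z, hz⟩ := hG.rotate.exists_isEdge
  refine ⟨z, hz, ?_⟩
  rintro rfl
  rcases hR _ _ hz.snd_mem_left with h | h
  exacts [add_one_add_one_ne i h, add_one_ne (i + 1) h]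

theorem Proper.exists_ring_sdiff (hR : R.Proper) (hi : R.F (i + 1) ∩ S = {R.u i, R.u (i + 1)})
    (hG : M.IsCorner (R.F i) (R.F (i + 1)) G (R.u i))
    (hG' : M.IsCorner (R.F (i + 1)) (R.F (i + 1 + 1)) G (R.u (i + 1)))
    (hGF : ∀ j, R.F j ≠ G) (hGS : G ⊆ S) :
    ∃ R' : M.Ring k (S \ {R.u i, R.u (i + 1)}), R'.F = Function.update R.F (i + 1) G := by
  have hne := add_one_ne i
  have hne' := add_one_ne (i + 1)
  obtain ⟨y, hy, hyu⟩ := hR.exists_isEdge_ne_right hG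
  obtain ⟨z, hz, hzu⟩ := hR.exists_isEdge_ne_left hG'
  have notMem_of_mem (a : V) (ha : a ∈ S) (h : a ≠ R.u i ∧ a ≠ R.u (i + 1)) :
      a ∉ R.F (i + 1) := fun haF => by
    have := (Finset.ext_iff.1 hi a).1 (Finset.mem_inter.2 ⟨haF, ha⟩)
    grind
  let u' := Function.update (Function.update R.u (i + 1) z) i y
  let o' := Function.update (Function.update R.o (i + 1) (R.u (i + 1))) i (R.u i)
  have split (j : ZMod k) : j = i ∨ j = i + 1 ∨ j ≠ i ∧ j ≠ i + 1 := by tauto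
  refine ⟨⟨Function.update R.F (i + 1) G, u', o', fun a b hab => ?_, fun j => ?_, fun j => ?_,
    fun j => ?_, fun a ha b hb hab => ?_⟩, rfl⟩
  · grind [Function.update_apply, R.injective.eq_iff (a := a) (b := b)]
  · rcases split j with rfl | rfl | ⟨hji, hji'⟩
    · simpa [u', o', hne.symm] using hy.symm
    · simpa [u', o', hne, hne'] using hz.swap.symm
    · simpa [u', o', hji, hji'] using R.isEdge j
  · rcases split j with rfl | rfl | ⟨hji, hji'⟩
    · simp [u', hGS hy.snd_mem_right, hy.ends_ne.symm, hyu]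
    · simp [u', hne, hGS hz.snd_mem_right, hz.ends_ne.symm, hzu]
    · simp [u', hji, hji', R.u_mem, hR.injective_u.eq_iff]
  · rcases split j with rfl | rfl | ⟨hji, hji'⟩
    · simp [o']
    · simp [o', hne]
    · simp [o', hji, hji', R.o_notMem]
  · simp only [Finset.mem_sdiff, Finset.mem_insert, Finset.mem_singleton, not_or, not_and_or,
      not_not] at ha hb
    by_cases hbS : b ∈ S
    · rcases hb.resolve_left (· hbS) with rfl | rfl
      · have he := hG.swap.isEdge_of_adj hab.symm (notMem_of_mem a ha.1 ha.2)
        have := (hy.eq_or_eq he.snd_mem_left he.snd_mem_right).resolve_left ha.2.1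
        exact ⟨i, by simpa [u'] using this, by simp [o']⟩
      · have he := hG'.isEdge_of_adj hab.symm (notMem_of_mem a ha.1 ha.2)
        have := (hz.eq_or_eq he.snd_mem_left he.snd_mem_right).resolve_left ha.2.2
        exact ⟨i + 1, by simpa [u', hne] using this, by simp [o', hne]⟩
    · obtain ⟨j, rfl, rfl⟩ := R.exists_eq a ha.1 b hbS hab
      have hji : j ≠ i := fun h => ha.2.1 (h ▸ rfl)
      have hji' : j ≠ i + 1 := fun h => ha.2.2 (h ▸ rfl)
      exact ⟨j, by simp [u', hji, hji'], by simp [o', hji, hji']⟩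

end Ring

end FacetComplex

namespace FacetComplex

variable {V : Type*} [DecidableEq V] {M : FacetComplex V} {k : ℕ} {S A B G X : Finset V}

theorem card_inter_le_two (hA : A ∈ M.facets) (hB : B ∈ M.facets) (hAB : A ≠ B) :
    (A ∩ B).card ≤ 2 := by
  rcases (A ∩ B).eq_empty_or_nonempty with h | ⟨x, hx⟩
  · simp [h]
  · rw [Finset.mem_inter] at hx
    obtain ⟨y, hxy⟩ := exists_isEdge hA hB hAB hx.1 hx.2
    exact hxy.inter_eq ▸ Finset.card_le_two

namespace Ring

theorem Proper.exists_corners_of_inter_eq_pair {R : M.Ring k S} {i : ZMod k} (hR : R.Proper)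
    (hi : R.F (i + 1) ∩ S = {R.u i, R.u (i + 1)}) :
    ∃ G, (∀ j, R.F j ≠ G) ∧ M.IsCorner (R.F i) (R.F (i + 1)) G (R.u i) ∧
      M.IsCorner (R.F (i + 1)) (R.F (i + 1 + 1)) G (R.u (i + 1)) := by
  obtain ⟨G, hGF, hG⟩ := hR.exists_isCorner
  obtain ⟨w, hw⟩ := (hG i).rotate.exists_isEdge
  have hwS : w ∈ S := by
    by_contra h
    obtain ⟨j, -, -, h | h⟩ := R.exists_eq_of_isEdge hw (R.u_mem i) h
    exacts [hGF i _ h.2, hGF i _ h.2]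
  have hwu : w = R.u (i + 1) := by
    have := (Finset.ext_iff.1 hi w).1 (Finset.mem_inter.2 ⟨hw.snd_mem_left, hwS⟩)
    grind [hw.ends_ne]
  refine ⟨G i, fun j => (hGF i j).symm, hG i, ?_⟩
  have hG' : G i = G (i + 1) := (hG (i + 1)).eq_third hw.right_mem (hwu ▸ hw.snd_mem_right)
    (hGF i _) (hGF i _)
  exact hG' ▸ hG (i + 1)

theorem Proper.eq_or_eq_of_isEdge_middle {R : M.Ring k S} {i : ZMod k} (hR : R.Proper)
    {G : ZMod k → Finset V} {w p : V}
    (hG : ∀ i, M.IsCorner (R.F i) (R.F (i + 1)) (G i) (R.u i))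
    (hpath : R.F (i + 1) ∩ S = {R.u i, w, R.u (i + 1)}) (hw : w ≠ R.u i) (hw' : w ≠ R.u (i + 1))
    (hp : M.IsEdge (R.F (i + 1)) B w p) :
    p = R.u i ∧ B = G i ∨ p = R.u (i + 1) ∧ B = G (i + 1) := by
  have hwS : w ∈ S := Finset.mem_of_mem_inter_right (hpath ▸ by simp : w ∈ R.F (i + 1) ∩ S)
  have hpS : p ∈ S := by
    by_contra h
    obtain ⟨j, hwj, -⟩ := R.exists_eq _ hwS p h hp.adj
    rcases hR j (i + 1) (hwj ▸ hp.fst_mem_left) with e | e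
    · exact hw' (e ▸ hwj)
    · exact hw (add_right_cancel e ▸ hwj)
  have hpu := (Finset.ext_iff.1 hpath p).1 (Finset.mem_inter.2 ⟨hp.snd_mem_left, hpS⟩)
  simp only [Finset.mem_insert, Finset.mem_singleton] at hpu
  rcases hpu with rfl | rfl | rfl
  · refine .inl ⟨rfl, (hG i).eq_third hp.right_mem hp.snd_mem_right ?_ hp.facets_ne.symm⟩
    rintro rfl
    exact hw (R.eq_u_of_mem hwS hp.fst_mem_right hp.fst_mem_left)
  · exact absurd rfl hp.ends_ne
  · refine .inr ⟨rfl, (hG _).eq_third hp.right_mem hp.snd_mem_right hp.facets_ne.symm ?_⟩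
    rintro rfl
    exact hw' (R.eq_u_of_mem hwS hp.fst_mem_left hp.fst_mem_right)

variable [Fact (2 < k)]

/-- The number of incidences between the facets of the ring and the vertices of `S`, plus one if
the exceptional facet `X` lies in `S`. -/
def weight (R : M.Ring k S) (X : Finset V) : ℕ :=
  ∑ i, (R.F i ∩ S).card + if X ⊆ S then 1 else 0

variable {R : M.Ring k S} {i : ZMod k}

theorem sum_card_update_inter_sdiff_le (hu : R.u i ≠ R.u (i + 1))
    (hi : R.F (i + 1) ∩ S = {R.u i, R.u (i + 1)}) (hGS : G ⊆ S) (huG : R.u i ∈ G)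
    (huG' : R.u (i + 1) ∈ G) :
    ∑ j, (Function.update R.F (i + 1) G j ∩ (S \ {R.u i, R.u (i + 1)})).card + 6 ≤
      ∑ j, (R.F j ∩ S).card + G.card := by
  have drop {j l : ZMod k} (hj : R.u l ∈ R.F j) (hl : l = i ∨ l = i + 1) :
      (R.F j ∩ (S \ {R.u i, R.u (i + 1)})).card + 1 ≤ (R.F j ∩ S).card := by
    refine Finset.card_lt_card ((Finset.ssubset_iff_of_subset
      (Finset.inter_subset_inter_left Finset.sdiff_subset)).2 ⟨R.u l, ?_, ?_⟩)
    · simp [hj, R.u_mem]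
    · rcases hl with rfl | rfl <;> simp
  have drop_G : (G ∩ (S \ {R.u i, R.u (i + 1)})).card + 2 = G.card := by
    rw [← Finset.inter_sdiff_assoc, Finset.inter_eq_left.2 hGS, ← Finset.card_pair hu]
    exact Finset.card_sdiff_add_card_eq_card (by simp [Finset.insert_subset_iff, huG, huG'])
  have pointwise (j : ZMod k) :
      (Function.update R.F (i + 1) G j ∩ (S \ {R.u i, R.u (i + 1)})).card +
        ((if j = i then 1 else 0) + ((if j = i + 1 + 1 then 1 else 0) +
          if j = i + 1 then 4 else 0)) ≤
      (R.F j ∩ S).card + if j = i + 1 then G.card else 0 := by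
    have h₁ := add_one_ne i
    have h₂ := add_one_ne (i + 1)
    have h₃ := add_one_add_one_ne i
    have two := hi ▸ Finset.card_pair hu
    rcases eq_or_ne j (i + 1) with rfl | hj
    · simp only [Function.update_self, h₁, h₂.symm, if_true, if_false]
      omega
    rcases eq_or_ne j i with rfl | hj'
    · simpa [h₁.symm, h₃.symm] using drop (R.isEdge j).fst_mem_left (.inl rfl)
    rcases eq_or_ne j (i + 1 + 1) with rfl | hj''
    · simpa [h₂, h₃] using drop (R.isEdge (i + 1)).fst_mem_right (.inr rfl)
    · simpa [hj, hj', hj''] using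
        Finset.card_le_card (Finset.inter_subset_inter_left Finset.sdiff_subset)
  have total := Finset.sum_le_sum fun j (_ : j ∈ Finset.univ) => pointwise j
  simpa [Finset.sum_add_distrib] using total

theorem weight_sdiff_le {R' : M.Ring k (S \ {R.u i, R.u (i + 1)})}
    (hR' : R'.F = Function.update R.F (i + 1) G) (hu : R.u i ≠ R.u (i + 1))
    (hi : R.F (i + 1) ∩ S = {R.u i, R.u (i + 1)}) (hX : M.IsExceptional X) (hG : G ∈ M.facets)
    (hGS : G ⊆ S) (huG : R.u i ∈ G) (huG' : R.u (i + 1) ∈ G) :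
    R'.weight X ≤ R.weight X := by
  have count := sum_card_update_inter_sdiff_le hu hi hGS huG huG'
  have card_G : G.card ≤ 6 + if G = X then 1 else 0 := by
    split_ifs with h
    · exact h ▸ hX.card_le_seven
    · have := hX.card_eq_of_ne G hG h
      omega
  have bonus : (if X ⊆ S \ {R.u i, R.u (i + 1)} then 1 else 0) + (if G = X then 1 else 0) ≤
      if X ⊆ S then 1 else 0 := by
    by_cases h : X ⊆ S \ {R.u i, R.u (i + 1)}
    · have hGX : G ≠ X := by
        rintro rfl
        simpa using (Finset.mem_sdiff.1 (h huG)).2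
      simp [h, hGX, h.trans Finset.sdiff_subset]
    · split_ifs with hGX <;> grind
  unfold weight
  rw [hR']
  omega

end Ring

/-- The set `S` is a vertex or an edge closing up `k ≤ 4` consecutive facets around it (its number
of vertices is `k - 2`), or a facet. -/
def IsSmall (M : FacetComplex V) (k : ℕ) (S : Finset V) : Prop :=
  S.card + 2 = k ∨ S ∈ M.facets

namespace Ring

variable [Fact (2 < k)] {R : M.Ring k S} {i : ZMod k}

theorem isSmall_of_isSmall_sdiff (hk : k ≤ 4) (hX : M.IsExceptional X) (hu : R.u i ≠ R.u (i + 1))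
    (hG : G ∈ M.facets) (hGS : G ⊆ S) (huG : R.u i ∈ G)
    (R' : M.Ring k (S \ {R.u i, R.u (i + 1)})) (h : M.IsSmall k (S \ {R.u i, R.u (i + 1)})) :
    M.IsSmall k S := by
  have hG4 := hX.four_le hG
  have card_pair := Finset.card_pair hu
  have sdiff_add := Finset.card_sdiff_add_card_eq_card
    (s := {R.u i, R.u (i + 1)}) (t := S) (by simp [Finset.insert_subset_iff, R.u_mem])
  rcases h with h | h
  · have hSG : G = S := Finset.eq_of_subset_of_card_le hGS (by omega)
    exact .inr (hSG ▸ hG)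
  · have hG_ne : G ≠ S \ {R.u i, R.u (i + 1)} := fun e => by simpa using e.subset huG
    have split := Finset.card_sdiff_add_card_inter G {R.u i, R.u (i + 1)}
    have sdiff_le : (G \ {R.u i, R.u (i + 1)}).card ≤ 2 :=
      (Finset.card_le_card fun x hx => by
        rw [Finset.mem_sdiff] at hx
        simp [hx.1, hx.2, hGS hx.1]).trans (card_inter_le_two hG h hG_ne)
    have inter_le : (G ∩ {R.u i, R.u (i + 1)}).card ≤ 2 :=
      (Finset.card_le_card Finset.inter_subset_right).trans Finset.card_le_two
    have hGX := hX.eq_of_card_le_four hG (by omega)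
    have hSX := hX.eq_of_card_le_four h ((R'.card_le h).trans hk)
    exact absurd (hGX.trans hSX.symm) hG_ne

/-- A second layer of facets inside a ring whose facets have three vertices in `S` each: `F (i + 1)`
meets `S` in the path `u i, w i, u (i + 1)`, and the edges of this path lie in the inner facets
`G i` and `G (i + 1)`. -/
structure Collar (R : M.Ring k S) where
  G : ZMod k → Finset V
  w : ZMod k → V
  G_ne : ∀ i j, G i ≠ R.F j
  corner_u : ∀ i, M.IsCorner (R.F i) (R.F (i + 1)) (G i) (R.u i)
  corner_w : ∀ i, M.IsCorner (R.F (i + 1)) (G i) (G (i + 1)) (w i)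
  inter_eq : ∀ i, R.F (i + 1) ∩ S = {R.u i, w i, R.u (i + 1)}

theorem Proper.exists_middle (hR : R.Proper) {G : ZMod k → Finset V}
    (hG : ∀ i, M.IsCorner (R.F i) (R.F (i + 1)) (G i) (R.u i))
    (hi : (R.F (i + 1) ∩ S).card = 3) :
    ∃ w, M.IsCorner (R.F (i + 1)) (G i) (G (i + 1)) w ∧
      R.F (i + 1) ∩ S = {R.u i, w, R.u (i + 1)} := by
  obtain ⟨w, hw, hwu⟩ := Finset.exists_mem_notMem_of_card_lt_card
    (s := {R.u i, R.u (i + 1)}) (t := R.F (i + 1) ∩ S)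
    (by rw [hi]; exact Finset.card_le_two.trans_lt (by norm_num))
  simp only [Finset.mem_inter, Finset.mem_insert, Finset.mem_singleton, not_or] at hw hwu
  have hpath : R.F (i + 1) ∩ S = {R.u i, w, R.u (i + 1)} := by
    refine (Finset.eq_of_subset_of_card_le ?_ ?_).symm
    · have := R.pair_subset_inter i
      grind
    · rw [hi, Finset.card_eq_three.2 ⟨_, _, _, Ne.symm hwu.1, hR.u_ne i, hwu.2, rfl⟩]
  have side {B : Finset V} {p : V} (hp : M.IsEdge (R.F (i + 1)) B w p) :
      p = R.u i ∧ B = G i ∨ p = R.u (i + 1) ∧ B = G (i + 1) :=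
    hR.eq_or_eq_of_isEdge_middle hG hpath hwu.1 hwu.2 hp
  obtain ⟨B, C, hBC⟩ := exists_isCorner_of_mem (R.mem_facets (i + 1)) hw.1
  obtain ⟨p, hp⟩ := hBC.exists_isEdge
  obtain ⟨q, hq⟩ := hBC.rotate.rotate.swap.exists_isEdge
  refine ⟨w, ?_, hpath⟩
  rcases side hp with ⟨rfl, rfl⟩ | ⟨rfl, rfl⟩ <;> rcases side hq with ⟨rfl, rfl⟩ | ⟨rfl, rfl⟩
  · exact absurd rfl hBC.ne₂₃
  · exact hBC
  · exact hBC.rotate.rotate.swap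
  · exact absurd rfl hBC.ne₂₃

end Ring

end FacetComplex

namespace FacetComplex

variable {V : Type*} [DecidableEq V] {M : FacetComplex V} {k : ℕ} {S X : Finset V}
  {x y : V} {i j l : ZMod k}

namespace Ring

variable {R : M.Ring k S}

namespace Collar

variable (c : R.Collar)

theorem G_subset (i : ZMod k) : c.G i ⊆ S :=
  R.subset_of_forall_ne (c.corner_u i).mem_facets₃ (c.G_ne i) (R.u_mem i) (c.corner_u i).mem₃

variable {c}

theorem eq_of_w_mem_F (h : c.w i ∈ R.F j) : j = i + 1 := by
  rcases (c.corner_w i).eq_or (R.mem_facets j) h with e | e | e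
  · exact R.injective e
  · exact absurd e.symm (c.G_ne _ _)
  · exact absurd e.symm (c.G_ne _ _)

theorem eq_of_u_mem_G (hG : Function.Injective c.G) (h : R.u l ∈ c.G i) : i = l :=
  hG ((c.corner_u l).eq_third (c.corner_u i).mem_facets₃ h (c.G_ne _ _) (c.G_ne _ _))

theorem eq_or_eq_of_w_mem_G (hG : Function.Injective c.G) (h : c.w l ∈ c.G i) :
    i = l ∨ i = l + 1 := by
  rcases (c.corner_w l).eq_or (c.corner_u i).mem_facets₃ h with e | e | e
  · exact absurd e (c.G_ne _ _)
  · exact .inl (hG e)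
  · exact .inr (hG e)

theorem exists_eq_of_mem_F (c : R.Collar) (hx : x ∈ S) (h : x ∈ R.F j) :
    ∃ l, x = R.u l ∨ x = c.w l := by
  have := c.inter_eq (j - 1)
  rw [sub_add_cancel] at this
  have := (Finset.ext_iff.1 this x).1 (Finset.mem_inter.2 ⟨h, hx⟩)
  simp only [Finset.mem_insert, Finset.mem_singleton] at this
  rcases this with h | h | h
  exacts [⟨_, .inl h⟩, ⟨_, .inr h⟩, ⟨_, .inl h⟩]

variable [Fact (2 < k)]

theorem w_ne_u : c.w i ≠ R.u j := fun e =>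
  add_one_ne j ((eq_of_w_mem_F (e ▸ (R.isEdge j).fst_mem_right)).trans
    (eq_of_w_mem_F (e ▸ (R.isEdge j).fst_mem_left)).symm)

theorem isEdge_u_w (c : R.Collar) (i : ZMod k) : M.IsEdge (c.G i) (R.F (i + 1)) (R.u i) (c.w i) :=
  isEdge_of_mem (c.corner_u i).mem_facets₃ (R.mem_facets _) (c.G_ne i _) w_ne_u.symm
    (c.corner_u i).mem₃ (c.corner_u i).mem₂ (c.corner_w i).mem₂ (c.corner_w i).mem₁

theorem isEdge_w_u (c : R.Collar) (i : ZMod k) :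
    M.IsEdge (c.G (i + 1)) (R.F (i + 1)) (c.w i) (R.u (i + 1)) :=
  isEdge_of_mem (c.corner_u _).mem_facets₃ (R.mem_facets _) (c.G_ne _ _) w_ne_u
    (c.corner_w i).mem₃ (c.corner_w i).mem₁ (c.corner_u _).mem₃ (c.corner_u _).mem₁

theorem injective_G (hk : k ≤ 4) (hX : M.IsExceptional X) : Function.Injective c.G := by
  have step (i : ZMod k) : c.G i ≠ c.G (i + 1) := (c.corner_w i).ne₂₃
  have skip (i : ZMod k) : c.G i ≠ c.G (i + 1 + 1) := by
    intro h
    have hw : c.w i ≠ c.w (i + 1) := fun e =>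
      add_one_ne (i + 1) (eq_of_w_mem_F (e ▸ (c.corner_w (i + 1)).mem₁))
    have hww : M.IsEdge (c.G (i + 1)) (c.G i) (c.w (i + 1)) (c.w i) :=
      isEdge_of_mem (c.corner_u _).mem_facets₃ (c.corner_u _).mem_facets₃ (step i).symm hw.symm
        (c.corner_w (i + 1)).mem₂ (h ▸ (c.corner_w (i + 1)).mem₃) (c.corner_w i).mem₃
        (c.corner_w i).mem₂
    have card_le : (c.G (i + 1)).card ≤ 3 := by
      rw [facet_eq_of_isEdge_triangle (c.isEdge_w_u i) (c.isEdge_u_w (i + 1)) hww]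
      exact Finset.card_le_three
    have := hX.four_le hww.left_mem
    omega
  intro i j h
  rcases eq_add_cases hk i j with e | rfl | rfl | rfl
  · exact e.symm
  · exact absurd h (step i)
  · exact absurd h (skip i)
  · exact absurd h.symm (step j)

open scoped Classical in
/-- The vertices of `S` that lie on no facet of the outer ring. -/
def inside (_ : R.Collar) : Finset V := S.filter fun p => ∀ j, p ∉ R.F j

theorem mem_inside : x ∈ c.inside ↔ x ∈ S ∧ ∀ j, x ∉ R.F j := by simp [inside]

theorem inside_ssubset (c : R.Collar) : c.inside ⊂ S :=
  (Finset.ssubset_iff_of_subset (Finset.filter_subset _ _)).2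
    ⟨R.u 0, R.u_mem 0, fun h => (mem_inside (c := c).1 h).2 0 (R.isEdge 0).fst_mem_left⟩

theorem snd_mem_inside (hG : Function.Injective c.G)
    (hx : M.IsEdge (c.G i) (c.G (i + 1)) (c.w i) x) : x ∈ c.inside := by
  have hxS := c.G_subset i hx.snd_mem_left
  refine mem_inside.2 ⟨hxS, fun j hj => ?_⟩
  obtain ⟨l, rfl | rfl⟩ := c.exists_eq_of_mem_F hxS hj
  · exact hx.facets_ne (congrArg c.G ((eq_of_u_mem_G hG hx.snd_mem_left).trans
      (eq_of_u_mem_G hG hx.snd_mem_right).symm))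
  · rcases eq_or_eq_of_w_mem_G hG hx.snd_mem_left with rfl | rfl
    · exact hx.ends_ne rfl
    · rcases eq_or_eq_of_w_mem_G hG hx.snd_mem_right with h | h
      exacts [add_one_add_one_ne l h, add_one_ne _ h]

theorem exists_isEdge_of_adj (c : R.Collar) (hx : x ∈ c.inside) (hy : y ∉ c.inside)
    (hxy : M.Adj x y) : ∃ l, y = c.w l ∧ M.IsEdge (c.G l) (c.G (l + 1)) (c.w l) x := by
  rw [mem_inside] at hx
  have hyS : y ∈ S := by
    by_contra hyS
    obtain ⟨j, rfl, -⟩ := R.exists_eq x hx.1 y hyS hxy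
    exact hx.2 j (R.isEdge j).fst_mem_left
  obtain ⟨j, hj⟩ : ∃ j, y ∈ R.F j := by
    by_contra! h
    exact hy (mem_inside.2 ⟨hyS, h⟩)
  obtain ⟨l, rfl | rfl⟩ := c.exists_eq_of_mem_F hyS hj
  · exact absurd ((c.corner_u l).isEdge_of_adj hxy.symm (hx.2 l)).snd_mem_left (hx.2 _)
  · exact ⟨l, rfl, (c.corner_w l).isEdge_of_adj hxy.symm (hx.2 _)⟩

theorem exists_inner_ring (hG : Function.Injective c.G) :
    ∃ R' : M.Ring k c.inside, R'.F = c.G := by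
  choose x hx using fun i => (c.corner_w i).rotate.exists_isEdge
  refine ⟨⟨c.G, x, c.w, hG, fun i => (hx i).symm, fun i => snd_mem_inside hG (hx i),
    fun i h => (mem_inside.1 h).2 _ (c.corner_w i).mem₁, fun a ha b hb hab => ?_⟩, rfl⟩
  obtain ⟨l, rfl, h⟩ := c.exists_isEdge_of_adj ha hb hab
  exact ⟨l, ((hx l).eq_or_eq h.snd_mem_left h.snd_mem_right).resolve_left h.ends_ne.symm, rfl⟩

theorem card_G_inter_inside (hG : Function.Injective c.G) (i : ZMod k) :
    (c.G (i + 1) ∩ c.inside).card + 3 = (c.G (i + 1)).card := by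
  have hsdiff : c.G (i + 1) \ c.inside = {c.w i, R.u (i + 1), c.w (i + 1)} := by
    ext x
    simp only [Finset.mem_sdiff, mem_inside, Finset.mem_insert, Finset.mem_singleton]
    constructor
    · rintro ⟨hx, hx'⟩
      have hxS := c.G_subset _ hx
      obtain ⟨j, hj⟩ : ∃ j, x ∈ R.F j := by simpa [hxS] using hx'
      obtain ⟨l, rfl | rfl⟩ := c.exists_eq_of_mem_F hxS hj
      · rw [eq_of_u_mem_G hG hx]
        simp
      · rcases eq_or_eq_of_w_mem_G hG hx with rfl | h
        · simp
        · simp [add_right_cancel h]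
    · rintro (rfl | rfl | rfl)
      · exact ⟨(c.corner_w i).mem₃, fun h => h.2 _ (c.corner_w i).mem₁⟩
      · exact ⟨(c.corner_u _).mem₃, fun h => h.2 _ (c.corner_u _).mem₁⟩
      · exact ⟨(c.corner_w _).mem₂, fun h => h.2 _ (c.corner_w _).mem₁⟩
  have hw : c.w i ≠ c.w (i + 1) := fun e =>
    add_one_ne (i + 1) (eq_of_w_mem_F (e ▸ (c.corner_w (i + 1)).mem₁))
  have card_three : ({c.w i, R.u (i + 1), c.w (i + 1)} : Finset V).card = 3 :=
    Finset.card_eq_three.2 ⟨_, _, _, w_ne_u, hw, w_ne_u.symm, rfl⟩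
  rw [← card_three, ← hsdiff, Finset.card_inter_add_card_sdiff]

theorem card_G_inter_inside_mem (hG : Function.Injective c.G) (hX : M.IsExceptional X)
    (hXS : ¬ X ⊆ S) (i : ZMod k) :
    2 ≤ (c.G i ∩ c.inside).card ∧ (c.G i ∩ c.inside).card ≤ 3 := by
  have hne : c.G i ≠ X := fun h => hXS (h ▸ c.G_subset i)
  have := hX.card_eq_of_ne _ (c.corner_u i).mem_facets₃ hne
  have := card_G_inter_inside hG (i - 1)
  rw [sub_add_cancel] at this
  omega

theorem not_isSmall_inside (hk : k ≤ 4) (hX : M.IsExceptional X) (hXS : ¬ X ⊆ S)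
    (hG : Function.Injective c.G) (R' : M.Ring k c.inside) : ¬ M.IsSmall k c.inside := by
  rintro (h | h)
  · have two_le (i) := (card_G_inter_inside_mem hG hX hXS i).1
    have inside_subset (i : ZMod k) : c.inside ⊆ c.G i := by
      refine Finset.inter_eq_right.1
        (Finset.eq_of_subset_of_card_le Finset.inter_subset_right ?_)
      have := two_le i
      omega
    obtain ⟨p, hp, q, hq, hpq⟩ := Finset.one_lt_card.1
      ((two_le 0).trans (Finset.card_le_card Finset.inter_subset_right))
    have edge := isEdge_of_mem (c.corner_u 0).mem_facets₃ (c.corner_u (0 + 1)).mem_facets₃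
      (c.corner_w 0).ne₂₃ hpq (inside_subset _ hp) (inside_subset _ hp) (inside_subset _ hq)
      (inside_subset _ hq)
    rcases edge.eq_left_or_eq_right (c.corner_u (0 + 1 + 1)).mem_facets₃ (inside_subset _ hp)
      (inside_subset _ hq) with e | e
    · exact add_one_add_one_ne 0 (hG e)
    · exact add_one_ne _ (hG e)
  · have hSX := hX.eq_of_card_le_four h ((R'.card_le h).trans hk)
    exact hXS (hSX ▸ c.inside_ssubset.subset)

end Collar

variable [Fact (2 < k)]

theorem Proper.exists_collar (hR : R.Proper) (h : ∀ i, (R.F i ∩ S).card = 3) :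
    Nonempty R.Collar := by
  obtain ⟨G, hGF, hG⟩ := hR.exists_isCorner
  choose w hw hpath using fun i => hR.exists_middle hG (h (i + 1))
  exact ⟨⟨G, w, hGF, hG, hw, hpath⟩⟩

theorem isSmall_of_collar (hk : k ≤ 4) (hX : M.IsExceptional X) (hXS : ¬ X ⊆ S) (c : R.Collar)
    (ih : ∀ T ⊂ S, ∀ R' : M.Ring k T, R'.weight X ≤ 3 * k → M.IsSmall k T) : M.IsSmall k S := by
  have hG := Collar.injective_G (c := c) hk hX
  obtain ⟨R', hR'⟩ := Collar.exists_inner_ring hG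
  refine absurd (ih c.inside c.inside_ssubset R' ?_)
    (Collar.not_isSmall_inside hk hX hXS hG R')
  have sum_le : ∑ i, (c.G i ∩ c.inside).card ≤ ∑ _i : ZMod k, 3 :=
    Finset.sum_le_sum fun i _ => (Collar.card_G_inter_inside_mem hG hX hXS i).2
  have hX' : ¬ X ⊆ c.inside := fun h => hXS (h.trans c.inside_ssubset.subset)
  simpa [weight, hR', hX', mul_comm k] using sum_le

theorem Proper.isSmall_of_inter_eq_pair (hR : R.Proper) (hk : k ≤ 4) (hX : M.IsExceptional X)
    (hi : R.F (i + 1) ∩ S = {R.u i, R.u (i + 1)}) (hW : R.weight X ≤ 3 * k)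
    (ih : ∀ T ⊂ S, ∀ R' : M.Ring k T, R'.weight X ≤ 3 * k → M.IsSmall k T) : M.IsSmall k S := by
  obtain ⟨G, hGF, hG, hG'⟩ := hR.exists_corners_of_inter_eq_pair hi
  have hGS : G ⊆ S :=
    R.subset_of_forall_ne hG.mem_facets₃ (fun j => (hGF j).symm) (R.u_mem i) hG.mem₃
  obtain ⟨R', hR'⟩ := hR.exists_ring_sdiff hi hG hG' hGF hGS
  have hssub : S \ {R.u i, R.u (i + 1)} ⊂ S :=
    (Finset.ssubset_iff_of_subset Finset.sdiff_subset).2 ⟨R.u i, R.u_mem i, by simp⟩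
  exact isSmall_of_isSmall_sdiff hk hX (hR.u_ne i) hG.mem_facets₃ hGS hG.mem₃ R'
    (ih _ hssub R' ((weight_sdiff_le hR' (hR.u_ne i) hi hX hG.mem_facets₃ hGS hG.mem₃
      hG'.mem₃).trans hW))

theorem isSmall_of_weight_le (hk : k ≤ 4) (hX : M.IsExceptional X)
    (hdeg : ∀ T, ∀ R : M.Ring k T, ¬ R.Proper → T.card + 2 = k) (R : M.Ring k S)
    (hW : R.weight X ≤ 3 * k) : M.IsSmall k S := by
  induction S using Finset.strongInduction with
  | H S ih =>
    by_cases hR : R.Proper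
    swap
    · exact .inl (hdeg S R hR)
    have pair_card (i : ZMod k) : 2 ≤ (R.F (i + 1) ∩ S).card :=
      Finset.card_pair (hR.u_ne i) ▸ Finset.card_le_card (R.pair_subset_inter i)
    by_cases hpair : ∃ i, (R.F (i + 1) ∩ S).card ≤ 2
    · obtain ⟨i, hi⟩ := hpair
      refine hR.isSmall_of_inter_eq_pair hk hX (i := i) ?_ hW ih
      exact (Finset.eq_of_subset_of_card_le (R.pair_subset_inter i)
        (Finset.card_pair (hR.u_ne i) ▸ hi)).symm
    · push Not at hpair
      have three_le (i : ZMod k) : 3 ≤ (R.F i ∩ S).card := by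
        have := hpair (i - 1)
        rwa [sub_add_cancel] at this
      have sum_three : ∑ _i : ZMod k, 3 = 3 * k := by simp [mul_comm]
      have sum_ge : ∑ _i : ZMod k, 3 ≤ ∑ i, (R.F i ∩ S).card :=
        Finset.sum_le_sum fun i _ => three_le i
      unfold weight at hW
      have hXS : ¬ X ⊆ S := fun h => by
        rw [if_pos h] at hW
        omega
      have sum_eq : ∑ _i : ZMod k, 3 = ∑ i, (R.F i ∩ S).card := by omega
      have three_eq := (Finset.sum_eq_sum_iff_of_le fun i _ => three_le i).1 sum_eq
      obtain ⟨c⟩ := hR.exists_collar fun i => (three_eq i (Finset.mem_univ i)).symm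
      exact isSmall_of_collar hk hX hXS c ih

theorem weight_add_weight_compl_le [Fintype V] (R : M.Ring k S) (hX : M.IsExceptional X) :
    R.weight X + R.compl.weight X ≤ 6 * k + 1 := by
  have sum_split : ∑ i, (R.F i ∩ S).card + ∑ i, (R.F i ∩ Sᶜ).card = ∑ i, (R.F i).card := by
    rw [← Finset.sum_add_distrib]
    refine Finset.sum_congr rfl fun i _ => ?_
    rw [← Finset.sdiff_eq_inter_compl, Finset.card_inter_add_card_sdiff]
  have card_le (i : ZMod k) : (R.F i).card ≤ 6 + if R.F i = X then 1 else 0 := by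
    split_ifs with h
    · exact h ▸ hX.card_le_seven
    · have := hX.card_eq_of_ne _ (R.mem_facets i) h
      omega
  have sum_le := Finset.sum_le_sum fun i (_ : i ∈ Finset.univ) => card_le i
  have bonus : (∑ i, if R.F i = X then 1 else 0) +
      ((if X ⊆ S then 1 else 0) + if X ⊆ Sᶜ then 1 else 0) ≤ 1 := by
    by_cases h : ∃ i, R.F i = X
    · obtain ⟨i, rfl⟩ := h
      have hS : ¬ R.F i ⊆ S := fun h => R.o_notMem i (h (R.isEdge i).snd_mem_left)
      have hS' : ¬ R.F i ⊆ Sᶜ := fun h =>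
        Finset.mem_compl.1 (h (R.isEdge i).fst_mem_left) (R.u_mem i)
      simp [R.injective.eq_iff, hS, hS']
    · push Not at h
      obtain ⟨x, hx⟩ := Finset.card_pos.1 (four_pos.trans_le hX.four_le_card)
      have hne : ¬ (X ⊆ S ∧ X ⊆ Sᶜ) := fun h => Finset.mem_compl.1 (h.2 hx) (h.1 hx)
      simp only [h, if_false, Finset.sum_const_zero]
      split_ifs <;> grind
  simp only [Finset.sum_add_distrib, Finset.sum_const, Finset.card_univ, ZMod.card,
    smul_eq_mul] at sum_le
  change ∑ i, (R.F i ∩ S).card + _ + (∑ i, (R.F i ∩ Sᶜ).card + _) ≤ _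
  omega

theorem isSmall_or_isSmall_compl [Fintype V] (hk : k ≤ 4) (hX : M.IsExceptional X)
    (hdeg : ∀ T, ∀ R : M.Ring k T, ¬ R.Proper → T.card + 2 = k) (R : M.Ring k S) :
    M.IsSmall k S ∨ M.IsSmall k Sᶜ := by
  have := R.weight_add_weight_compl_le hX
  by_cases h : R.weight X ≤ 3 * k
  · exact .inl (isSmall_of_weight_le hk hX hdeg R h)
  · exact .inr (isSmall_of_weight_le hk hX hdeg R.compl (by omega))

end Ring

end FacetComplex

namespace FacetComplex

variable {V : Type*} [DecidableEq V] {M : FacetComplex V} {k : ℕ} {S A B C Q X : Finset V}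

/-! ### Rings of three and four facets -/

theorem forall_zmod_three {p : ZMod 3 → Prop} : (∀ i, p i) ↔ p 0 ∧ p 1 ∧ p 2 :=
  Fin.forall_fin_succ.trans (and_congr_right fun _ => Fin.forall_fin_two)

theorem forall_zmod_four {p : ZMod 4 → Prop} : (∀ i, p i) ↔ p 0 ∧ p 1 ∧ p 2 ∧ p 3 :=
  Fin.forall_fin_succ.trans (and_congr_right fun _ => forall_zmod_three (p := fun i => p i.succ))

theorem zmod_four_add_four (i : ZMod 4) : i + 1 + 1 + 1 + 1 = i := by
  revert i
  decide

namespace Ring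

theorem isCorner_of_u_eq [Fact (2 < k)] {R : M.Ring k S} {i : ZMod k}
    (hi : R.u i = R.u (i + 1)) :
    M.IsCorner (R.F i) (R.F (i + 1)) (R.F (i + 1 + 1)) (R.u i) :=
  ⟨R.mem_facets _, R.mem_facets _, R.mem_facets _, R.injective.ne (add_one_ne i).symm,
    R.injective.ne (add_one_add_one_ne i).symm, R.injective.ne (add_one_ne _).symm,
    (R.isEdge i).fst_mem_left, (R.isEdge i).fst_mem_right,
    hi ▸ (R.isEdge (i + 1)).fst_mem_right⟩

theorem card_eq_one_of_not_proper [Finite V] {R : M.Ring 3 S} (hR : ¬ R.Proper) :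
    S.card = 1 := by
  cases nonempty_fintype V
  obtain ⟨i, hi⟩ := exists_u_eq_of_not_proper (by norm_num) hR
  set v := R.u i
  have add_three (j : ZMod 3) : j + 1 + 1 + 1 = j := by decide +revert
  have mem (j : ZMod 3) : v ∈ R.F j := by
    rcases eq_add_cases (by norm_num) i j with rfl | rfl | rfl | h
    · exact (R.isEdge j).fst_mem_left
    · exact (R.isEdge i).fst_mem_right
    · exact hi ▸ (R.isEdge (i + 1)).fst_mem_right
    · rw [← add_three j, ← h]
      exact hi ▸ (R.isEdge (i + 1)).fst_mem_right
  have eq_v {j : ZMod 3} {x : V} (hx : x ∈ S) (h : x ∈ R.F j) (h' : x ∈ R.F (j + 1)) : x = v :=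
    (R.eq_u_of_mem hx h h').trans (R.eq_u_of_mem (R.u_mem i) (mem j) (mem (j + 1))).symm
  have u_eq (j : ZMod 3) : R.u j = v :=
    eq_v (R.u_mem j) (R.isEdge j).fst_mem_left (R.isEdge j).fst_mem_right
  have corner (j : ZMod 3) : M.IsCorner (R.F j) (R.F (j + 1)) (R.F (j + 1 + 1)) v :=
    u_eq j ▸ isCorner_of_u_eq ((u_eq j).trans (u_eq (j + 1)).symm)
  have hempty : S.erase v = ∅ := by
    by_contra hne
    have huniv := eq_univ_of_closed (M := M) (Finset.nonempty_iff_ne_empty.2 hne) ?_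
    · simpa using huniv.ge (Finset.mem_univ v)
    intro x hx y hxy
    rw [Finset.mem_erase] at hx ⊢
    constructor
    · rintro rfl
      have hxF : ∃ j, x ∉ R.F j := by
        by_contra! h
        exact hx.1 ((corner 0).eq_vertex (h _) (h _) (h _))
      obtain ⟨j, hj⟩ := hxF
      have h := (corner j).isEdge_of_adj hxy.symm hj
      exact hx.1 (eq_v hx.2 h.snd_mem_left h.snd_mem_right)
    · by_contra hy
      obtain ⟨j, rfl, -⟩ := R.exists_eq x hx.2 y hy hxy
      exact hx.1 (u_eq j)
  rw [← Finset.card_erase_add_one (R.u_mem i), hempty, Finset.card_empty]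

theorem card_eq_one_or_card_compl_eq_one [Fintype V] (R : M.Ring 3 S) (hX : M.IsExceptional X) :
    S.card = 1 ∨ Sᶜ.card = 1 := by
  have card_eq_one {T : Finset V} (R : M.Ring 3 T) : M.IsSmall 3 T → T.card = 1 := by
    rintro (h | h)
    · omega
    · have := R.card_le h
      have := hX.four_le h
      omega
  refine (isSmall_or_isSmall_compl (by norm_num) hX (fun T R hR => ?_) R).imp
    (card_eq_one R) (card_eq_one R.compl)
  rw [card_eq_one_of_not_proper hR]

variable {R : M.Ring 4 S} {i : ZMod 4}

theorem u_notMem_of_u_eq (hi : R.u i = R.u (i + 1)) : R.u i ∉ R.F (i + 1 + 1 + 1) := by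
  have hne : ∀ j : ZMod 4, j + 1 + 1 + 1 ≠ j ∧ j + 1 + 1 + 1 ≠ j + 1 ∧
    j + 1 + 1 + 1 ≠ j + 1 + 1 := by decide
  intro h
  rcases (isCorner_of_u_eq hi).eq_or (R.mem_facets _) h with e | e | e
  exacts [(hne i).1 (R.injective e), (hne i).2.1 (R.injective e), (hne i).2.2 (R.injective e)]

theorem exists_isEdge_of_u_eq (hi : R.u i = R.u (i + 1)) :
    ∃ x ∈ S, M.IsEdge (R.F i) (R.F (i + 1 + 1)) (R.u i) x ∧
      ∀ p ∈ S, p ≠ R.u i → M.Adj (R.u i) p → p = x := by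
  have corner := isCorner_of_u_eq hi
  obtain ⟨x, hx⟩ := corner.rotate.rotate.swap.exists_isEdge
  have not_succ : ∀ l i : ZMod 4,
      ¬ (i = l ∧ i + 1 + 1 = l + 1) ∧ ¬ (i = l + 1 ∧ i + 1 + 1 = l) := by decide
  refine ⟨x, ?_, hx, fun p hp hpv hvp => ?_⟩
  · by_contra hxS
    obtain ⟨l, -, -, h | h⟩ := R.exists_eq_of_isEdge hx (R.u_mem i) hxS
    exacts [(not_succ l i).1 ⟨R.injective h.1, R.injective h.2⟩,
      (not_succ l i).2 ⟨R.injective h.1, R.injective h.2⟩]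
  · have hpA : p ∈ R.F i := by_contra fun h =>
      have e := corner.isEdge_of_adj hvp h
      hpv ((R.eq_u_of_mem hp e.snd_mem_left e.snd_mem_right).trans hi.symm)
    have hpC : p ∈ R.F (i + 1 + 1) := by_contra fun h =>
      have e := corner.rotate.rotate.isEdge_of_adj hvp h
      hpv (R.eq_u_of_mem hp e.snd_mem_left e.snd_mem_right)
    exact (hx.eq_or_eq hpA hpC).resolve_left hpv

theorem exists_ring_erase_of_u_eq (hi : R.u i = R.u (i + 1)) :
    Nonempty (M.Ring 3 (S.erase (R.u i))) := by
  obtain ⟨x, hxS, hx, eq_x⟩ := exists_isEdge_of_u_eq hi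
  have v_notMem := u_notMem_of_u_eq hi
  have hinj : ∀ j : ZMod 4, Function.Injective ![j + 1 + 1, j + 1 + 1 + 1, j] := by decide
  refine ⟨⟨R.F ∘ ![i + 1 + 1, i + 1 + 1 + 1, i], ![R.u (i + 1 + 1), R.u (i + 1 + 1 + 1), x],
    ![R.o (i + 1 + 1), R.o (i + 1 + 1 + 1), R.u i], R.injective.comp (hinj i),
    forall_zmod_three.2 ⟨R.isEdge _, ?_, hx.symm⟩, forall_zmod_three.2 ⟨?_, ?_, ?_⟩,
    forall_zmod_three.2 ⟨?_, ?_, Finset.notMem_erase _ S⟩, ?_⟩⟩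
  · have h := R.isEdge (i + 1 + 1 + 1)
    rwa [zmod_four_add_four] at h
  · exact Finset.mem_erase.2 ⟨fun h => v_notMem (h ▸ (R.isEdge _).fst_mem_right), R.u_mem _⟩
  · exact Finset.mem_erase.2 ⟨fun h => v_notMem (h ▸ (R.isEdge _).fst_mem_left), R.u_mem _⟩
  · exact Finset.mem_erase.2 ⟨hx.ends_ne.symm, hxS⟩
  · exact fun h => R.o_notMem _ (Finset.mem_of_mem_erase h)
  · exact fun h => R.o_notMem _ (Finset.mem_of_mem_erase h)
  · intro p hp q hq hpq
    rw [Finset.mem_erase] at hp hq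
    rcases eq_or_ne q (R.u i) with rfl | hqv
    · exact ⟨2, eq_x p hp.2 hp.1 hpq.symm, rfl⟩
    · obtain ⟨l, rfl, rfl⟩ := R.exists_eq p hp.2 q (fun h => hq ⟨hqv, h⟩) hpq
      rcases eq_add_cases le_rfl i l with rfl | rfl | rfl | rfl
      · exact absurd rfl hp.1
      · exact absurd hi.symm hp.1
      · exact ⟨0, rfl, rfl⟩
      · exact ⟨1, congrArg R.u (zmod_four_add_four l).symm,
          congrArg R.o (zmod_four_add_four l).symm⟩

theorem card_eq_two_of_not_proper [Finite V] (hX : M.IsExceptional X) (hR : ¬ R.Proper) :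
    S.card = 2 := by
  cases nonempty_fintype V
  obtain ⟨i, hi⟩ := exists_u_eq_of_not_proper le_rfl hR
  obtain ⟨R'⟩ := exists_ring_erase_of_u_eq hi
  have hcard := Finset.card_erase_add_one (R.u_mem i)
  have hcompl : 1 < (S.erase (R.u i))ᶜ.card := Finset.one_lt_card.2
    ⟨R.u i, by simp, R.o i, by simp [R.o_notMem], (R.isEdge i).ends_ne⟩
  rcases R'.card_eq_one_or_card_compl_eq_one hX with h | h <;> omega

end Ring

theorem exists_mem_inter_of_pairwise_meet [Finite V] (hX : M.IsExceptional X)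
    (hA : A ∈ M.facets) (hB : B ∈ M.facets) (hC : C ∈ M.facets)
    (hAB : A ≠ B) (hBC : B ≠ C) (hCA : C ≠ A)
    (hAB' : (A ∩ B).Nonempty) (hBC' : (B ∩ C).Nonempty) (hCA' : (C ∩ A).Nonempty) :
    ∃ v, v ∈ A ∧ v ∈ B ∧ v ∈ C := by
  cases nonempty_fintype V
  have common {S : Finset V} (R : M.Ring 3 S) (hS : S.card = 1) : ∃ v, ∀ i, v ∈ R.F i := by
    obtain ⟨v, rfl⟩ := Finset.card_eq_one.1 hS
    have u_eq (i) : R.u i = v := Finset.mem_singleton.1 (R.u_mem i)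
    exact ⟨v, fun i => by simpa only [u_eq] using (R.isEdge i).fst_mem_left⟩
  have hinj : Function.Injective (![A, B, C] : ZMod 3 → Finset V) := by
    intro i j
    revert i j
    refine forall_zmod_three.2 ⟨?_, ?_, ?_⟩ <;> refine forall_zmod_three.2 ⟨?_, ?_, ?_⟩ <;> intro h
    exacts [rfl, absurd h hAB, absurd h hCA.symm, absurd h hAB.symm, rfl, absurd h hBC,
      absurd h hCA, absurd h hBC.symm, rfl]
  obtain ⟨S, R, hF⟩ := exists_ring hinj (forall_zmod_three.2 ⟨hA, hB, hC⟩)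
    (forall_zmod_three.2 ⟨hAB', hBC', hCA'⟩)
  have hv : ∃ v, ∀ i, v ∈ R.F i :=
    (R.card_eq_one_or_card_compl_eq_one hX).elim (common R) (common R.compl)
  rw [hF] at hv
  exact hv.imp fun v hv => forall_zmod_three.1 hv

/-! ### Four-belts and quadrangles -/

/-- Four facets in cyclic order, of which exactly the consecutive ones meet. -/
structure IsFourBelt (M : FacetComplex V) (F : ZMod 4 → Finset V) : Prop where
  mem_facets : ∀ i, F i ∈ M.facets
  inter_nonempty : ∀ i, (F i ∩ F (i + 1)).Nonempty
  disjoint : ∀ i, Disjoint (F i) (F (i + 1 + 1))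

namespace IsFourBelt

variable {F : ZMod 4 → Finset V}

theorem injective (hF : M.IsFourBelt F) : Function.Injective F := by
  have ne_succ (i : ZMod 4) : F i ≠ F (i + 1) := fun h =>
    Finset.not_disjoint_iff_nonempty_inter.2 (h ▸ hF.inter_nonempty (i + 1)) (hF.disjoint i)
  intro i j hij
  rcases eq_add_cases le_rfl i j with rfl | rfl | rfl | rfl
  · rfl
  · exact absurd hij (ne_succ i)
  · have := (hF.inter_nonempty i).mono Finset.inter_subset_left
    have hself := hF.disjoint i
    rw [← hij, disjoint_self] at hself
    exact absurd hself this.ne_empty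
  · exact absurd hij.symm (ne_succ j)

theorem proper (hF : M.IsFourBelt F) {R : M.Ring 4 S} (hR : R.F = F) : R.Proper := by
  subst hR
  by_contra hproper
  obtain ⟨i, hi⟩ := Ring.exists_u_eq_of_not_proper le_rfl hproper
  exact Finset.disjoint_left.1 (hF.disjoint i) (R.isEdge i).fst_mem_left
    (hi ▸ (R.isEdge (i + 1)).fst_mem_right)

theorem exists_surrounded [Finite V] (hF : M.IsFourBelt F) (hX : M.IsExceptional X) :
    ∃ Q ∈ M.facets, Q.card = 4 ∧ (∀ i, Q ≠ F i) ∧ ∃ u : ZMod 4 → V, Function.Injective u ∧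
      ∀ i, u i ∈ Q ∧ u i ∈ F i ∧ u i ∈ F (i + 1) := by
  cases nonempty_fintype V
  have surrounded {T : Finset V} (R : M.Ring 4 T) (hR : R.F = F) (hT : M.IsSmall 4 T) :
      ∃ Q ∈ M.facets, Q.card = 4 ∧ (∀ i, Q ≠ F i) ∧ ∃ u : ZMod 4 → V, Function.Injective u ∧
        ∀ i, u i ∈ Q ∧ u i ∈ F i ∧ u i ∈ F (i + 1) := by
    have hinj := (hF.proper hR).injective_u
    have hcard : 4 ≤ T.card := by
      have h := Finset.card_le_card_of_injOn R.u (fun i _ => R.u_mem i) hinj.injOn (s := .univ)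
      rwa [Finset.card_univ, ZMod.card] at h
    have hTM : T ∈ M.facets := hT.resolve_left (by omega)
    subst hR
    exact ⟨T, hTM, (R.card_le hTM).antisymm hcard,
      fun i h => R.o_notMem i (h.ge (R.isEdge i).snd_mem_left), R.u, hinj,
      fun i => ⟨R.u_mem i, (R.isEdge i).fst_mem_left, (R.isEdge i).fst_mem_right⟩⟩
  obtain ⟨S, R, hR⟩ := exists_ring hF.injective hF.mem_facets hF.inter_nonempty
  have hdeg (T : Finset V) (R : M.Ring 4 T) (hR : ¬ R.Proper) : T.card + 2 = 4 := by
    rw [Ring.card_eq_two_of_not_proper hX hR]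
  exact (Ring.isSmall_or_isSmall_compl le_rfl hX hdeg R).elim (surrounded R hR)
    (surrounded R.compl hR)

end IsFourBelt

theorem card_filter_meeting (hA : A ∈ M.facets) :
    (M.facets.filter fun B => B ≠ A ∧ (A ∩ B).Nonempty).card = A.card := by
  suffices h : (M.facets.filter fun B => B ≠ A ∧ (A ∩ B).Nonempty).card * 2 = A.card * 2 by omega
  refine Finset.card_mul_eq_card_mul (fun B v => v ∈ B) (fun B hB => ?_) (fun v hv => ?_)
  · obtain ⟨hB, hBA, v, hv⟩ := Finset.mem_filter.1 hB
    obtain ⟨w, hw, h⟩ := M.exists_inter_eq_pair A hA B hB hBA.symm v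
      (Finset.mem_inter.1 hv).1 (Finset.mem_inter.1 hv).2
    rw [Finset.bipartiteAbove, Finset.filter_mem_eq_inter, h, Finset.card_pair hw.symm]
  · obtain ⟨B, C, h⟩ := exists_isCorner_of_mem hA hv
    rw [← Finset.card_pair h.ne₂₃]
    congr 1
    ext D
    simp only [Finset.mem_bipartiteBelow, Finset.mem_filter, Finset.mem_insert,
      Finset.mem_singleton]
    constructor
    · rintro ⟨⟨hD, hDA, -⟩, hvD⟩
      exact (h.eq_or hD hvD).resolve_left hDA
    · rintro (rfl | rfl)
      · exact ⟨⟨h.mem_facets₂, h.ne₁₂.symm, v, Finset.mem_inter.2 ⟨hv, h.mem₂⟩⟩, h.mem₂⟩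
      · exact ⟨⟨h.mem_facets₃, h.ne₁₃.symm, v, Finset.mem_inter.2 ⟨hv, h.mem₃⟩⟩, h.mem₃⟩

theorem exists_next_isEdge {x y : V} (h : M.IsEdge A B x y) :
    ∃ C z, M.IsEdge A C y z ∧ z ≠ x := by
  obtain ⟨C, hC⟩ := exists_third h.left_mem h.right_mem h.facets_ne h.snd_mem_left h.snd_mem_right
  obtain ⟨z, hz⟩ := hC.rotate.rotate.swap.exists_isEdge
  refine ⟨C, z, hz, ?_⟩
  rintro rfl
  exact h.ends_ne (hC.eq_vertex h.fst_mem_left h.fst_mem_right hz.snd_mem_right)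

theorem exists_boundary_of_card_eq_four (hQ : Q ∈ M.facets) (h4 : Q.card = 4) :
    ∃ (G : ZMod 4 → Finset V) (u : ZMod 4 → V), (∀ i, M.IsEdge Q (G i) (u i) (u (i + 1))) ∧
      ∀ i, u i ≠ u (i + 1 + 1) := by
  obtain ⟨u₀, hu₀⟩ : Q.Nonempty := Finset.card_pos.1 (by omega)
  obtain ⟨G₀, C, corner⟩ := exists_isCorner_of_mem hQ hu₀
  obtain ⟨u₁, e₀⟩ := corner.exists_isEdge
  obtain ⟨G₁, u₂, e₁, h₂₀⟩ := exists_next_isEdge e₀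
  obtain ⟨G₂, u₃, e₂, h₃₁⟩ := exists_next_isEdge e₁
  obtain ⟨G₃, u₄, e₃, h₄₂⟩ := exists_next_isEdge e₂
  have no_triangle {A B C : Finset V} {x y z : V} (hA : M.IsEdge Q A x y) (hB : M.IsEdge Q B y z)
      (hC : M.IsEdge Q C z x) : False := by
    have := Finset.card_le_three (a := x) (b := y) (c := z)
    rw [← facet_eq_of_isEdge_triangle hA hB hC] at this
    omega
  have h₃₀ : u₃ ≠ u₀ := by
    rintro rfl
    exact no_triangle e₀ e₁ e₂
  have h₄₁ : u₄ ≠ u₁ := by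
    rintro rfl
    exact no_triangle e₁ e₂ e₃
  have hQ_eq : {u₀, u₁, u₂, u₃} = Q := by
    apply Finset.eq_of_subset_of_card_le
    · simp [Finset.insert_subset_iff, hu₀, e₀.snd_mem_left, e₁.snd_mem_left, e₂.snd_mem_left]
    · rw [h4, Finset.card_insert_of_notMem, Finset.card_insert_of_notMem, Finset.card_pair]
      all_goals simp [e₀.ends_ne, e₁.ends_ne, e₂.ends_ne, h₂₀.symm, h₃₁.symm, h₃₀.symm]
  obtain rfl : u₄ = u₀ := by
    have h := e₃.snd_mem_left
    rw [← hQ_eq] at h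
    simpa [h₄₁, h₄₂, e₃.ends_ne.symm] using h
  exact ⟨![G₀, G₁, G₂, G₃], ![u₄, u₁, u₂, u₃], forall_zmod_four.2 ⟨e₀, e₁, e₂, e₃⟩,
    forall_zmod_four.2 ⟨h₂₀.symm, h₃₁.symm, h₂₀, h₃₁⟩⟩

theorem isFourBelt_of_boundary [Finite V] (hX : M.IsExceptional X) {G : ZMod 4 → Finset V}
    {u : ZMod 4 → V} (hG : ∀ i, M.IsEdge Q (G i) (u i) (u (i + 1)))
    (hu : ∀ i, u i ≠ u (i + 1 + 1)) : M.IsFourBelt G := by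
  refine ⟨fun i => (hG i).right_mem, fun i => ⟨u (i + 1), Finset.mem_inter.2
    ⟨(hG i).snd_mem_right, (hG (i + 1)).fst_mem_right⟩⟩, fun i => ?_⟩
  have not_common {v : V} (hvQ : v ∈ Q) (hv : v ∈ G i) (hv' : v ∈ G (i + 1 + 1)) : False := by
    have hnext := hu (i + 1)
    have hlast := (hG (i + 1 + 1 + 1)).ends_ne
    rw [zmod_four_add_four] at hlast
    rcases (hG i).eq_or_eq hvQ hv with rfl | rfl <;>
      rcases (hG (i + 1 + 1)).eq_or_eq hvQ hv' with h | h
    exacts [hu i h, hlast h.symm, (hG (i + 1)).ends_ne h, hnext h]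
  have hne : G i ≠ G (i + 1 + 1) := fun h =>
    not_common (hG i).fst_mem_left (hG i).fst_mem_right (h ▸ (hG i).fst_mem_right)
  by_contra hdisj
  have hQG (j) : (Q ∩ G j).Nonempty :=
    ⟨u j, Finset.mem_inter.2 ⟨(hG j).fst_mem_left, (hG j).fst_mem_right⟩⟩
  obtain ⟨v, hvQ, hv, hv'⟩ := exists_mem_inter_of_pairwise_meet hX (hG i).left_mem
    (hG i).right_mem (hG (i + 1 + 1)).right_mem (hG i).facets_ne hne
    (hG (i + 1 + 1)).facets_ne.symm (hQG i) (Finset.not_disjoint_iff_nonempty_inter.1 hdisj)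
    (Finset.inter_comm Q _ ▸ hQG (i + 1 + 1))
  exact not_common hvQ hv hv'

end FacetComplex

/-! ### Faces of polytopes -/

section Faces

variable {P Q R F : Set E3}

theorem IsPolytope.isCompact (hP : IsPolytope P) : IsCompact P := by
  obtain ⟨V, rfl⟩ := hP
  exact V.finite_toSet.isCompact_convexHull ℝ

theorem IsPolytope.convex (hP : IsPolytope P) : Convex ℝ P := by
  obtain ⟨V, rfl⟩ := hP
  exact convex_convexHull _ _

theorem IsPolytope.finite_extremePoints (hP : IsPolytope P) : (P.extremePoints ℝ).Finite := by
  obtain ⟨V, rfl⟩ := hP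
  exact V.finite_toSet.subset extremePoints_convexHull_subset

theorem IsPolytope.isFaceOf_self (hP : IsPolytope P) (hne : P.Nonempty) : IsFaceOf P P :=
  ⟨hne, hP.isCompact.isClosed, hP.convex, IsExtreme.rfl⟩

theorem IsFaceOf.nonempty (hF : IsFaceOf F P) : F.Nonempty := hF.1

theorem IsFaceOf.isClosed (hF : IsFaceOf F P) : IsClosed F := hF.2.1

theorem IsFaceOf.convex (hF : IsFaceOf F P) : Convex ℝ F := hF.2.2.1

theorem IsFaceOf.isExtreme (hF : IsFaceOf F P) : IsExtreme ℝ P F := hF.2.2.2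

theorem IsFaceOf.subset (hF : IsFaceOf F P) : F ⊆ P := hF.isExtreme.subset

theorem IsFaceOf.extremePoints_eq (hF : IsFaceOf F P) :
    F.extremePoints ℝ = F ∩ P.extremePoints ℝ :=
  hF.isExtreme.extremePoints_eq

theorem IsFaceOf.inter (hF : IsFaceOf F P) (hQ : IsFaceOf Q P) (h : (F ∩ Q).Nonempty) :
    IsFaceOf (F ∩ Q) P :=
  ⟨h, hF.isClosed.inter hQ.isClosed, hF.convex.inter hQ.convex, hF.isExtreme.inter hQ.isExtreme⟩

theorem IsFaceOf.trans (hR : IsFaceOf R Q) (hQ : IsFaceOf Q P) : IsFaceOf R P :=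
  ⟨hR.nonempty, hR.isClosed, hR.convex, hQ.isExtreme.trans hR.isExtreme⟩

theorem IsFaceOf.of_subset (hR : IsFaceOf R P) (hQ : IsFaceOf Q P) (h : R ⊆ Q) : IsFaceOf R Q :=
  ⟨hR.nonempty, hR.isClosed, hR.convex, hR.isExtreme.mono hQ.subset h⟩

theorem IsFaceOf.convexHull_inter_extremePoints (hF : IsFaceOf F P) (hP : IsPolytope P) :
    convexHull ℝ (F ∩ P.extremePoints ℝ) = F := by
  have hfin := hP.finite_extremePoints.subset (inter_subset_right (s := F))
  rw [← (hfin.isCompact_convexHull ℝ).isClosed.closure_eq, ← hF.extremePoints_eq]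
  exact closure_convexHull_extremePoints (hP.isCompact.of_isClosed_subset hF.isClosed hF.subset)
    hF.convex

theorem IsFaceOf.isPolytope (hF : IsFaceOf F P) (hP : IsPolytope P) : IsPolytope F := by
  have hfin := hP.finite_extremePoints.subset (inter_subset_right (s := F))
  exact ⟨hfin.toFinset, by rw [hfin.coe_toFinset, hF.convexHull_inter_extremePoints hP]⟩

theorem IsFaceOf.subset_of_inter_extremePoints_subset (hF : IsFaceOf F P) (hP : IsPolytope P)
    (hQ : Convex ℝ Q) (h : F ∩ P.extremePoints ℝ ⊆ Q) : F ⊆ Q := by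
  rw [← hF.convexHull_inter_extremePoints hP]
  exact convexHull_min h hQ

theorem IsFaceOf.eq_of_inter_extremePoints_eq (hF : IsFaceOf F P) (hP : IsPolytope P)
    (hQ : IsFaceOf Q P) (h : F ∩ P.extremePoints ℝ = Q ∩ P.extremePoints ℝ) : F = Q := by
  rw [← hF.convexHull_inter_extremePoints hP, h, hQ.convexHull_inter_extremePoints hP]

theorem IsFaceOf.inter_extremePoints_nonempty (hF : IsFaceOf F P) (hP : IsPolytope P) :
    (F ∩ P.extremePoints ℝ).Nonempty := by
  rw [← convexHull_nonempty_iff (𝕜 := ℝ), hF.convexHull_inter_extremePoints hP]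
  exact hF.nonempty

theorem IsPolytope.finite_faces (hP : IsPolytope P) : {F | IsFaceOf F P}.Finite := by
  refine Set.Finite.of_finite_image (f := fun F => F ∩ P.extremePoints ℝ) ?_
    fun F hF Q hQ h => IsFaceOf.eq_of_inter_extremePoints_eq hF hP hQ h
  refine hP.finite_extremePoints.finite_subsets.subset ?_
  rintro _ ⟨F, -, rfl⟩
  exact inter_subset_right

theorem isVertexOf_iff_mem_extremePoints {v : E3} : IsVertexOf v P ↔ v ∈ P.extremePoints ℝ :=
  ⟨fun h => isExtreme_singleton.1 h.isExtreme, fun h =>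
    ⟨singleton_nonempty v, isClosed_singleton, convex_singleton v, isExtreme_singleton.2 h⟩⟩

theorem isFaceOf_zeros {h : E3 →ᵃ[ℝ] ℝ} (hP : IsPolytope P) (hh : ∀ x ∈ P, 0 ≤ h x)
    (hne : ∃ x ∈ P, h x = 0) : IsFaceOf {x ∈ P | h x = 0} P := by
  refine ⟨hne, hP.isCompact.isClosed.inter (isClosed_singleton.preimage
    h.continuous_of_finiteDimensional), hP.convex.inter ((convex_singleton 0).affine_preimage h),
    sep_subset _ _, ?_⟩
  rintro x hx y hy _ ⟨-, hz⟩ ⟨a, b, ha, hb, hab, rfl⟩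
  rw [Convex.combo_affine_apply hab, smul_eq_mul, smul_eq_mul] at hz
  have hax := mul_nonneg ha.le (hh x hx)
  have hby := mul_nonneg hb.le (hh y hy)
  exact ⟨hx, (mul_eq_zero.1 (by linarith : a * h x = 0)).resolve_left ha.ne'⟩

theorem IsPolytope.affineMap_nonneg (hP : IsPolytope P) {h : E3 →ᵃ[ℝ] ℝ}
    (hh : ∀ x ∈ P.extremePoints ℝ, 0 ≤ h x) : ∀ x ∈ P, 0 ≤ h x := by
  intro x hx
  exact (hP.isFaceOf_self ⟨x, hx⟩).subset_of_inter_extremePoints_subset hP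
    ((convex_Ici 0).affine_preimage h) (fun y hy => hh y hy.2) hx

end Faces

section Dimension

variable {P Q R F : Set E3}

theorem setDim_mono (h : Q ⊆ P) : setDim Q ≤ setDim P :=
  Submodule.finrank_mono (vectorSpan_mono ℝ h)

theorem setDim_eq_zero_iff_subsingleton : setDim P = 0 ↔ P.Subsingleton := by
  rw [setDim, Submodule.finrank_eq_zero, vectorSpan_eq_bot_iff_subsingleton]

theorem setDim_singleton (v : E3) : setDim {v} = 0 :=
  setDim_eq_zero_iff_subsingleton.2 subsingleton_singleton

theorem exists_mem_openSegment_of_mem_intrinsicInterior {r q : E3}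
    (hr : r ∈ intrinsicInterior ℝ R) (hq : q ∈ affineSpan ℝ R) :
    ∃ s ∈ R, r ∈ openSegment ℝ q s := by
  obtain ⟨r, hinterior, rfl⟩ := mem_intrinsicInterior.1 hr
  let line : ℝ → affineSpan ℝ R := fun t =>
    ⟨AffineMap.lineMap q r t, AffineMap.lineMap_mem t hq r.2⟩
  have hline : Continuous line := AffineMap.lineMap_continuous.subtype_mk _
  have hnhds : line ⁻¹' ((↑) ⁻¹' R) ∈ nhds (1 : ℝ) :=
    hline.continuousAt (mem_interior_iff_mem_nhds.1 (by simpa [line] using hinterior))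
  obtain ⟨ε, hε, hball⟩ := Metric.mem_nhds_iff.1 hnhds
  have hmem : 1 + ε / 2 ∈ Metric.ball (1 : ℝ) ε := by
    rw [Metric.mem_ball, Real.dist_eq, add_sub_cancel_left, abs_of_pos (half_pos hε)]
    exact half_lt_self hε
  have hpos : 0 < 1 + ε / 2 := by positivity
  refine ⟨_, hball hmem, ?_⟩
  rw [openSegment_eq_image_lineMap]
  refine ⟨(1 + ε / 2)⁻¹, ⟨by positivity, inv_lt_one_of_one_lt₀ (by linarith)⟩, ?_⟩
  rw [AffineMap.lineMap_lineMap_right, inv_mul_cancel₀ hpos.ne', AffineMap.lineMap_apply_one]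

theorem IsFaceOf.mem_of_mem_affineSpan (hR : IsFaceOf R Q) {q : E3} (hq : q ∈ Q)
    (hspan : q ∈ affineSpan ℝ R) : q ∈ R := by
  obtain ⟨r, hr⟩ := hR.nonempty.intrinsicInterior hR.convex
  obtain ⟨s, hs, hrs⟩ := exists_mem_openSegment_of_mem_intrinsicInterior hr hspan
  exact hR.isExtreme.left_mem_of_mem_openSegment hq (hR.subset hs) (intrinsicInterior_subset hr) hrs

theorem IsFaceOf.eq_of_setDim_le (hR : IsFaceOf R Q) (hdim : setDim Q ≤ setDim R) : R = Q := by
  refine hR.subset.antisymm fun q hq => hR.mem_of_mem_affineSpan hq ?_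
  have hspan := Submodule.eq_of_le_of_finrank_le (vectorSpan_mono ℝ hR.subset) hdim
  obtain ⟨r, hr⟩ := hR.nonempty
  have hdir : q -ᵥ r ∈ (affineSpan ℝ R).direction := by
    rw [direction_affineSpan, hspan]
    exact vsub_mem_vectorSpan ℝ hq (hR.subset hr)
  exact (AffineSubspace.vsub_right_mem_direction_iff_mem (mem_affineSpan ℝ hr) q).1 hdir

theorem IsFaceOf.setDim_lt (hR : IsFaceOf R Q) (hne : R ≠ Q) : setDim R < setDim Q :=
  not_le.1 fun h => hne (hR.eq_of_setDim_le h)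

theorem IsFaceOf.eq_of_subset_of_setDim_le (hR : IsFaceOf R P) (hF : IsFaceOf F P) (h : R ⊆ F)
    (hdim : setDim F ≤ setDim R) : R = F :=
  (hR.of_subset hF h).eq_of_setDim_le hdim

end Dimension

section SupportingFunctionals

variable {P R F : Set E3}

theorem IsFaceOf.exists_affineMap (hF : IsFaceOf F P) (hP : IsPolytope P) :
    ∃ g : E3 →ᵃ[ℝ] ℝ, (∀ x ∈ P, 0 ≤ g x) ∧ ∀ x ∈ P, g x = 0 ↔ x ∈ F := by
  set S := P.extremePoints ℝ \ F
  have hS : convexHull ℝ S ⊆ P \ F := convexHull_min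
    (sdiff_subset_sdiff_left extremePoints_subset) (hF.isExtreme.convex_sdiff hP.convex)
  have hdisj : Disjoint (convexHull ℝ S) (affineSpan ℝ F : Set E3) :=
    disjoint_left.2 fun q hq hspan => (hS hq).2 (hF.mem_of_mem_affineSpan (hS hq).1 hspan)
  obtain ⟨f, a, b, hfS, hab, hfF⟩ := geometric_hahn_banach_compact_closed (convex_convexHull ℝ S)
    ((hP.finite_extremePoints.subset sdiff_subset).isCompact_convexHull ℝ) (affineSpan ℝ F).convex
    (affineSpan ℝ F).closed_of_finiteDimensional hdisj
  obtain ⟨r, hr⟩ := hF.nonempty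
  have hconst : ∀ x ∈ F, f x = f r := by
    intro x hx
    by_contra hne
    have hline := hfF _ (AffineMap.lineMap_mem ((b - f r) / (f x - f r)) (mem_affineSpan ℝ hr)
      (mem_affineSpan ℝ hx))
    rw [AffineMap.lineMap_apply, vsub_eq_sub, vadd_eq_add, map_add, map_smul, map_sub,
      smul_eq_mul, div_mul_cancel₀ _ (sub_ne_zero.2 hne)] at hline
    linarith
  have hSr : ∀ x ∈ S, f x < f r := fun x hx =>
    (hfS x (subset_convexHull ℝ S hx)).trans (hab.trans (hfF r (mem_affineSpan ℝ hr)))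
  let g : E3 →ᵃ[ℝ] ℝ := AffineMap.const ℝ E3 (f r) - f.toLinearMap.toAffineMap
  have hg : ∀ x, g x = f r - f x := fun _ => rfl
  have hnonneg : ∀ x ∈ P, 0 ≤ g x := by
    refine hP.affineMap_nonneg fun x hx => ?_
    rw [hg, sub_nonneg]
    by_cases hxF : x ∈ F
    · exact (hconst x hxF).le
    · exact (hSr x ⟨hx, hxF⟩).le
  refine ⟨g, hnonneg, fun x hx => ⟨fun hgx => ?_, fun hxF => ?_⟩⟩
  · refine (isFaceOf_zeros hP hnonneg ⟨r, hF.subset hr, sub_self _⟩)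
      |>.subset_of_inter_extremePoints_subset hP hF.convex ?_ ⟨hx, hgx⟩
    rintro y ⟨⟨-, hgy⟩, hy⟩
    by_contra hyF
    exact (hSr y ⟨hy, hyF⟩).ne (sub_eq_zero.1 hgy).symm
  · rw [hg, hconst x hxF, sub_self]

/- Tilts a supporting hyperplane about `R` until it hits a vertex outside `R`: the ratio `f / g`
is maximised over the finitely many such vertices. -/
theorem IsFaceOf.exists_pivot (hR : IsFaceOf R P) (hP : IsPolytope P) (hne : R ≠ P)
    {f g : E3 →ᵃ[ℝ] ℝ} (hg : ∀ x ∈ P, 0 ≤ g x) (hgR : ∀ x ∈ P, g x = 0 ↔ x ∈ R)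
    (hf : ∀ x ∈ R, f x = 0) :
    ∃ l : ℝ, (∀ x ∈ P, f x ≤ l * g x) ∧ ∃ y ∈ P, y ∉ R ∧ f y = l * g y := by
  have hself := hP.isFaceOf_self (hR.nonempty.mono hR.subset)
  have hout : (P.extremePoints ℝ \ R).Nonempty := by
    rw [nonempty_iff_ne_empty, Ne, sdiff_eq_empty]
    exact fun h => hne (hR.subset.antisymm
      (hself.subset_of_inter_extremePoints_subset hP hR.convex fun x hx => h hx.2))
  have hpos : ∀ x ∈ P, x ∉ R → 0 < g x := fun x hx hxR =>
    (hg x hx).lt_of_ne fun h => hxR ((hgR x hx).1 h.symm)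
  obtain ⟨y, ⟨hy, hyR⟩, hmax⟩ := exists_max_image _ (fun x => f x / g x)
    (hP.finite_extremePoints.subset sdiff_subset) hout
  let h : E3 →ᵃ[ℝ] ℝ := (f y / g y) • g - f
  have hh : ∀ x ∈ P, 0 ≤ h x := by
    refine hP.affineMap_nonneg fun x hx => sub_nonneg.2 (?_ : f x ≤ f y / g y * g x)
    by_cases hxR : x ∈ R
    · rw [hf x hxR, (hgR x hx.1).2 hxR, mul_zero]
    · exact (div_le_iff₀ (hpos x hx.1 hxR)).1 (hmax x ⟨hx, hxR⟩)
  exact ⟨f y / g y, fun x hx => sub_nonneg.1 (hh x hx), y, hy.1, hyR,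
    (div_mul_cancel₀ _ (hpos y hy.1 hyR).ne').symm⟩

theorem affineMap_linear_eq_zero_of_mem_vectorSpan {h : E3 →ᵃ[ℝ] ℝ} (hh : ∀ x ∈ F, h x = 0)
    {z : E3} (hz : z ∈ vectorSpan ℝ F) : h.linear z = 0 := by
  suffices vectorSpan ℝ F ≤ LinearMap.ker h.linear from this hz
  rw [vectorSpan_def, Submodule.span_le]
  rintro _ ⟨x, hx, y, hy, rfl⟩
  rw [SetLike.mem_coe, LinearMap.mem_ker, AffineMap.linearMap_vsub, hh x hx, hh y hy, vsub_self]

theorem exists_mem_vectorSpan_of_setDim (hdim : setDim R + 2 ≤ setDim P) (φ : E3 →ₗ[ℝ] ℝ) :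
    ∃ z ∈ vectorSpan ℝ P, φ z = 0 ∧ z ∉ vectorSpan ℝ R := by
  by_contra! h
  let ψ := φ.domRestrict (vectorSpan ℝ P)
  have hker : (LinearMap.ker ψ).map (vectorSpan ℝ P).subtype ≤ vectorSpan ℝ R := by
    rintro _ ⟨z, hz, rfl⟩
    exact h z z.2 hz
  have hle := Submodule.finrank_mono hker
  rw [Submodule.finrank_map_subtype_eq] at hle
  have hrange := (LinearMap.range ψ).finrank_le
  rw [Module.finrank_self] at hrange
  have hsum := ψ.finrank_range_add_finrank_ker
  unfold setDim at hdim
  omega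

theorem IsFaceOf.exists_pivot_face (hR : IsFaceOf R P) (hP : IsPolytope P) (hne : R ≠ P)
    {f g : E3 →ᵃ[ℝ] ℝ} (hg : ∀ x ∈ P, 0 ≤ g x) (hgR : ∀ x ∈ P, g x = 0 ↔ x ∈ R)
    (hf : ∀ x ∈ R, f x = 0) {z : E3} (hz : z ∈ vectorSpan ℝ P) (hgz : g.linear z = 0)
    (hfz : f.linear z ≠ 0) :
    ∃ (l : ℝ) (A : Set E3), IsFaceOf A P ∧ R ⊂ A ∧ A ⊂ P ∧ (∀ x ∈ P, f x ≤ l * g x) ∧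
      ∀ x ∈ P, x ∈ A ↔ f x = l * g x := by
  obtain ⟨l, hl, y, hyP, hyR, hy⟩ := hR.exists_pivot hP hne hg hgR hf
  let h : E3 →ᵃ[ℝ] ℝ := l • g - f
  have hface : IsFaceOf {x ∈ P | h x = 0} P :=
    isFaceOf_zeros hP (fun x hx => sub_nonneg.2 (hl x hx)) ⟨y, hyP, sub_eq_zero.2 hy.symm⟩
  have hRA : R ⊆ {x ∈ P | h x = 0} := fun x hx => by
    refine ⟨hR.subset hx, (?_ : l * g x - f x = 0)⟩
    rw [(hgR x (hR.subset hx)).2 hx, hf x hx, mul_zero, sub_zero]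
  refine ⟨l, _, hface, (ssubset_iff_of_subset hRA).2 ⟨y, ⟨hyP, sub_eq_zero.2 hy.symm⟩, hyR⟩,
    hface.subset.ssubset_of_ne fun heq => hfz ?_, hl,
    fun x hx => (and_iff_right hx).trans (sub_eq_zero.trans eq_comm)⟩
  have hlin := affineMap_linear_eq_zero_of_mem_vectorSpan (fun x hx => (heq.ge hx).2) hz
  rwa [AffineMap.sub_linear, AffineMap.smul_linear, LinearMap.sub_apply, LinearMap.smul_apply, hgz,
    smul_zero, zero_sub, neg_eq_zero] at hlin

theorem IsFaceOf.exists_ne_between (hR : IsFaceOf R P) (hP : IsPolytope P)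
    (hdim : setDim R + 2 ≤ setDim P) :
    ∃ A B, A ≠ B ∧ IsFaceOf A P ∧ IsFaceOf B P ∧ R ⊂ A ∧ A ⊂ P ∧ R ⊂ B ∧ B ⊂ P := by
  have hne : R ≠ P := by
    rintro rfl
    omega
  obtain ⟨g, hg, hgR⟩ := hR.exists_affineMap hP
  obtain ⟨z, hzP, hgz, hzR⟩ := exists_mem_vectorSpan_of_setDim hdim g.linear
  obtain ⟨φ, hφz, hφR⟩ := Submodule.exists_le_ker_of_notMem hzR
  obtain ⟨r, hr⟩ := hR.nonempty
  let f : E3 →ᵃ[ℝ] ℝ := φ.toAffineMap - AffineMap.const ℝ E3 (φ r)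
  have hfz : f.linear z ≠ 0 := by simpa [f] using hφz
  have hf : ∀ x ∈ R, f x = 0 := fun x hx => by
    have hφ := hφR (vsub_mem_vectorSpan ℝ hx hr)
    rwa [LinearMap.mem_ker, vsub_eq_sub, map_sub] at hφ
  obtain ⟨l, A, hA, hRA, hAP, hlA, hmemA⟩ := hR.exists_pivot_face hP hne hg hgR hf hzP hgz hfz
  obtain ⟨m, B, hB, hRB, hBP, hmB, hmemB⟩ := hR.exists_pivot_face hP hne hg hgR (f := -f)
    (fun x hx => neg_eq_zero.2 (hf x hx)) hzP hgz (neg_ne_zero.2 hfz)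
  refine ⟨A, B, ?_, hA, hB, hRA, hAP, hRB, hBP⟩
  rintro rfl
  obtain ⟨y, hyA, hyR⟩ := exists_of_ssubset hRA
  have hyP := hA.subset hyA
  have hly := (hmemA y hyP).1 hyA
  have hmy : -f y = m * g y := (hmemB y hyP).1 hyA
  have hml : m = -l := mul_right_cancel₀ (mt (hgR y hyP).1 hyR) (by linarith : m * g y = -l * g y)
  refine hAP.not_subset fun x hx => (hmemA x hx).2 ((hlA x hx).antisymm ?_)
  have hmx : -f x ≤ m * g x := hmB x hx
  rw [hml] at hmx
  linarith

end SupportingFunctionals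

section Edges

variable {P F e : Set E3} {v w : E3}

theorem IsFaceOf.exists_isFacetOf_superset (hF : IsFaceOf F P) (hP : IsPolytope P)
    (h3 : setDim P = 3) (hne : F ≠ P) : ∃ A, IsFacetOf A P ∧ F ⊆ A := by
  have hfin : {A | IsFaceOf A P ∧ A ≠ P ∧ F ⊆ A}.Finite := hP.finite_faces.subset fun A hA => hA.1
  obtain ⟨A, ⟨hA, hAP, hFA⟩, hmax⟩ := hfin.exists_maximal ⟨F, hF, hne, Subset.rfl⟩
  refine ⟨A, ⟨hA, ?_⟩, hFA⟩
  have hlt := hA.setDim_lt hAP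
  by_contra h2
  obtain ⟨B, -, -, hB, -, hAB, hBP, -⟩ := hA.exists_ne_between hP (by omega)
  exact hAB.not_subset (hmax ⟨hB, hBP.ne, hFA.trans hAB.subset⟩ hAB.subset)

theorem IsEdgeOf.exists_ne_isFacetOf (he : IsEdgeOf e P) (hP : IsPolytope P) (h3 : setDim P = 3) :
    ∃ A B, A ≠ B ∧ IsFacetOf A P ∧ IsFacetOf B P ∧ e ⊆ A ∧ e ⊆ B := by
  have hfacet : ∀ A, IsFaceOf A P → e ⊂ A → A ⊂ P → IsFacetOf A P := fun A hA heA hAP => by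
    have hlt := hA.setDim_lt hAP.ne
    have hgt := (he.1.of_subset hA heA.subset).setDim_lt heA.ne
    have hdim := he.2
    exact ⟨hA, by omega⟩
  obtain ⟨A, B, hAB, hA, hB, heA, hAP, heB, hBP⟩ :=
    he.1.exists_ne_between hP (by rw [he.2, h3])
  exact ⟨A, B, hAB, hfacet A hA heA hAP, hfacet B hB heB hBP, heA.subset, heB.subset⟩

theorem IsFacetOf.exists_ne_isEdgeOf (hF : IsFacetOf F P) (hP : IsPolytope P)
    (hv : v ∈ P.extremePoints ℝ) (hvF : v ∈ F) :
    ∃ e e', e ≠ e' ∧ (IsEdgeOf e P ∧ e ⊆ F ∧ v ∈ e) ∧ IsEdgeOf e' P ∧ e' ⊆ F ∧ v ∈ e' := by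
  have hvface : IsFaceOf {v} F :=
    (isVertexOf_iff_mem_extremePoints.2 hv).of_subset hF.1 (singleton_subset_iff.2 hvF)
  have hedge : ∀ e, IsFaceOf e F → {v} ⊂ e → e ⊂ F → IsEdgeOf e P ∧ e ⊆ F ∧ v ∈ e :=
    fun e he hve heF => by
      have hlt := he.setDim_lt heF.ne
      have hgt := (hvface.of_subset he hve.subset).setDim_lt hve.ne
      have hdim := hF.2
      exact ⟨⟨he.trans hF.1, by omega⟩, heF.subset, hve.subset rfl⟩
  obtain ⟨e, e', hne, he, he', hve, heF, hve', heF'⟩ :=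
    hvface.exists_ne_between (hF.1.isPolytope hP) (by rw [setDim_singleton, hF.2])
  exact ⟨e, e', hne, hedge e he hve heF, hedge e' he' hve' heF'⟩

theorem IsEdgeOf.inter_extremePoints_subset (he : IsEdgeOf e P)
    (hv : v ∈ e ∩ P.extremePoints ℝ) (hw : w ∈ e ∩ P.extremePoints ℝ) (hne : v ≠ w) :
    e ∩ P.extremePoints ℝ = {v, w} := by
  refine Subset.antisymm (fun z hz => ?_) (insert_subset hv (singleton_subset_iff.2 hw))
  by_contra hzvw
  obtain ⟨hzv, hzw⟩ := not_or.1 hzvw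
  have hbtw : ∀ {a b c}, a ∈ e → b ∈ P.extremePoints ℝ → c ∈ e → a ≠ b → c ≠ b → ¬ Wbtw ℝ a b c :=
    fun ha hb hc hab hcb h => ((mem_extremePoints_iff_forall_segment.1 hb).2 _ (he.1.subset ha) _
      (he.1.subset hc) (mem_segment_iff_wbtw.2 h)).elim hab hcb
  have hcol : Collinear ℝ {v, w, z} := (collinear_iff_finrank_le_one.2 he.2.le).subset
    (insert_subset hv.1 (insert_subset hw.1 (singleton_subset_iff.2 hz.1)))
  rcases hcol.wbtw_or_wbtw_or_wbtw with h | h | h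
  · exact hbtw hv.1 hw.2 hz.1 hne hzw h
  · exact hbtw hw.1 hz.2 hv.1 (Ne.symm hzw) (Ne.symm hzv) h
  · exact hbtw hz.1 hv.2 hw.1 hzv hne.symm h

theorem IsEdgeOf.exists_inter_extremePoints_eq (he : IsEdgeOf e P) (hP : IsPolytope P)
    (hv : v ∈ e ∩ P.extremePoints ℝ) : ∃ w, w ≠ v ∧ e ∩ P.extremePoints ℝ = {v, w} := by
  by_contra! h
  have heq : e ∩ P.extremePoints ℝ = {v} := eq_singleton_iff_unique_mem.2 ⟨hv, fun w hw => by
    by_contra hwv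
    exact h w hwv (he.inter_extremePoints_subset hv hw (Ne.symm hwv))⟩
  have hdim := he.2
  rw [← he.1.convexHull_inter_extremePoints hP, heq, convexHull_singleton, setDim_singleton] at hdim
  exact zero_ne_one hdim

theorem IsEdgeOf.eq_segment (he : IsEdgeOf e P) (hP : IsPolytope P)
    (h : e ∩ P.extremePoints ℝ = {v, w}) : e = segment ℝ v w := by
  rw [← he.1.convexHull_inter_extremePoints hP, h, convexHull_pair]

theorem IsPolytope.pos_of_forall_isFaceOf_eq (hP : IsPolytope P) (hv : v ∈ P.extremePoints ℝ)
    {f : E3 →ᵃ[ℝ] ℝ} (hfv : f v = 0)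
    (hmin : ∀ A, IsFaceOf A P → v ∈ A → (∃ x ∈ A, 0 < f x) → A = P) (hup : ∃ x ∈ P, 0 < f x) :
    ∀ z ∈ P, z ≠ v → 0 < f z := by
  obtain ⟨x, hxP, hx⟩ := hup
  have hvface : IsFaceOf {v} P := isVertexOf_iff_mem_extremePoints.2 hv
  have hne : {v} ≠ P := by
    rintro rfl
    rw [mem_singleton_iff.1 hxP, hfv] at hx
    exact hx.false
  obtain ⟨g, hg, hgv⟩ := hvface.exists_affineMap hP
  have hpos : ∀ z ∈ P, z ≠ v → 0 < g z := fun z hz hzv =>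
    (hg z hz).lt_of_ne fun h => hzv ((hgv z hz).1 h.symm)
  obtain ⟨l, hl, y, hyP, hyv, hy⟩ := hvface.exists_pivot hP hne hg hgv (f := f)
    (by rintro _ rfl; exact hfv)
  have hlpos : 0 < l := pos_of_mul_pos_left (hx.trans_le (hl x hxP)) (hg x hxP)
  let h : E3 →ᵃ[ℝ] ℝ := l • g - f
  have hface : IsFaceOf {z ∈ P | h z = 0} P :=
    isFaceOf_zeros hP (fun z hz => sub_nonneg.2 (hl z hz)) ⟨y, hyP, sub_eq_zero.2 hy.symm⟩
  have hvh : h v = 0 := by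
    refine (?_ : l * g v - f v = 0)
    rw [(hgv v hv.1).2 rfl, hfv, mul_zero, sub_zero]
  have heq := hmin _ hface ⟨hv.1, hvh⟩
    ⟨y, ⟨hyP, sub_eq_zero.2 hy.symm⟩, hy ▸ mul_pos hlpos (hpos y hyP hyv)⟩
  intro z hz hzv
  rw [← (sub_eq_zero.1 (heq.ge hz).2 : l * g z = f z)]
  exact mul_pos hlpos (hpos z hz hzv)

theorem IsPolytope.exists_isEdgeOf_lt (hP : IsPolytope P) (hv : v ∈ P.extremePoints ℝ)
    (φ : E3 →ₗ[ℝ] ℝ) (hup : ∃ x ∈ P, φ v < φ x) :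
    ∃ e, IsEdgeOf e P ∧ v ∈ e ∧ ∃ w ∈ e ∩ P.extremePoints ℝ, φ v < φ w := by
  let f : E3 →ᵃ[ℝ] ℝ := φ.toAffineMap - AffineMap.const ℝ E3 (φ v)
  have hf : ∀ {x}, 0 < f x ↔ φ v < φ x := sub_pos
  have hfin : {T | IsFaceOf T P ∧ v ∈ T ∧ ∃ x ∈ T, 0 < f x}.Finite :=
    hP.finite_faces.subset fun T hT => hT.1
  obtain ⟨T, ⟨hT, hvT, x, hxT, hx⟩, hmin⟩ := hfin.exists_minimal
    ⟨P, hP.isFaceOf_self ⟨v, hv.1⟩, hv.1, hup.imp fun x hx => hx.imp_right hf.2⟩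
  have hTP := hT.isPolytope hP
  have hvface : IsFaceOf {v} T :=
    (isVertexOf_iff_mem_extremePoints.2 hv).of_subset hT (singleton_subset_iff.2 hvT)
  have hrise : ∀ z ∈ T, z ≠ v → 0 < f z :=
    hTP.pos_of_forall_isFaceOf_eq (isVertexOf_iff_mem_extremePoints.1 hvface) (sub_self _)
      (fun A hA hvA hup => hA.subset.antisymm (hmin ⟨hA.trans hT, hvA, hup⟩ hA.subset)) ⟨x, hxT, hx⟩
  have hne : {v} ≠ T := by
    rintro rfl
    rw [mem_singleton_iff.1 hxT] at hx
    exact (hf.1 hx).false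
  have hedge : IsEdgeOf T P := by
    refine ⟨hT, ?_⟩
    have hdim := hvface.setDim_lt hne
    by_contra h1
    obtain ⟨A, -, -, hA, -, hvA, hAT, -⟩ := hvface.exists_ne_between hTP
      (by rw [setDim_singleton] at hdim ⊢; omega)
    obtain ⟨z, hzA, hzv⟩ := exists_of_ssubset hvA
    exact hAT.not_subset (hmin ⟨hA.trans hT, hvA.subset rfl, z, hzA, hrise z (hA.subset hzA) hzv⟩
      hAT.subset)
  obtain ⟨w, hwv, hw⟩ := hedge.exists_inter_extremePoints_eq hP ⟨hvT, hv⟩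
  have hwT : w ∈ T ∩ P.extremePoints ℝ := hw ▸ mem_insert_of_mem v rfl
  exact ⟨T, hedge, hvT, w, hwT, hf.1 (hrise w hwT.1 hwv)⟩

end Edges

/-! ### Facets of simple polytopes -/

section SimplePolytopes

variable {P A B C D e : Set E3} {v : E3}

theorem IsFacetOf.not_subset (hA : IsFacetOf A P) (hB : IsFacetOf B P) (hAB : A ≠ B) : ¬ A ⊆ B :=
  fun h => hAB (hA.1.eq_of_subset_of_setDim_le hB.1 h (hB.2.trans hA.2.symm).le)

theorem IsFacetOf.setDim_inter_le (hA : IsFacetOf A P) (hB : IsFacetOf B P) (hAB : A ≠ B)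
    (hne : (A ∩ B).Nonempty) : setDim (A ∩ B) ≤ 1 := by
  have hlt := ((hA.1.inter hB.1 hne).of_subset hA.1 inter_subset_left).setDim_lt
    fun h => hA.not_subset hB hAB (inter_eq_left.1 h)
  rw [hA.2] at hlt
  exact Nat.lt_succ_iff.1 hlt

theorem IsEdgeOf.eq_inter (he : IsEdgeOf e P) (hA : IsFacetOf A P) (hB : IsFacetOf B P)
    (hAB : A ≠ B) (heA : e ⊆ A) (heB : e ⊆ B) : e = A ∩ B := by
  have hne : (A ∩ B).Nonempty := he.1.nonempty.mono (subset_inter heA heB)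
  exact he.1.eq_of_subset_of_setDim_le (hA.1.inter hB.1 hne) (subset_inter heA heB)
    ((hA.setDim_inter_le hB hAB hne).trans he.2.ge)

theorem IsSimplePolytope3.exists_isFacetOf_ne (hS : IsSimplePolytope3 P) (he : IsEdgeOf e P)
    (A : Set E3) : ∃ B, IsFacetOf B P ∧ B ≠ A ∧ e ⊆ B := by
  obtain ⟨B, C, hBC, hB, hC, heB, heC⟩ := he.exists_ne_isFacetOf hS.1 hS.2.1
  by_cases h : B = A
  · exact ⟨C, hC, fun hCA => hBC (h.trans hCA.symm), heC⟩
  · exact ⟨B, hB, h, heB⟩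

theorem IsSimplePolytope3.eq_or_eq_or_eq (hS : IsSimplePolytope3 P) (hv : v ∈ P.extremePoints ℝ)
    (hA : IsFacetOf A P ∧ v ∈ A) (hB : IsFacetOf B P ∧ v ∈ B) (hC : IsFacetOf C P ∧ v ∈ C)
    (hAB : A ≠ B) (hAC : A ≠ C) (hBC : B ≠ C) (hD : IsFacetOf D P ∧ v ∈ D) :
    D = A ∨ D = B ∨ D = C := by
  have hcard := hS.2.2 v (isVertexOf_iff_mem_extremePoints.2 hv)
  have hsub : {A, B, C} ⊆ {F | IsFacetOf F P ∧ v ∈ F} :=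
    insert_subset hA (insert_subset hB (singleton_subset_iff.2 hC))
  have heq := eq_of_subset_of_ncard_le hsub
    (by rw [hcard, ncard_eq_three.2 ⟨A, B, C, hAB, hAC, hBC, rfl⟩])
    (finite_of_ncard_ne_zero (by rw [hcard]; exact three_ne_zero))
  simpa using heq.ge hD

theorem IsSimplePolytope3.exists_third (hS : IsSimplePolytope3 P) (hv : v ∈ P.extremePoints ℝ)
    (A B : Set E3) : ∃ C, (IsFacetOf C P ∧ v ∈ C) ∧ C ≠ A ∧ C ≠ B := by
  have hcard := hS.2.2 v (isVertexOf_iff_mem_extremePoints.2 hv)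
  obtain ⟨C, hC, hCAB⟩ := exists_mem_notMem_of_ncard_lt_ncard
    (s := {A, B}) (t := {F | IsFacetOf F P ∧ v ∈ F})
    ((ncard_insert_le A {B}).trans_lt (by rw [hcard, ncard_singleton]; exact Nat.lt_succ_self 2))
  exact ⟨C, hC, not_or.1 hCAB⟩

/- The two edges of `A` at `v` lie in two further facets, which can only be `B` and `C`. -/
theorem IsSimplePolytope3.isEdgeOf_inter_and_ne (hS : IsSimplePolytope3 P)
    (hv : v ∈ P.extremePoints ℝ) (hA : IsFacetOf A P ∧ v ∈ A) (hB : IsFacetOf B P ∧ v ∈ B)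
    (hC : IsFacetOf C P ∧ v ∈ C) (hAB : A ≠ B) (hAC : A ≠ C) (hBC : B ≠ C) :
    IsEdgeOf (A ∩ B) P ∧ A ∩ B ≠ A ∩ C := by
  have hedge : ∀ e, IsEdgeOf e P ∧ e ⊆ A ∧ v ∈ e → e = A ∩ B ∨ e = A ∩ C := by
    rintro e ⟨he, heA, hve⟩
    obtain ⟨D, hD, hDA, heD⟩ := hS.exists_isFacetOf_ne he A
    have heq := he.eq_inter hA.1 hD hDA.symm heA heD
    obtain rfl | rfl := (hS.eq_or_eq_or_eq hv hA hB hC hAB hAC hBC ⟨hD, heD hve⟩).resolve_left hDA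
    exacts [.inl heq, .inr heq]
  obtain ⟨e, e', hne, he, he'⟩ := hA.1.exists_ne_isEdgeOf hS.1 hv hA.2
  rcases hedge e he, hedge e' he' with ⟨rfl | rfl, rfl | rfl⟩
  exacts [(hne rfl).elim, ⟨he.1, hne⟩, ⟨he'.1, hne.symm⟩, (hne rfl).elim]

theorem IsSimplePolytope3.isEdgeOf_inter (hS : IsSimplePolytope3 P) (hA : IsFacetOf A P)
    (hB : IsFacetOf B P) (hAB : A ≠ B) (hne : (A ∩ B).Nonempty) : IsEdgeOf (A ∩ B) P := by
  obtain ⟨v, hvAB, hv⟩ := (hA.1.inter hB.1 hne).inter_extremePoints_nonempty hS.1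
  obtain ⟨C, hC, hCA, hCB⟩ := hS.exists_third hv A B
  exact (hS.isEdgeOf_inter_and_ne hv ⟨hA, hvAB.1⟩ ⟨hB, hvAB.2⟩ hC hAB hCA.symm hCB.symm).1

theorem IsSimplePolytope3.not_isEdgeOf_subset_three (hS : IsSimplePolytope3 P) (hA : IsFacetOf A P)
    (hB : IsFacetOf B P) (hC : IsFacetOf C P) (hAB : A ≠ B) (hAC : A ≠ C) (hBC : B ≠ C)
    (heA : e ⊆ A) (heB : e ⊆ B) (heC : e ⊆ C) : ¬ IsEdgeOf e P := by
  intro he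
  obtain ⟨v, hve, hv⟩ := he.1.inter_extremePoints_nonempty hS.1
  exact (hS.isEdgeOf_inter_and_ne hv ⟨hA, heA hve⟩ ⟨hB, heB hve⟩ ⟨hC, heC hve⟩ hAB hAC hBC).2
    ((he.eq_inter hA hB hAB heA heB).symm.trans (he.eq_inter hA hC hAC heA heC))

end SimplePolytopes

/-! ### The facet complex of a simple polytope -/

section FacetComplexOfPolytope

variable {P A B C : Set E3} {v : P.extremePoints ℝ}

theorem IsPolytope.finite_facets (hP : IsPolytope P) : {F | IsFacetOf F P}.Finite :=
  hP.finite_faces.subset fun _ h => h.1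

theorem IsPolytope.exists_linearMap_injOn (hP : IsPolytope P) :
    ∃ f : E3 →ₗ[ℝ] ℝ, InjOn f (P.extremePoints ℝ) := by
  have := hP.finite_extremePoints.to_subtype
  obtain ⟨f, hf⟩ := Module.exists_dual_forall_apply_ne_zero (K := ℝ)
    (fun p : {p : P.extremePoints ℝ × P.extremePoints ℝ // p.1 ≠ p.2} => (p.1.1 : E3) - p.1.2)
    fun p => sub_ne_zero.2 (Subtype.coe_injective.ne p.2)
  refine ⟨f, fun x hx y hy hxy => of_not_not fun hne => ?_⟩
  exact hf ⟨(⟨x, hx⟩, ⟨y, hy⟩), fun h => hne (congrArg Subtype.val h)⟩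
    (by rw [map_sub, hxy, sub_self])

/-- The vertices of `P` lying in `A`. -/
def IsPolytope.vertexSet (hP : IsPolytope P) (A : Set E3) : Finset (P.extremePoints ℝ) :=
  have := hP.finite_extremePoints.to_subtype
  {v : P.extremePoints ℝ | (v : E3) ∈ A}.toFinite.toFinset

open Classical in
/-- The vertex sets of the facets of `P`. -/
def IsPolytope.facetVertexSets (hP : IsPolytope P) : Finset (Finset (P.extremePoints ℝ)) :=
  hP.finite_facets.toFinset.image hP.vertexSet

theorem IsPolytope.mem_vertexSet (hP : IsPolytope P) : v ∈ hP.vertexSet A ↔ (v : E3) ∈ A := by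
  simp [vertexSet]

open Classical in
theorem IsPolytope.mem_vertexSet_inter (hP : IsPolytope P) :
    v ∈ hP.vertexSet A ∩ hP.vertexSet B ↔ (v : E3) ∈ A ∩ B := by
  rw [Finset.mem_inter, hP.mem_vertexSet, hP.mem_vertexSet, mem_inter_iff]

theorem IsPolytope.vertexSet_injOn (hP : IsPolytope P) :
    InjOn hP.vertexSet {F | IsFacetOf F P} := by
  intro A hA B hB h
  refine hA.1.eq_of_inter_extremePoints_eq hP hB.1 (ext fun x => and_congr_left fun hx => ?_)
  rw [← hP.mem_vertexSet (v := ⟨x, hx⟩), h, hP.mem_vertexSet]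

open Classical in
theorem IsFaceOf.vertexSet_inter_nonempty_iff (hA : IsFaceOf A P) (hB : IsFaceOf B P)
    (hP : IsPolytope P) : (hP.vertexSet A ∩ hP.vertexSet B).Nonempty ↔ (A ∩ B).Nonempty := by
  refine ⟨fun ⟨v, hv⟩ => ⟨v, hP.mem_vertexSet_inter.1 hv⟩, fun h => ?_⟩
  obtain ⟨v, hv, hvP⟩ := (hA.inter hB h).inter_extremePoints_nonempty hP
  exact ⟨⟨v, hvP⟩, hP.mem_vertexSet_inter.2 hv⟩

theorem IsPolytope.mem_facetVertexSets (hP : IsPolytope P) {X : Finset (P.extremePoints ℝ)} :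
    X ∈ hP.facetVertexSets ↔ ∃ A, IsFacetOf A P ∧ hP.vertexSet A = X := by
  simp [facetVertexSets]

open Classical in
theorem IsPolytope.card_filter_mem_facetVertexSets (hP : IsPolytope P) :
    (hP.facetVertexSets.filter (v ∈ ·)).card = {F | IsFacetOf F P ∧ (v : E3) ∈ F}.ncard := by
  have heq : (hP.facetVertexSets.filter (v ∈ ·) : Set (Finset (P.extremePoints ℝ))) =
      hP.vertexSet '' {F | IsFacetOf F P ∧ (v : E3) ∈ F} := by
    ext X
    rw [mem_image, Finset.mem_coe, Finset.mem_filter, hP.mem_facetVertexSets]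
    constructor
    · rintro ⟨⟨A, hA, rfl⟩, hv⟩
      exact ⟨A, ⟨hA, hP.mem_vertexSet.1 hv⟩, rfl⟩
    · rintro ⟨A, ⟨hA, hv⟩, rfl⟩
      exact ⟨⟨A, hA, rfl⟩, hP.mem_vertexSet.2 hv⟩
  rw [← ncard_coe_finset, heq, (hP.vertexSet_injOn.mono fun _ h => h.1).ncard_image]

open Classical in
theorem IsSimplePolytope3.exists_vertexSet_inter_eq_pair (hS : IsSimplePolytope3 P)
    (hA : IsFacetOf A P) (hB : IsFacetOf B P) (hAB : A ≠ B) (hvA : (v : E3) ∈ A)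
    (hvB : (v : E3) ∈ B) :
    ∃ w, w ≠ v ∧ hS.1.vertexSet A ∩ hS.1.vertexSet B = {v, w} ∧ A ∩ B = segment ℝ (v : E3) w := by
  have he := hS.isEdgeOf_inter hA hB hAB ⟨v, hvA, hvB⟩
  obtain ⟨w, hwv, hw⟩ := he.exists_inter_extremePoints_eq hS.1 ⟨⟨hvA, hvB⟩, v.2⟩
  have hwP : w ∈ P.extremePoints ℝ := (hw.ge (mem_insert_of_mem _ rfl)).2
  refine ⟨⟨w, hwP⟩, fun h => hwv (congrArg Subtype.val h), ?_, he.eq_segment hS.1 hw⟩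
  ext z
  have hz := Set.ext_iff.1 hw z
  rw [hS.1.mem_vertexSet_inter, Finset.mem_insert, Finset.mem_singleton, Subtype.ext_iff,
    Subtype.ext_iff]
  simpa only [mem_inter_iff, z.2, and_true, mem_insert_iff, mem_singleton_iff] using hz

theorem IsSimplePolytope3.eq_of_mem_three_facets (hS : IsSimplePolytope3 P)
    (hA : IsFacetOf A P) (hB : IsFacetOf B P) (hC : IsFacetOf C P) (hAB : A ≠ B) (hAC : A ≠ C)
    (hBC : B ≠ C) {x y : P.extremePoints ℝ} (hx : (x : E3) ∈ A ∩ B ∩ C)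
    (hy : (y : E3) ∈ A ∩ B ∩ C) : x = y := by
  by_contra hxy
  obtain ⟨w, -, hw, hseg⟩ := hS.exists_vertexSet_inter_eq_pair hA hB hAB hx.1.1 hx.1.2
  obtain rfl : y = w := by
    have hy' := hS.1.mem_vertexSet_inter.2 hy.1
    rw [hw, Finset.mem_insert, Finset.mem_singleton] at hy'
    exact hy'.resolve_left (Ne.symm hxy)
  refine hS.not_isEdgeOf_subset_three hA hB hC hAB hAC hBC inter_subset_left inter_subset_right ?_
    (hS.isEdgeOf_inter hA hB hAB ⟨x, hx.1⟩)
  rw [hseg]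
  exact hC.1.convex.segment_subset hx.2 hy.2

theorem IsSimplePolytope3.exists_facet_lt (hS : IsSimplePolytope3 P) (f : E3 →ₗ[ℝ] ℝ)
    (hA : IsFacetOf A P) (hv : (v : E3) ∈ A) (hlt : ∃ x ∈ A, f x < f v) :
    ∃ B, IsFacetOf B P ∧ B ≠ A ∧ (v : E3) ∈ B ∧
      ∃ w : P.extremePoints ℝ, (w : E3) ∈ A ∩ B ∧ f w < f v := by
  obtain ⟨e, he, hve, w, hw, hfw⟩ := (hA.1.isPolytope hS.1).exists_isEdgeOf_lt
    (hA.1.extremePoints_eq.ge ⟨hv, v.2⟩) (-f) (by simpa using hlt)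
  obtain ⟨B, hB, hBA, heB⟩ := hS.exists_isFacetOf_ne ⟨he.1.trans hA.1, he.2⟩ A
  exact ⟨B, hB, hBA, heB hve, ⟨w, (hA.1.extremePoints_eq.le hw.2).2⟩, ⟨he.1.subset hw.1, heB hw.1⟩,
    by simpa using hfw⟩

theorem IsSimplePolytope3.exists_facets_gt (hS : IsSimplePolytope3 P) (f : E3 →ₗ[ℝ] ℝ)
    (hlt : ∃ w : P.extremePoints ℝ, f v < f w) :
    ∃ A B, IsFacetOf A P ∧ IsFacetOf B P ∧ A ≠ B ∧ (v : E3) ∈ A ∩ B ∧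
      ∃ w : P.extremePoints ℝ, (w : E3) ∈ A ∩ B ∧ f v < f w := by
  obtain ⟨x, hx⟩ := hlt
  obtain ⟨e, he, hve, w, hw, hfw⟩ :=
    hS.1.exists_isEdgeOf_lt v.2 f ⟨x, extremePoints_subset x.2, hx⟩
  obtain ⟨A, B, hAB, hA, hB, heA, heB⟩ := he.exists_ne_isFacetOf hS.1 hS.2.1
  exact ⟨A, B, hA, hB, hAB, ⟨heA hve, heB hve⟩, ⟨w, hw.2⟩, ⟨heA hw.1, heB hw.1⟩, hfw⟩

open Classical in
/-- The facet complex of a simple 3-polytope `P`, on the vertices of `P`. -/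
def IsSimplePolytope3.facetComplex (hS : IsSimplePolytope3 P) :
    FacetComplex (P.extremePoints ℝ) where
  facets := hS.1.facetVertexSets
  height v := hS.1.exists_linearMap_injOn.choose v
  height_injective x y h := Subtype.ext (hS.1.exists_linearMap_injOn.choose_spec x.2 y.2 h)
  card_facets_at v := hS.1.card_filter_mem_facetVertexSets.trans
    (hS.2.2 v (isVertexOf_iff_mem_extremePoints.2 v.2))
  exists_inter_eq_pair := by
    simp only [hS.1.mem_facetVertexSets]
    rintro _ ⟨A, hA, rfl⟩ _ ⟨B, hB, rfl⟩ hne v hvA hvB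
    obtain ⟨w, hwv, hw, -⟩ := hS.exists_vertexSet_inter_eq_pair hA hB (ne_of_apply_ne _ hne)
      (hS.1.mem_vertexSet.1 hvA) (hS.1.mem_vertexSet.1 hvB)
    exact ⟨w, hwv, hw⟩
  eq_of_mem_three := by
    simp only [hS.1.mem_facetVertexSets, Finset.mem_inter]
    rintro _ ⟨A, hA, rfl⟩ _ ⟨B, hB, rfl⟩ _ ⟨C, hC, rfl⟩ hAB hAC hBC x hx y hy
    simp only [hS.1.mem_vertexSet] at hx hy
    exact hS.eq_of_mem_three_facets hA hB hC (ne_of_apply_ne _ hAB) (ne_of_apply_ne _ hAC)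
      (ne_of_apply_ne _ hBC) hx hy
  exists_lower := by
    simp only [hS.1.mem_facetVertexSets]
    rintro _ ⟨A, hA, rfl⟩ v hv ⟨x, hxA, hx⟩
    obtain ⟨B, hB, hBA, hvB, w, hw, hlt⟩ := hS.exists_facet_lt _ hA (hS.1.mem_vertexSet.1 hv)
      ⟨x, hS.1.mem_vertexSet.1 hxA, hx⟩
    exact ⟨_, ⟨B, hB, rfl⟩, hS.1.vertexSet_injOn.ne hB hA hBA, hS.1.mem_vertexSet.2 hvB, w,
      hS.1.mem_vertexSet_inter.2 hw, hlt⟩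
  exists_higher := by
    simp only [hS.1.mem_facetVertexSets]
    intro v hv
    obtain ⟨A, B, hA, hB, hAB, hvAB, w, hw, hlt⟩ := hS.exists_facets_gt _ hv
    exact ⟨_, ⟨A, hA, rfl⟩, _, ⟨B, hB, rfl⟩, hS.1.vertexSet_injOn.ne hA hB hAB,
      hS.1.mem_vertexSet_inter.2 hvAB, w, hS.1.mem_vertexSet_inter.2 hw, hlt⟩

theorem IsSimplePolytope3.vertexSet_mem_facets (hS : IsSimplePolytope3 P) (hA : IsFacetOf A P) :
    hS.1.vertexSet A ∈ hS.facetComplex.facets :=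
  hS.1.mem_facetVertexSets.2 ⟨A, hA, rfl⟩

theorem IsSimplePolytope3.exists_vertexSet_eq (hS : IsSimplePolytope3 P)
    {X : Finset (P.extremePoints ℝ)} (hX : X ∈ hS.facetComplex.facets) :
    ∃ A, IsFacetOf A P ∧ hS.1.vertexSet A = X :=
  hS.1.mem_facetVertexSets.1 hX

theorem IsSimplePolytope3.setOf_isEdgeOf_subset (hS : IsSimplePolytope3 P) (hA : IsFacetOf A P) :
    {e | IsEdgeOf e P ∧ e ⊆ A} =
      (A ∩ ·) '' {B | IsFacetOf B P ∧ B ≠ A ∧ (A ∩ B).Nonempty} := by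
  ext e
  constructor
  · rintro ⟨he, heA⟩
    obtain ⟨B, hB, hBA, heB⟩ := hS.exists_isFacetOf_ne he A
    exact ⟨B, ⟨hB, hBA, he.1.nonempty.mono (subset_inter heA heB)⟩,
      (he.eq_inter hA hB hBA.symm heA heB).symm⟩
  · rintro ⟨B, ⟨hB, hBA, hne⟩, rfl⟩
    exact ⟨hS.isEdgeOf_inter hA hB hBA.symm hne, inter_subset_left⟩

theorem IsSimplePolytope3.injOn_inter (hS : IsSimplePolytope3 P) (hA : IsFacetOf A P) :
    InjOn (A ∩ ·) {B | IsFacetOf B P ∧ B ≠ A ∧ (A ∩ B).Nonempty} := by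
  rintro B ⟨hB, hBA, hne⟩ C ⟨hC, hCA, -⟩ h
  by_contra hBC
  exact hS.not_isEdgeOf_subset_three hA hB hC hBA.symm hCA.symm hBC inter_subset_left
    inter_subset_right (h.le.trans inter_subset_right) (hS.isEdgeOf_inter hA hB hBA.symm hne)

theorem IsSimplePolytope3.facetEdges_eq_card (hS : IsSimplePolytope3 P) (hA : IsFacetOf A P) :
    facetEdges P A = (hS.1.vertexSet A).card := by
  have hmeet : ((hS.facetComplex.facets.filter fun X =>
      X ≠ hS.1.vertexSet A ∧ (hS.1.vertexSet A ∩ X).Nonempty : Finset _) : Set (Finset _)) =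
      hS.1.vertexSet '' {B | IsFacetOf B P ∧ B ≠ A ∧ (A ∩ B).Nonempty} := by
    ext X
    rw [Finset.mem_coe, Finset.mem_filter]
    constructor
    · rintro ⟨hX, hne, hmeet⟩
      obtain ⟨B, hB, rfl⟩ := hS.exists_vertexSet_eq hX
      exact ⟨B, ⟨hB, ne_of_apply_ne _ hne,
        (hA.1.vertexSet_inter_nonempty_iff hB.1 hS.1).1 hmeet⟩, rfl⟩
    · rintro ⟨B, ⟨hB, hBA, hne⟩, rfl⟩
      exact ⟨hS.vertexSet_mem_facets hB, hS.1.vertexSet_injOn.ne hB hA hBA,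
        (hA.1.vertexSet_inter_nonempty_iff hB.1 hS.1).2 hne⟩
  rw [← FacetComplex.card_filter_meeting (hS.vertexSet_mem_facets hA), ← ncard_coe_finset, hmeet,
    (hS.1.vertexSet_injOn.mono fun _ h => h.1).ncard_image, facetEdges,
    hS.setOf_isEdgeOf_subset hA, (hS.injOn_inter hA).ncard_image]

end FacetComplexOfPolytope

/-! ### Walking round a facet -/

section Boundary

theorem iterate_nxt_val {k : ℕ} (n : ℕ) (i : Fin k) : (nxt^[n] i).1 = (i.1 + n) % k := by
  induction n with
  | zero => exact (Nat.mod_eq_of_lt i.2).symm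
  | succ n ih =>
    rw [Function.iterate_succ_apply']
    change ((nxt^[n] i).1 + 1) % k = _
    rw [ih, Nat.mod_add_mod, Nat.add_assoc]

theorem exists_iterate_nxt_eq {k : ℕ} (i j : Fin k) : ∃ n, nxt^[n] i = j := by
  refine ⟨j + (k - i), Fin.ext ?_⟩
  rw [iterate_nxt_val, Nat.add_left_comm, Nat.add_sub_cancel' i.2.le, Nat.add_mod_right,
    Nat.mod_eq_of_lt j.2]

theorem nxt_surjective {k : ℕ} : Function.Surjective (nxt : Fin k → Fin k) := by
  intro j
  obtain ⟨n, hn⟩ := exists_iterate_nxt_eq (nxt j) j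
  exact ⟨nxt^[n] j, (Function.iterate_succ_apply' nxt n j).symm.trans hn⟩

theorem nxt_ne {k : ℕ} (hk : 2 ≤ k) (i : Fin k) : nxt i ≠ i := by
  intro h
  have hval : (i.1 + 1) % k = i := congrArg Fin.val h
  rcases (Nat.succ_le_of_lt i.2).eq_or_lt with hi | hi
  · rw [← Nat.succ_eq_add_one, hi, Nat.mod_self] at hval
    omega
  · rw [Nat.mod_eq_of_lt hi] at hval
    omega

theorem IsLoop.ne_nxt {P : Set E3} {k : ℕ} {B : Fin k → Set E3} (hB : IsLoop P B) (hk : 2 ≤ k)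
    (i : Fin k) : B i ≠ B (nxt i) := by
  intro h
  have hdim := (hB.2.2 hk i).2
  rw [← h, inter_self, (hB.2.1 i).2] at hdim
  exact absurd hdim (by decide)

variable {P A F R : Set E3}

theorem subset_of_isExtreme_of_mem_intrinsicInterior (hR : IsExtreme ℝ F R) {r : E3}
    (hr : r ∈ intrinsicInterior ℝ F) (hrR : r ∈ R) : F ⊆ R := by
  intro q hq
  obtain ⟨s, hs, hqs⟩ := exists_mem_openSegment_of_mem_intrinsicInterior hr (mem_affineSpan ℝ hq)
  exact hR.left_mem_of_mem_openSegment hq hs hrR hqs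

theorem IsFaceOf.isExtreme_inter_right (hA : IsFaceOf A P) (hF : IsFaceOf F P) :
    IsExtreme ℝ A (A ∩ F) :=
  (hA.isExtreme.inter hF.isExtreme).mono hA.subset inter_subset_left

theorem IsFaceOf.convex_sdiff (hA : IsFaceOf A P) (hF : IsFaceOf F P) : Convex ℝ (A \ F) := by
  rw [← sdiff_self_inter]
  exact (hA.isExtreme_inter_right hF).convex_sdiff hA.convex

theorem IsFacetOf.intrinsicInterior_subset_sdiff (hA : IsFacetOf A P) (hF : IsFacetOf F P)
    (hAF : A ≠ F) : intrinsicInterior ℝ A ⊆ A \ F := by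
  refine fun x hx => ⟨intrinsicInterior_subset hx, fun hxF => hA.not_subset hF hAF ?_⟩
  exact (subset_of_isExtreme_of_mem_intrinsicInterior (hA.1.isExtreme_inter_right hF.1) hx
    ⟨intrinsicInterior_subset hx, hxF⟩).trans inter_subset_right

theorem IsFacetOf.subset_frontier (hA : IsFacetOf A P) (h3 : setDim P = 3) : A ⊆ frontier P := by
  refine fun x hx => ⟨subset_closure (hA.1.subset hx), fun hinterior => ?_⟩
  have hdim := setDim_mono (subset_of_isExtreme_of_mem_intrinsicInterior hA.1.isExtreme
    (interior_subset_intrinsicInterior hinterior) hx)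
  rw [h3, hA.2] at hdim
  exact absurd hdim (by decide)

theorem IsPolytope.interior_nonempty (hP : IsPolytope P) (h3 : setDim P = 3) :
    (interior P).Nonempty := by
  have hne : P.Nonempty := by
    rw [nonempty_iff_ne_empty]
    rintro rfl
    rw [setDim, vectorSpan_empty, finrank_bot] at h3
    exact absurd h3 (by decide)
  rw [hP.convex.interior_nonempty_iff_affineSpan_eq_top,
    AffineSubspace.affineSpan_eq_top_iff_vectorSpan_eq_top_of_nonempty ℝ _ _ hne]
  exact Submodule.eq_top_of_finrank_eq (by rw [finrank_euclideanSpace_fin]; exact h3)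

theorem IsPolytope.exists_isFacetOf_of_mem_frontier (hP : IsPolytope P) (h3 : setDim P = 3)
    {x : E3} (hx : x ∈ frontier P) : ∃ A, IsFacetOf A P ∧ x ∈ A := by
  have hxP : x ∈ P := hP.isCompact.isClosed.frontier_subset hx
  have hinterior := hP.interior_nonempty h3
  obtain ⟨f, hf⟩ := geometric_hahn_banach_open_point hP.convex.interior isOpen_interior hx.2
  have hle : P ⊆ {y | f y ≤ f x} := by
    refine subset_closure.trans ?_
    rw [← hP.convex.closure_interior_eq_closure_of_nonempty_interior hinterior]
    exact closure_minimal (fun y hy => (hf y hy).le) (isClosed_le f.continuous continuous_const)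
  let h : E3 →ᵃ[ℝ] ℝ := AffineMap.const ℝ E3 (f x) - f.toLinearMap.toAffineMap
  have hface : IsFaceOf {y | y ∈ P ∧ h y = 0} P :=
    isFaceOf_zeros hP (fun y hy => sub_nonneg.2 (hle hy)) ⟨x, hxP, sub_self _⟩
  obtain ⟨y, hy⟩ := hinterior
  obtain ⟨A, hA, hsub⟩ := hface.exists_isFacetOf_superset hP h3
    fun heq => (hf y hy).ne' (sub_eq_zero.1 (heq.ge (interior_subset hy)).2)
  exact ⟨A, hA, hsub ⟨hxP, sub_self _⟩⟩

/-- The loop `B` of facets runs once round the facet `F` of `P`: `u i` is the common vertex of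
`F`, `B i` and `B (nxt i)`, and these are all the vertices of `F`. -/
structure RunsRound (P F : Set E3) {k : ℕ} (B : Fin k → Set E3) (u : Fin k → E3) : Prop where
  three_le : 3 ≤ k
  isFacetOf : IsFacetOf F P
  isLoop : IsLoop P B
  ne_facet : ∀ i, B i ≠ F
  injective : Function.Injective u
  mem_facet : ∀ i, u i ∈ F
  mem : ∀ i, u i ∈ B i
  mem_nxt : ∀ i, u i ∈ B (nxt i)
  range_eq : range u = F ∩ P.extremePoints ℝ

namespace RunsRound

/-- The boundary of a facet, traced through its vertices `u`. -/
def boundary {k : ℕ} (u : Fin k → E3) : Set E3 := ⋃ i, segment ℝ (u i) (u (nxt i))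

variable {k : ℕ} {B : Fin k → Set E3} {u : Fin k → E3} {x : E3}

theorem two_le (h : RunsRound P F B u) : 2 ≤ k := (Nat.le_succ 2).trans h.three_le

theorem mem_extremePoints (h : RunsRound P F B u) (i : Fin k) : u i ∈ P.extremePoints ℝ :=
  (h.range_eq.le (mem_range_self i)).2

theorem isEdgeOf_inter (h : RunsRound P F B u) (hS : IsSimplePolytope3 P) (i : Fin k) :
    IsEdgeOf (F ∩ B i) P :=
  hS.isEdgeOf_inter h.isFacetOf (h.isLoop.2.1 i) (h.ne_facet i).symm ⟨u i, h.mem_facet i, h.mem i⟩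

theorem segment_eq (h : RunsRound P F B u) (hS : IsSimplePolytope3 P) (i : Fin k) :
    segment ℝ (u i) (u (nxt i)) = F ∩ B (nxt i) := by
  have he := h.isEdgeOf_inter hS (nxt i)
  obtain ⟨w, -, hw⟩ := he.exists_inter_extremePoints_eq hS.1
    ⟨⟨h.mem_facet i, h.mem_nxt i⟩, h.mem_extremePoints i⟩
  have hnxt := hw.le ⟨⟨h.mem_facet (nxt i), h.mem (nxt i)⟩, h.mem_extremePoints (nxt i)⟩
  obtain rfl : u (nxt i) = w := hnxt.resolve_left (h.injective.ne (nxt_ne h.two_le i))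
  exact (he.eq_segment hS.1 hw).symm

theorem isSimpleEdgeCycleVia (h : RunsRound P F B u) (hS : IsSimplePolytope3 P) :
    IsSimpleEdgeCycleVia P (boundary u) u :=
  ⟨h.three_le, h.injective, fun i => isVertexOf_iff_mem_extremePoints.2 (h.mem_extremePoints i),
    fun i => by rw [h.segment_eq hS]; exact h.isEdgeOf_inter hS (nxt i), rfl⟩

theorem boundary_eq (h : RunsRound P F B u) (hS : IsSimplePolytope3 P) :
    boundary u = ⋃ i, F ∩ B i := by
  simp only [boundary, h.segment_eq hS]
  exact nxt_surjective.iUnion_comp fun i => F ∩ B i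

theorem boundary_subset (h : RunsRound P F B u) (hS : IsSimplePolytope3 P) : boundary u ⊆ F := by
  rw [h.boundary_eq hS]
  exact iUnion_subset fun _ => inter_subset_left

theorem inter_subset_boundary (h : RunsRound P F B u) (hS : IsSimplePolytope3 P)
    (hA : IsFacetOf A P) (hAF : A ≠ F) : F ∩ A ⊆ boundary u := by
  rcases (F ∩ A).eq_empty_or_nonempty with hemp | hne
  · exact hemp ▸ empty_subset _
  obtain ⟨x, ⟨hxF, hxA⟩, hx⟩ := (h.isFacetOf.1.inter hA.1 hne).inter_extremePoints_nonempty hS.1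
  obtain ⟨i, rfl⟩ := h.range_eq.ge ⟨hxF, hx⟩
  have hB := h.isLoop.2.1
  rw [h.boundary_eq hS]
  obtain rfl | rfl | rfl := hS.eq_or_eq_or_eq hx ⟨h.isFacetOf, hxF⟩ ⟨hB i, h.mem i⟩
    ⟨hB (nxt i), h.mem_nxt i⟩ (h.ne_facet i).symm (h.ne_facet (nxt i)).symm
    (h.isLoop.ne_nxt h.two_le i) ⟨hA, hxA⟩
  · exact (hAF rfl).elim
  · exact subset_iUnion (fun j => F ∩ B j) i
  · exact subset_iUnion (fun j => F ∩ B j) (nxt i)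

theorem iUnion_sdiff_subset (h : RunsRound P F B u) (hS : IsSimplePolytope3 P) :
    ⋃ i, B i \ F ⊆ frontier P \ boundary u :=
  iUnion_subset fun i _ hx =>
    ⟨(h.isLoop.2.1 i).subset_frontier hS.2.1 hx.1, fun hγ => hx.2 (h.boundary_subset hS hγ)⟩

theorem isPreconnected_iUnion_sdiff (h : RunsRound P F B u) (hS : IsSimplePolytope3 P) :
    IsPreconnected (⋃ i, B i \ F) := by
  have hB := h.isLoop.2.1
  have hmeet (i : Fin k) : ((B i \ F) ∩ (B (nxt i) \ F)).Nonempty := by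
    by_contra hemp
    refine hS.not_isEdgeOf_subset_three h.isFacetOf (hB i) (hB (nxt i)) (h.ne_facet i).symm
      (h.ne_facet (nxt i)).symm (h.isLoop.ne_nxt h.two_le i) (fun x hx => ?_) inter_subset_left
      inter_subset_right (h.isLoop.2.2 h.two_le i)
    exact of_not_not fun hxF => hemp ⟨x, ⟨hx.1, hxF⟩, hx.2, hxF⟩
  refine IsPreconnected.iUnion_of_reflTransGen
    (fun i => ((hB i).1.convex_sdiff h.isFacetOf.1).isPreconnected) fun i j => ?_
  obtain ⟨n, rfl⟩ := exists_iterate_nxt_eq i j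
  induction n with
  | zero => exact .refl
  | succ n ih =>
    rw [Function.iterate_succ_apply']
    exact ih.tail (hmeet _)

theorem iInter_sdiff_subset (h : RunsRound P F B u) (hS : IsSimplePolytope3 P) :
    ⋂ i, F \ B i ⊆ frontier P \ boundary u := by
  intro x hx
  rw [mem_iInter] at hx
  refine ⟨h.isFacetOf.subset_frontier hS.2.1 (hx ⟨0, h.isLoop.1⟩).1, fun hγ => ?_⟩
  rw [h.boundary_eq hS] at hγ
  obtain ⟨i, hi⟩ := mem_iUnion.1 hγ
  exact (hx i).2 hi.2

theorem intrinsicInterior_subset_iInter (h : RunsRound P F B u) :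
    intrinsicInterior ℝ F ⊆ ⋂ i, F \ B i :=
  subset_iInter fun i =>
    h.isFacetOf.intrinsicInterior_subset_sdiff (h.isLoop.2.1 i) (h.ne_facet i).symm

/- Within the boundary of `P`, the facet `F` and the union of the other facets are closed sets
meeting only in the boundary of `F`. -/
theorem not_isPreconnected (h : RunsRound P F B u) (hS : IsSimplePolytope3 P) {C : Set E3}
    (hC : C ⊆ frontier P \ boundary u) (hCF : (C ∩ F).Nonempty) {i : Fin k}
    (hCB : (C ∩ B i).Nonempty) : ¬ IsPreconnected C := by
  intro hpre
  have hclosed : IsClosed (⋃ A ∈ {A | IsFacetOf A P ∧ A ≠ F}, A) :=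
    (hS.1.finite_facets.subset fun _ hA => hA.1).isClosed_biUnion fun A hA => hA.1.1.isClosed
  have hcover : C ⊆ F ∪ ⋃ A ∈ {A | IsFacetOf A P ∧ A ≠ F}, A := by
    intro x hx
    obtain ⟨A, hA, hxA⟩ := hS.1.exists_isFacetOf_of_mem_frontier hS.2.1 (hC hx).1
    rcases eq_or_ne A F with rfl | hAF
    · exact .inl hxA
    · exact .inr (mem_biUnion ⟨hA, hAF⟩ hxA)
  obtain ⟨x, hxC, hxF, hxU⟩ := isPreconnected_closed_iff.1 hpre F _ h.isFacetOf.1.isClosed hclosed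
    hcover hCF (hCB.mono (inter_subset_inter_right _
      (subset_biUnion_of_mem (u := id) ⟨h.isLoop.2.1 i, h.ne_facet i⟩)))
  obtain ⟨A, hA, hxA⟩ := mem_iUnion₂.1 hxU
  exact (hC hxC).2 (h.inter_subset_boundary hS hA.1 hA.2 ⟨hxF, hxA⟩)

theorem walksRound (h : RunsRound P F B u) (hS : IsSimplePolytope3 P)
    (hx : x ∈ ⋃ i, B i \ F) :
    WalksRound P (boundary u) (connectedComponentIn (frontier P \ boundary u) x) B := by
  refine ⟨h.isLoop, fun i => ?_, k, u, nxt, h.isSimpleEdgeCycleVia hS,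
    fun i => (h.segment_eq hS i).trans_subset inter_subset_right, fun _ => .inr rfl,
    nxt_surjective, fun _ => ?_⟩
  · refine Subset.trans ?_ ((h.isPreconnected_iUnion_sdiff hS).subset_connectedComponentIn hx
      (h.iUnion_sdiff_subset hS))
    exact ((h.isLoop.2.1 i).intrinsicInterior_subset_sdiff h.isFacetOf (h.ne_facet i)).trans
      (subset_iUnion (fun i => B i \ F) i)
  · rw [Finset.filter_true_of_mem fun i _ => nxt_ne h.two_le (nxt i), Finset.card_fin]

theorem walksRound_const (h : RunsRound P F B u) (hS : IsSimplePolytope3 P)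
    (hx : x ∈ intrinsicInterior ℝ F) :
    WalksRound P (boundary u) (connectedComponentIn (frontier P \ boundary u) x)
      fun _ : Fin 1 => F := by
  refine ⟨⟨one_pos, fun _ => h.isFacetOf, fun h => absurd h (by decide)⟩, fun _ => ?_, k, u,
    fun _ => 0, h.isSimpleEdgeCycleVia hS,
    fun i => (h.segment_eq hS i).trans_subset inter_subset_left, fun _ => .inl rfl,
    fun i => ⟨⟨0, h.isLoop.1⟩, Subsingleton.elim _ _⟩, fun h => absurd h (by decide)⟩
  have hconv : Convex ℝ (⋂ i, F \ B i) :=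
    convex_iInter fun i => h.isFacetOf.1.convex_sdiff (h.isLoop.2.1 i).1
  exact h.intrinsicInterior_subset_iInter.trans (hconv.isPreconnected.subset_connectedComponentIn
    (h.intrinsicInterior_subset_iInter hx) (h.iInter_sdiff_subset hS))

theorem surrounds (h : RunsRound P F B u) (hS : IsSimplePolytope3 P) : Surrounds P B F := by
  let i : Fin k := ⟨0, h.isLoop.1⟩
  obtain ⟨x, hxB, hxF⟩ := not_subset.1 ((h.isLoop.2.1 i).not_subset h.isFacetOf (h.ne_facet i))
  obtain ⟨y, hy⟩ := h.isFacetOf.1.nonempty.intrinsicInterior h.isFacetOf.1.convex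
  have hxU : x ∈ ⋃ i, B i \ F := mem_iUnion.2 ⟨i, hxB, hxF⟩
  have hxγ := h.iUnion_sdiff_subset hS hxU
  have hyγ := h.iInter_sdiff_subset hS (h.intrinsicInterior_subset_iInter hy)
  refine ⟨h.isFacetOf, boundary u, connectedComponentIn _ x, connectedComponentIn _ y,
    ⟨x, hxγ, rfl⟩, ⟨y, hyγ, rfl⟩, fun heq => ?_, h.walksRound hS hxU, h.walksRound_const hS hy⟩
  exact h.not_isPreconnected hS (connectedComponentIn_subset _ x)
    ⟨y, heq ▸ mem_connectedComponentIn hyγ, intrinsicInterior_subset hy⟩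
    ⟨x, mem_connectedComponentIn hxγ, hxB⟩ isPreconnected_connectedComponentIn

end RunsRound

end Boundary

/-! ### Belts of four facets -/

section FourBelts

variable {P F : Set E3}

theorem IsSimplePolytope3.isBelt_four_iff (hS : IsSimplePolytope3 P) {B : Fin 4 → Set E3}
    (hB : ∀ i, IsFacetOf (B i) P) : IsBelt P B ↔
      (∀ i, (B i ∩ B (nxt i)).Nonempty) ∧ ∀ i, Disjoint (B i) (B (nxt (nxt i))) := by
  constructor
  · rintro ⟨-, hL, -, hmeet⟩
    refine ⟨fun i => (hL.2.2 (by decide) i).1.nonempty, fun i => ?_⟩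
    rw [disjoint_iff_inter_eq_empty, ← not_nonempty_iff_eq_empty, hmeet le_rfl]
    all_goals
      revert i
      decide
  · rintro ⟨hmeet, hdisj⟩
    have hne (i) : B i ≠ B (nxt i) := fun h =>
      not_disjoint_iff_nonempty_inter.2 (hmeet (nxt i)) (h ▸ hdisj i)
    refine ⟨by decide,
      ⟨by decide, hB, fun _ i => hS.isEdgeOf_inter (hB i) (hB _) (hne i) (hmeet i)⟩,
      fun h => absurd h (by decide), fun _ p q hpq => ⟨fun h => ?_, ?_⟩⟩
    · have hcases : ∀ p q : Fin 4, p ≠ q → q ≠ nxt (nxt p) → q = nxt p ∨ p = nxt q := by decide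
      exact hcases p q hpq fun hq => not_disjoint_iff_nonempty_inter.2 (hq ▸ h) (hdisj p)
    · rintro (rfl | rfl)
      · exact hmeet p
      · exact inter_comm (B q) _ ▸ hmeet q

/- `ZMod 4` unfolds to `Fin 4`, and its `i + 1` to `nxt i`. -/
theorem IsSimplePolytope3.isFourBelt_vertexSet_iff (hS : IsSimplePolytope3 P)
    {B : Fin 4 → Set E3} (hB : ∀ i, IsFacetOf (B i) P) :
    hS.facetComplex.IsFourBelt (fun i : Fin 4 => hS.1.vertexSet (B i)) ↔ IsBelt P B := by
  have hmeet (i j) : (hS.1.vertexSet (B i) ∩ hS.1.vertexSet (B j)).Nonempty ↔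
      (B i ∩ B j).Nonempty := (hB i).1.vertexSet_inter_nonempty_iff (hB j).1 hS.1
  have hdisj (i j) : Disjoint (hS.1.vertexSet (B i)) (hS.1.vertexSet (B j)) ↔
      Disjoint (B i) (B j) := by
    rw [← not_iff_not, Finset.not_disjoint_iff_nonempty_inter, hmeet,
      not_disjoint_iff_nonempty_inter]
  rw [hS.isBelt_four_iff hB]
  exact ⟨fun h => ⟨fun i => (hmeet i _).1 (h.inter_nonempty i),
      fun i => (hdisj i _).1 (h.disjoint i)⟩,
    fun h => ⟨fun i => hS.vertexSet_mem_facets (hB i), fun i => (hmeet i _).2 (h.1 i),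
      fun i => (hdisj i _).2 (h.2 i)⟩⟩

theorem IsSimplePolytope3.exists_isFacetOf (hS : IsSimplePolytope3 P) : ∃ F, IsFacetOf F P := by
  have hne : P.Nonempty := (hS.1.interior_nonempty hS.2.1).mono interior_subset
  obtain ⟨v, -, hv⟩ := (hS.1.isFaceOf_self hne).inter_extremePoints_nonempty hS.1
  obtain ⟨F, hF, -⟩ := hS.exists_third hv P P
  exact ⟨F, hF.1⟩

theorem IsAlmostFullerene.exists_facetEdges_eq_of_ne (hP : IsAlmostFullerene P) :
    ∃ X, IsFacetOf X P ∧ ∀ A, IsFacetOf A P → A ≠ X → facetEdges P A = 5 ∨ facetEdges P A = 6 := by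
  have hordinary (A : Set E3) (hA : IsFacetOf A P)
      (h : ¬ (facetEdges P A = 4 ∨ facetEdges P A = 7)) :
      facetEdges P A = 5 ∨ facetEdges P A = 6 := by
    have hmem := hP.2.1 A hA
    simp only [mem_insert_iff, mem_singleton_iff] at hmem
    omega
  by_cases hX : ∃ X, IsFacetOf X P ∧ (facetEdges P X = 4 ∨ facetEdges P X = 7)
  · obtain ⟨X, hX⟩ := hX
    have hfin := hP.1.1.finite_facets.subset
      fun A (hA : IsFacetOf A P ∧ (facetEdges P A = 4 ∨ facetEdges P A = 7)) => hA.1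
    exact ⟨X, hX.1, fun A hA hAX => hordinary A hA
      fun h => hAX ((ncard_le_one hfin).1 hP.2.2 A ⟨hA, h⟩ X hX)⟩
  · obtain ⟨F, hF⟩ := hP.1.exists_isFacetOf
    exact ⟨F, hF, fun A hA _ => hordinary A hA fun h => hX ⟨A, hA, h⟩⟩

theorem IsAlmostFullerene.exists_isExceptional (hP : IsAlmostFullerene P) :
    ∃ X, hP.1.facetComplex.IsExceptional X := by
  obtain ⟨X, hX, hrest⟩ := hP.exists_facetEdges_eq_of_ne
  have hcard := hP.2.1 X hX
  simp only [hP.1.facetEdges_eq_card hX, mem_insert_iff, mem_singleton_iff] at hcard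
  refine ⟨_, hP.1.vertexSet_mem_facets hX, by omega, by omega, fun Y hY hYX => ?_⟩
  obtain ⟨A, hA, rfl⟩ := hP.1.exists_vertexSet_eq hY
  rw [← hP.1.facetEdges_eq_card hA]
  exact hrest A hA (ne_of_apply_ne _ hYX)

theorem IsAlmostFullerene.exists_surrounds (hP : IsAlmostFullerene P) {B : Fin 4 → Set E3}
    (hB : IsBelt P B) : ∃ F, IsFacetOf F P ∧ facetEdges P F = 4 ∧ Surrounds P B F := by
  have hS := hP.1
  have := hS.1.finite_extremePoints.to_subtype
  obtain ⟨X, hX⟩ := hP.exists_isExceptional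
  obtain ⟨Q, hQ, hQ4, hne, u, hu, hmem⟩ :=
    ((hS.isFourBelt_vertexSet_iff hB.2.1.2.1).2 hB).exists_surrounded hX
  obtain ⟨F, hF, rfl⟩ := hS.exists_vertexSet_eq hQ
  have hmem (i : Fin 4) : (u i : E3) ∈ F ∧ (u i : E3) ∈ B i ∧ (u i : E3) ∈ B (nxt i) :=
    (hmem i).imp hS.1.mem_vertexSet.1 (And.imp hS.1.mem_vertexSet.1 hS.1.mem_vertexSet.1)
  have hrange : range u = hS.1.vertexSet F := by
    refine eq_of_subset_of_ncard_le (range_subset_iff.2 fun i => hS.1.mem_vertexSet.2 (hmem i).1) ?_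
    rw [ncard_coe_finset, hQ4, ← image_univ, ncard_image_of_injective _ hu, ncard_univ,
      Nat.card_zmod]
  refine ⟨F, hF, (hS.facetEdges_eq_card hF).trans hQ4, RunsRound.surrounds
    (u := fun i => u i) ⟨by decide, hF, hB.2.1, fun i h => hne i (h ▸ rfl),
      Subtype.val_injective.comp hu, fun i => (hmem i).1, fun i => (hmem i).2.1,
      fun i => (hmem i).2.2, ?_⟩ hS⟩
  refine Subset.antisymm (range_subset_iff.2 fun i => ⟨(hmem i).1, (u i).2⟩) fun x hx => ?_
  obtain ⟨i, hi⟩ := hrange.ge (hS.1.mem_vertexSet (v := ⟨x, hx.2⟩).2 hx.1)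
  exact ⟨i, congrArg Subtype.val hi⟩

theorem IsAlmostFullerene.exists_isBelt (hP : IsAlmostFullerene P) (hF : IsFacetOf F P)
    (h4 : facetEdges P F = 4) : ∃ B : Fin 4 → Set E3, IsBelt P B := by
  have hS := hP.1
  have := hS.1.finite_extremePoints.to_subtype
  obtain ⟨X, hX⟩ := hP.exists_isExceptional
  obtain ⟨G, u, hG, hu⟩ := FacetComplex.exists_boundary_of_card_eq_four (hS.vertexSet_mem_facets hF)
    ((hS.facetEdges_eq_card hF).symm.trans h4)
  have hbelt := FacetComplex.isFourBelt_of_boundary hX hG hu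
  choose B hB hBG using fun i => hS.exists_vertexSet_eq (hbelt.mem_facets i)
  obtain rfl : (fun i => hS.1.vertexSet (B i)) = G := funext hBG
  exact ⟨B, (hS.isFourBelt_vertexSet_iff hB).1 hbelt⟩

theorem IsAlmostFullerene.eq_of_facetEdges_eq_four (hP : IsAlmostFullerene P) {A : Set E3}
    (hA : IsFacetOf A P) (hA4 : facetEdges P A = 4) (hF : IsFacetOf F P)
    (hF4 : facetEdges P F = 4) : A = F := by
  obtain ⟨X, hX⟩ := hP.exists_isExceptional
  have heq {C : Set E3} (hC : IsFacetOf C P) (hC4 : facetEdges P C = 4) :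
      hP.1.1.vertexSet C = X :=
    hX.eq_of_card_le_four (hP.1.vertexSet_mem_facets hC)
      ((hP.1.facetEdges_eq_card hC).symm.trans hC4).le
  exact hP.1.1.vertexSet_injOn hA hF ((heq hA hA4).trans (heq hF hF4).symm)

theorem IsPolytope.pVec_ne_zero (hP : IsPolytope P) (hF : IsFacetOf F P) :
    pVec P (facetEdges P F) ≠ 0 :=
  ncard_ne_zero_of_mem ⟨hF, rfl⟩ (hP.finite_facets.subset fun _ h => h.1)

end FourBelts

/-- For a simple 3-polytope with all facets pentagons and hexagons except at most one
quadrangle or heptagon: if there is no quadrangle there are no 4-belts, and if there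
is a quadrangle `F` then there is exactly one 4-belt, namely the one surrounding `F`. -/
theorem four_belt_theorem (P : Set E3) (hP : IsAlmostFullerene P) :
    (pVec P 4 = 0 → ∀ B : Fin 4 → Set E3, ¬ IsBelt P B) ∧
    (∀ F : Set E3, IsFacetOf F P → facetEdges P F = 4 →
      (∃ B : Fin 4 → Set E3, IsBelt P B ∧ Surrounds P B F) ∧
      (∀ B : Fin 4 → Set E3, IsBelt P B → Surrounds P B F)) := by
  refine ⟨fun h0 B hB => ?_, fun F hF hF4 => ?_⟩
  · obtain ⟨F, hF, hF4, -⟩ := hP.exists_surrounds hB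
    exact hP.1.1.pVec_ne_zero hF (hF4.symm ▸ h0)
  · have surrounds (B : Fin 4 → Set E3) (hB : IsBelt P B) : Surrounds P B F := by
      obtain ⟨A, hA, hA4, hs⟩ := hP.exists_surrounds hB
      exact hP.eq_of_facetEdges_eq_four hA hA4 hF hF4 ▸ hs
    obtain ⟨B, hB⟩ := hP.exists_isBelt hF hF4
    exact ⟨⟨B, hB, surrounds B hB⟩, surrounds⟩
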